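/- (Rationality of the Serre–Oesterlé p-adic Poincaré series in the analytic case) Let p be a prime and let f_1, …, f_r be restricted power series over ℤ_p in m variables (power series converging on ℤ_p^m). For each integer s ≥ 0 let Ñ_s be the number of points y ∈ (ℤ/p^sℤ)^m for which there exists x ∈ ℤ_p^m with x ≡ y mod p^s and f_1(x) = ⋯ = f_r(x) = 0. Then the Poincaré series P(T) = Σ_{s≥0} Ñ_s T^s is a rational function of T. -/

import Mathlib

/-!
The zeros modulo `p ^ s` that lift to zeros in `ℤ_p ^ m` are counted by eliminating `p`-adic
quantifiers in the analytic setting, in the spirit of Denef and van den Dries, and then counting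
residue classes one coordinate at a time, so that no `p`-adic integration is needed.

*Terms.* `IsTerm` is the class of functions on `ℤ_p ^ ι` generated by the coordinates under
composition with restricted power series (`IsAn`), restricted division `dv` and extraction of roots
`rt`. Division is the operation which makes quantifier elimination possible for analytic functions,
and roots play the role of the power predicates. The structure `Base` abstracts the closure
properties which are used of the terms in the remaining variables `x`.

*Preparation.* A `Chart` is a family, depending on `x`, of balls or annuli in the line. On an annulus
the coordinates are `u` and `v` with `u * v = ε x`, and the point of the line is
`c x + β x * u ^ N`. By `domination`, which rests on the Artin–Rees lemma in a Noetherian power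
series ring, an analytic function on an annulus is a finite sum of monomials in `u` or `v` up to
factors close to `1`. Splitting the annulus makes one of the monomials dominate (`multi_split`),
except on thinner subsets which are balls; on a ball, dividing by the largest coefficient gives a
sum of Weierstrass type, and recentering at the root of the next to leading coefficient (found by a
contraction, `T1.fixedPoint`) lowers the number of terms (`prep_form`). Hence after a finite covering
every analytic function is a monomial times a factor close to `1` (`Chart.prep`). Consequently
quotients and roots of analytic functions are analytic after a further covering (`cov_div`,
`cov_root`), and by induction on terms finitely many terms become monomials simultaneously on
finitely many annuli covering the line (`Chart.cov_terms`).

*Quantifiers.* `IsDf` is the class of sets of `(x, γ)`, with `γ` a tuple of natural numbers, given by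
a semilinear condition on `γ` and on the valuations of finitely many terms in `x`. On an annulus the
valuations of the terms are affine in the valuation of `u`, so a quantifier over `ℤ_p` becomes a
Presburger quantifier, and `IsDf` is stable under `∃ t : ℤ_p` (`IsDf.existsZ`). The same covering shows
that a definable subset of the line changes only near the finitely many centres, at every scale; the
number of small balls on which it is not constant is bounded uniformly (`IsDf.exists_bound`).

*Counting.* The residue classes modulo `p ^ s` contained in a set are sorted by the maximal ball of
the set containing them: a maximal ball of radius `p ^ (δ - s)` contains `p ^ δ` classes, and there
are boundedly many of each radius. So the count for one coordinate (`count_formula`) is a finite sum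
of weights `p ^ δ` over definable conditions in the other coordinates and in one more integer
variable `δ < s`. Eliminating all coordinates in this way (`isRatl_cnt`) leaves the generating series
of semilinear sets with multiplicative weights. These are rational (`SL.isRatl`): a semilinear set is
a finite union of translates of finitely generated monoids, such unions are treated by
inclusion–exclusion, and for a single one the argument of the Hilbert–Serre theorem applies
(`isRatl_gen_diff`).

The theorem is the case of the set of `(x, s)` such that the residue class of `x` modulo `p ^ s`
contains a common zero of the `f j`; it is definable because the quantifier over the zero can be
eliminated.
-/

namespace PadicCell
open Finset
variable {p : ℕ} [hp : Fact p.Prime]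

local notation "Z" => ℤ_[p]

/-! ### The ring of `p`-adic integers -/

theorem pne : (p : Z) ≠ 0 := by exact_mod_cast hp.out.ne_zero

theorem ppow_ne (n : ℕ) : (p : Z) ^ n ≠ 0 := pow_ne_zero _ pne

theorem dvd_iff_norm (n : ℕ) (x : Z) : (p : Z) ^ n ∣ x ↔ ‖x‖ ≤ (p : ℝ) ^ (-n : ℤ) := by
  rw [PadicInt.norm_le_pow_iff_mem_span_pow, Ideal.mem_span_singleton]

theorem eq_zero_of_dvd {x : Z} (h : ∀ n, (p : Z) ^ n ∣ x) : x = 0 := by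
  by_contra hx
  have h1 := (PadicInt.mem_span_pow_iff_le_valuation x hx (x.valuation + 1)).1
    (Ideal.mem_span_singleton.2 (h _))
  omega

theorem eq_of_dvd {x y : Z} (h : ∀ n, (p : Z) ^ n ∣ x - y) : x = y :=
  sub_eq_zero.1 (eq_zero_of_dvd h)

/-- Completeness of `ℤ_p`: a series `∑ p ^ k * F k` converges. -/
theorem exists_sum (F : ℕ → Z) : ∃ s : Z, ∀ K, (p : Z) ^ K ∣ s - ∑ k ∈ range K, (p : Z) ^ k * F k := by
  have hp1 : (1 : ℝ) < p := by exact_mod_cast hp.out.one_lt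
  let S : ℕ → Z := fun K => ∑ k ∈ range K, (p : Z) ^ k * F k
  have key : ∀ n m, n ≤ m → (p : Z) ^ n ∣ S m - S n := by
    intro n m h
    induction m, h using Nat.le_induction with
    | base => simp
    | succ m hm ih =>
      have : S (m + 1) - S n = (S m - S n) + (p : Z) ^ m * F m := by
        simp only [S, sum_range_succ]; ring
      rw [this]
      exact dvd_add ih ((pow_dvd_pow _ hm).mul_right _)
  have hc : CauchySeq S := by
    refine cauchySeq_of_le_tendsto_0' (fun n : ℕ => ((p : ℝ)⁻¹) ^ n) (fun n m h => ?_) ?_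
    · rw [dist_comm, dist_eq_norm]
      have := (dvd_iff_norm n _).1 (key n m h)
      simpa using this
    · exact tendsto_pow_atTop_nhds_zero_of_lt_one (by positivity) (inv_lt_one_of_one_lt₀ hp1)
  obtain ⟨s, hs⟩ := cauchySeq_tendsto_of_complete hc
  refine ⟨s, fun K => ?_⟩
  rw [dvd_iff_norm]
  refine le_of_tendsto ((hs.sub_const (S K)).norm) ?_
  filter_upwards [Filter.eventually_ge_atTop K] with m hm
  exact (dvd_iff_norm K _).1 (key K m hm)

/-! ### Evaluating power series at `p` -/

theorem exists_ev (r : PowerSeries Z) :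
    ∃ s : Z, ∀ K, (p : Z) ^ K ∣ s - (r.trunc K).eval (p : Z) := by
  obtain ⟨s, hs⟩ := exists_sum (fun k => PowerSeries.coeff k r)
  refine ⟨s, fun K => ?_⟩
  convert hs K using 2
  rw [Polynomial.eval, PowerSeries.eval₂_trunc_eq_sum_range]
  exact sum_congr rfl fun k _ => by simp [mul_comm]

noncomputable def ev0 (r : PowerSeries Z) : Z := (exists_ev r).choose

theorem ev0_spec (r : PowerSeries Z) (K : ℕ) :
    (p : Z) ^ K ∣ ev0 r - (r.trunc K).eval (p : Z) := (exists_ev r).choose_spec K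

theorem ev0_eq {r : PowerSeries Z} {s : Z}
    (h : ∀ K, (p : Z) ^ K ∣ s - (r.trunc K).eval (p : Z)) : ev0 r = s :=
  eq_of_dvd fun K => by
    have := dvd_sub (ev0_spec r K) (h K)
    simpa using this

/-- The ring homomorphism `ℤ_p⟦T⟧ → ℤ_p` sending `T` to `p`. -/
noncomputable def ev : PowerSeries Z →+* Z where
  toFun := ev0
  map_zero' := ev0_eq (by simp)
  map_one' := ev0_eq (by
    intro K
    rcases K with _ | K
    · simp
    · simp [PowerSeries.trunc_one])
  map_add' r s := ev0_eq (by
    intro K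
    have := dvd_add (ev0_spec r K) (ev0_spec s K)
    rw [map_add, Polynomial.eval_add]
    convert this using 1; ring)
  map_mul' r s := ev0_eq (by
    intro K
    have h1 : (Polynomial.X : Polynomial Z) ^ K ∣
        r.trunc K * s.trunc K - (r * s).trunc K := by
      rw [Polynomial.X_pow_dvd_iff]
      intro d hd
      rw [Polynomial.coeff_sub, sub_eq_zero, ← PowerSeries.trunc_trunc_mul_trunc,
        PowerSeries.coeff_trunc, if_pos hd]
      rw [← Polynomial.coeff_coe]
      simp
    obtain ⟨q, hq⟩ := h1
    have h2 := congrArg (Polynomial.eval (p : Z)) hq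
    simp only [Polynomial.eval_sub, Polynomial.eval_mul, Polynomial.eval_pow,
      Polynomial.eval_X] at h2
    have h3 := ev0_spec r K
    have h4 := ev0_spec s K
    have : ev0 r * ev0 s - ((r * s).trunc K).eval (p : Z) =
        (ev0 r - (r.trunc K).eval (p : Z)) * ev0 s +
        (ev0 s - (s.trunc K).eval (p : Z)) * (r.trunc K).eval (p : Z) +
        (p : Z) ^ K * q.eval (p : Z) := by rw [← h2]; ring
    rw [this]
    exact dvd_add (dvd_add (h3.mul_right _) (h4.mul_right _)) (dvd_mul_right _ _))

theorem ev_spec (r : PowerSeries Z) (K : ℕ) :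
    (p : Z) ^ K ∣ ev r - ∑ k ∈ range K, (p : Z) ^ k * PowerSeries.coeff k r := by
  have := ev0_spec r K
  rw [Polynomial.eval, PowerSeries.eval₂_trunc_eq_sum_range] at this
  have h2 : ∑ k ∈ range K, (p : Z) ^ k * PowerSeries.coeff k r =
      ∑ k ∈ range K, (RingHom.id Z) (PowerSeries.coeff k r) * (p : Z) ^ k :=
    sum_congr rfl fun k _ => by simp [mul_comm]
  rw [h2]
  exact this

theorem ev_eq {r : PowerSeries Z} {s : Z}
    (h : ∀ K, (p : Z) ^ K ∣ s - ∑ k ∈ range K, (p : Z) ^ k * PowerSeries.coeff k r) : ev r = s :=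
  eq_of_dvd fun K => by
    have := dvd_sub (ev_spec r K) (h K)
    simpa using this

theorem ev_C (a : Z) : ev (PowerSeries.C a) = a := by
  apply ev_eq
  intro K
  rcases K with _ | K
  · simp
  · rw [sum_range_succ', sum_eq_zero]
    · simp
    · intro k _
      simp

theorem ev_X : ev (PowerSeries.X : PowerSeries Z) = p := by
  apply ev_eq
  intro K
  rcases K with _ | _ | K
  · simp
  · simp
  · rw [sum_range_succ', sum_range_succ', sum_eq_zero]
    · simp
    · intro k _
      simp [PowerSeries.coeff_X]

/-! ### Analytic functions -/

/-- A function `ℤ_p ^ ι → ℤ_p` is analytic if it is the limit of a sequence of polynomials that is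
Cauchy for the `p`-adic topology on coefficients, i.e. if it is given by a restricted power
series. -/
def IsAn {ι : Type} (H : (ι → Z) → Z) : Prop :=
  ∃ Q : ℕ → MvPolynomial ι Z, (∀ K, MvPolynomial.C ((p : Z) ^ K) ∣ Q (K + 1) - Q K) ∧
    ∀ x K, (p : Z) ^ K ∣ H x - MvPolynomial.eval x (Q K)

theorem isAn_poly {ι : Type} (A : MvPolynomial ι Z) : IsAn (fun x => MvPolynomial.eval x A) :=
  ⟨fun _ => A, fun K => by simp, fun x K => by simp⟩

theorem isAn_coord {ι : Type} (i : ι) : IsAn (fun x : ι → Z => x i) := by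
  simpa using isAn_poly (MvPolynomial.X i : MvPolynomial ι Z)

theorem isAn_const {ι : Type} (c : Z) : IsAn (fun _ : ι → Z => c) := by
  simpa using isAn_poly (MvPolynomial.C c : MvPolynomial ι Z)

theorem bind_dvd {ι κ : Type} (a : Z) {f g : ι → MvPolynomial κ Z}
    (h : ∀ i, MvPolynomial.C a ∣ f i - g i) (A : MvPolynomial ι Z) :
    MvPolynomial.C a ∣ MvPolynomial.bind₁ f A - MvPolynomial.bind₁ g A := by
  induction A using MvPolynomial.induction_on with
  | C c => simp
  | add A B hA hB =>
    simp only [map_add]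
    convert dvd_add hA hB using 1; ring
  | mul_X A i hA =>
    simp only [map_mul, MvPolynomial.bind₁_X_right]
    have : (MvPolynomial.bind₁ f) A * f i - (MvPolynomial.bind₁ g) A * g i =
      ((MvPolynomial.bind₁ f) A - (MvPolynomial.bind₁ g) A) * f i +
        (f i - g i) * (MvPolynomial.bind₁ g) A := by ring
    rw [this]
    exact dvd_add (hA.mul_right _) ((h i).mul_right _)

theorem eval_dvd {ι : Type} (a : Z) {x y : ι → Z} (h : ∀ i, a ∣ x i - y i)
    (A : MvPolynomial ι Z) : a ∣ MvPolynomial.eval x A - MvPolynomial.eval y A := by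
  induction A using MvPolynomial.induction_on with
  | C c => simp
  | add A B hA hB =>
    simp only [map_add]
    convert dvd_add hA hB using 1; ring
  | mul_X A i hA =>
    simp only [map_mul, MvPolynomial.eval_X]
    have : MvPolynomial.eval x A * x i - MvPolynomial.eval y A * y i =
      (MvPolynomial.eval x A - MvPolynomial.eval y A) * x i +
        (x i - y i) * MvPolynomial.eval y A := by ring
    rw [this]
    exact dvd_add (hA.mul_right _) ((h i).mul_right _)

theorem IsAn.comp {ι κ : Type} {H : (ι → Z) → Z} (hH : IsAn H) {G : ι → (κ → Z) → Z}
    (hG : ∀ i, IsAn (G i)) : IsAn (fun x => H (fun i => G i x)) := by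
  obtain ⟨Q, hQ, hQ'⟩ := hH
  choose R hR hR' using hG
  refine ⟨fun K => MvPolynomial.bind₁ (fun i => R i K) (Q K), fun K => ?_, fun x K => ?_⟩
  · have h1 : MvPolynomial.C ((p : Z) ^ K) ∣
        MvPolynomial.bind₁ (fun i => R i (K + 1)) (Q (K + 1) - Q K) := by
      obtain ⟨q, hq⟩ := hQ K
      rw [hq, map_mul]
      simp
    have h2 := bind_dvd ((p : Z) ^ K) (f := fun i => R i (K + 1)) (g := fun i => R i K)
      (fun i => hR i K) (Q K)
    rw [map_sub] at h1
    convert dvd_add h1 h2 using 1; ring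
  · have h1 := hQ' (fun i => G i x) K
    have h2 := eval_dvd ((p : Z) ^ K) (x := fun i => G i x)
      (y := fun i => MvPolynomial.eval x (R i K)) (fun i => hR' i x K) (Q K)
    have h3 : MvPolynomial.eval x (MvPolynomial.bind₁ (fun i => R i K) (Q K)) =
        MvPolynomial.eval (fun i => MvPolynomial.eval x (R i K)) (Q K) := by
      rw [MvPolynomial.eval, MvPolynomial.eval₂Hom_bind₁]
      rfl
    rw [h3]
    convert dvd_add h1 h2 using 1; ring

theorem IsAn.comp₂ {κ : Type} {H : Z → Z → Z} (hH : IsAn (fun v : Fin 2 → Z => H (v 0) (v 1)))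
    {F G : (κ → Z) → Z} (hF : IsAn F) (hG : IsAn G) : IsAn (fun x => H (F x) (G x)) := by
  have := hH.comp (G := ![F, G]) (fun i => by fin_cases i <;> assumption)
  simpa using this

theorem IsAn.add {κ : Type} {F G : (κ → Z) → Z} (hF : IsAn F) (hG : IsAn G) :
    IsAn (fun x => F x + G x) := by
  refine IsAn.comp₂ (H := fun a b => a + b) ?_ hF hG
  have := isAn_poly (p := p) (MvPolynomial.X 0 + MvPolynomial.X 1 : MvPolynomial (Fin 2) Z)
  simpa only [map_add, MvPolynomial.eval_X] using this

theorem IsAn.mul {κ : Type} {F G : (κ → Z) → Z} (hF : IsAn F) (hG : IsAn G) :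
    IsAn (fun x => F x * G x) := by
  refine IsAn.comp₂ (H := fun a b => a * b) ?_ hF hG
  have := isAn_poly (p := p) (MvPolynomial.X 0 * MvPolynomial.X 1 : MvPolynomial (Fin 2) Z)
  simpa only [map_mul, MvPolynomial.eval_X] using this

theorem IsAn.neg {κ : Type} {F : (κ → Z) → Z} (hF : IsAn F) : IsAn (fun x => -F x) := by
  simpa using (isAn_const (-1)).mul hF

theorem IsAn.sub {κ : Type} {F G : (κ → Z) → Z} (hF : IsAn F) (hG : IsAn G) :
    IsAn (fun x => F x - G x) := by
  simpa [sub_eq_add_neg] using hF.add hG.neg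

theorem IsAn.pow {κ : Type} {F : (κ → Z) → Z} (hF : IsAn F) (n : ℕ) :
    IsAn (fun x => F x ^ n) := by
  induction n with
  | zero => simpa using isAn_const 1
  | succ n ih => simpa [pow_succ] using ih.mul hF

theorem IsAn.sum {κ σ : Type} (s : Finset σ) {F : σ → (κ → Z) → Z} (hF : ∀ i, IsAn (F i)) :
    IsAn (fun x => ∑ i ∈ s, F i x) := by
  classical
  induction s using Finset.induction_on with
  | empty => simpa using isAn_const 0
  | insert a s ha ih => simpa [sum_insert ha] using (hF a).add ih

/-- A `p`-adically convergent series of analytic functions is analytic. -/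
theorem IsAn.series {ι : Type} {F : ℕ → (ι → Z) → Z} (hF : ∀ k, IsAn (F k)) {G : (ι → Z) → Z}
    (hG : ∀ x K, (p : Z) ^ K ∣ G x - ∑ k ∈ range K, (p : Z) ^ k * F k x) : IsAn G := by
  choose Q hQ hQ' using hF
  refine ⟨fun K => ∑ k ∈ range K, MvPolynomial.C ((p : Z) ^ k) * Q k K, fun K => ?_, fun x K => ?_⟩
  · simp only []
    rw [sum_range_succ, add_sub_right_comm, ← sum_sub_distrib]
    refine dvd_add (dvd_sum fun k _ => ?_) (dvd_mul_right _ _)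
    rw [← mul_sub]
    exact (hQ k K).mul_left _
  · have h1 := hG x K
    rw [map_sum]
    have h2 : (p : Z) ^ K ∣ ∑ k ∈ range K, (p : Z) ^ k * (F k x - MvPolynomial.eval x (Q k K)) :=
      dvd_sum fun k _ => (hQ' k x K).mul_left _
    convert dvd_add h1 h2 using 1
    simp only [mul_sub, sum_sub_distrib, map_mul, MvPolynomial.eval_C]
    ring

/-- Every analytic function is a series `∑ p ^ k * P k` with polynomials `P k`. -/
theorem IsAn.exists_series {ι : Type} {H : (ι → Z) → Z} (hH : IsAn H) :
    ∃ P : ℕ → MvPolynomial ι Z, ∀ x K,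
      (p : Z) ^ K ∣ H x - ∑ k ∈ range K, (p : Z) ^ k * MvPolynomial.eval x (P k) := by
  obtain ⟨Q, hQ, hQ'⟩ := hH
  choose R hR using hQ
  refine ⟨fun k => if k = 0 then Q 0 + R 0 else R k, fun x K => ?_⟩
  rcases K with _ | K
  · simp
  · convert hQ' x (K + 1) using 2
    induction K with
    | zero =>
      have := congrArg (MvPolynomial.eval x) (hR 0)
      simp at this ⊢
      rw [← this]; ring
    | succ K ih =>
      have := congrArg (MvPolynomial.eval x) (hR (K + 1))
      rw [sum_range_succ, ih]
      simp only [map_sub, map_mul, MvPolynomial.eval_C] at this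
      simp only [Nat.succ_ne_zero, if_false]
      rw [← this]; ring

theorem IsAn.exists_powerSeries {ι : Type} {H : (ι → Z) → Z} (hH : IsAn H) :
    ∃ r : PowerSeries (MvPolynomial ι Z), ∀ x,
      H x = ev (PowerSeries.map (MvPolynomial.eval x) r) := by
  obtain ⟨P, hP⟩ := hH.exists_series
  refine ⟨PowerSeries.mk P, fun x => (ev_eq fun K => ?_).symm⟩
  simpa using hP x K

theorem isAn_powerSeries {ι : Type} (r : PowerSeries (MvPolynomial ι Z)) :
    IsAn (fun x => ev (PowerSeries.map (MvPolynomial.eval x) r)) := by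
  refine IsAn.series (F := fun k x => MvPolynomial.eval x (PowerSeries.coeff k r))
    (fun k => isAn_poly _) fun x K => ?_
  simpa using ev_spec (PowerSeries.map (MvPolynomial.eval x) r) K

/-! ### Difference quotients, Taylor expansion, fixed points -/

theorem poly_diffQuot {κ : Type} [DecidableEq κ] (i : κ) (A : MvPolynomial κ Z) :
    ∃ Ψ : MvPolynomial (κ ⊕ Fin 2) Z, ∀ (x : κ → Z) (a b : Z),
      MvPolynomial.eval (Function.update x i a) A - MvPolynomial.eval (Function.update x i b) A =
        (a - b) * MvPolynomial.eval (Sum.elim x ![a, b]) Ψ := by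
  induction A using MvPolynomial.induction_on with
  | C c => exact ⟨0, by simp⟩
  | add A B hA hB =>
    obtain ⟨P, hP⟩ := hA
    obtain ⟨Q, hQ⟩ := hB
    refine ⟨P + Q, fun x a b => ?_⟩
    simp only [map_add]
    linear_combination hP x a b + hQ x a b
  | mul_X A j hA =>
    obtain ⟨P, hP⟩ := hA
    by_cases hj : j = i
    · subst hj
      let σ : κ → MvPolynomial (κ ⊕ Fin 2) Z := fun k => if k = j then MvPolynomial.X (Sum.inr 1)
        else MvPolynomial.X (Sum.inl k)
      refine ⟨P * MvPolynomial.X (Sum.inr 0) + MvPolynomial.bind₁ σ A, fun x a b => ?_⟩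
      have h3 : MvPolynomial.eval (Sum.elim x ![a, b]) (MvPolynomial.bind₁ σ A) =
          MvPolynomial.eval (Function.update x j b) A := by
        rw [MvPolynomial.eval, MvPolynomial.eval₂Hom_bind₁]
        congr 2
        funext k
        by_cases hk : k = j
        · subst hk; simp [σ]
        · simp [σ, hk]
      simp only [map_mul, map_add, h3, MvPolynomial.eval_X, Function.update_self, Sum.elim_inr,
        Matrix.cons_val_zero]
      linear_combination a * hP x a b
    · refine ⟨P * MvPolynomial.X (Sum.inl j), fun x a b => ?_⟩
      simp only [map_mul, MvPolynomial.eval_X, Sum.elim_inl, Function.update_of_ne hj]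
      linear_combination x j * hP x a b

theorem IsAn.diffQuot {κ : Type} [DecidableEq κ] {H : (κ → Z) → Z} (hH : IsAn H) (i : κ) :
    ∃ Ψ : (κ ⊕ Fin 2 → Z) → Z, IsAn Ψ ∧ ∀ (x : κ → Z) (a b : Z),
      H (Function.update x i a) - H (Function.update x i b) =
        (a - b) * Ψ (Sum.elim x ![a, b]) := by
  obtain ⟨P, hP⟩ := hH.exists_series
  choose Q hQ using fun k => poly_diffQuot i (P k)
  choose Ψ hΨ using fun y : κ ⊕ Fin 2 → Z => exists_sum (fun k => MvPolynomial.eval y (Q k))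
  refine ⟨Ψ, IsAn.series (fun k => isAn_poly (Q k)) hΨ, fun x a b => eq_of_dvd fun K => ?_⟩
  have h1 := hP (Function.update x i a) K
  have h2 := hP (Function.update x i b) K
  have h3 := (hΨ (Sum.elim x ![a, b]) K).mul_left (a - b)
  have h4 : ∑ k ∈ range K, (p : Z) ^ k * MvPolynomial.eval (Function.update x i a) (P k) -
      ∑ k ∈ range K, (p : Z) ^ k * MvPolynomial.eval (Function.update x i b) (P k) =
      (a - b) * ∑ k ∈ range K, (p : Z) ^ k * MvPolynomial.eval (Sum.elim x ![a, b]) (Q k) := by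
    rw [← sum_sub_distrib, mul_sum]
    refine sum_congr rfl fun k _ => ?_
    linear_combination (p : Z) ^ k * hQ k x a b
  convert dvd_sub (dvd_sub h1 h2) h3 using 1
  linear_combination h4

theorem update_eq_comp {κ : Type} [DecidableEq κ] (i : κ) (c : Z) {H : (κ → Z) → Z} (hH : IsAn H) :
    IsAn (fun x => H (Function.update x i c)) := by
  refine hH.comp (G := fun k x => Function.update x i c k) fun k => ?_
  by_cases hk : k = i
  · subst hk; simpa using isAn_const c
  · simpa [Function.update_of_ne hk] using isAn_coord k

theorem IsAn.split {κ : Type} [DecidableEq κ] {H : (κ → Z) → Z} (hH : IsAn H) (i : κ) :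
    ∃ H' : (κ → Z) → Z, IsAn H' ∧ ∀ x, H x = H (Function.update x i 0) + x i * H' x := by
  obtain ⟨Ψ, hΨ, h⟩ := hH.diffQuot i
  refine ⟨fun x => Ψ (Sum.elim x ![x i, 0]),
    hΨ.comp (G := fun k x => Sum.elim x ![x i, 0] k) (fun k => ?_), fun x => ?_⟩
  · rcases k with k | k
    · exact isAn_coord k
    · fin_cases k
      · exact isAn_coord i
      · exact isAn_const 0
  · have := h x (x i) 0
    simp only [Function.update_eq_self] at this
    linear_combination this

/-- Taylor expansion of an analytic function with respect to one of its variables. -/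
theorem IsAn.taylor {κ : Type} [DecidableEq κ] {H : (κ → Z) → Z} (hH : IsAn H) (i : κ) :
    ∃ F : ℕ → (κ → Z) → Z, (∀ j, IsAn (F j)) ∧ ∀ d x,
      H x = ∑ j ∈ range d, F j (Function.update x i 0) * x i ^ j + x i ^ d * F d x := by
  choose S hS hS' using fun (H : {H : (κ → Z) → Z // IsAn H}) => H.2.split i
  let F : ℕ → {H : (κ → Z) → Z // IsAn H} := fun n => n.rec ⟨H, hH⟩ (fun _ G => ⟨S G, hS G⟩)
  refine ⟨fun n => (F n).1, fun n => (F n).2, fun d x => ?_⟩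
  induction d with
  | zero => simp [F]
  | succ d ih =>
    have h1 := hS' (F d) x
    have h2 : (F (d + 1)).1 = S (F d) := rfl
    simp only [h2, sum_range_succ] at ih ⊢
    rw [ih, h1]; ring

/-- Analytic fixed points of contractions: `Y = p Φ(z, Y)` has an analytic solution. -/
theorem IsAn.fixedPoint {κ : Type} {Φ : (κ ⊕ Fin 1 → Z) → Z} (hΦ : IsAn Φ) :
    ∃ Y : (κ → Z) → Z, IsAn Y ∧ ∀ z, Y z = p * Φ (Sum.elim z ![Y z]) := by
  classical
  obtain ⟨Ψ, hΨ, h⟩ := hΦ.diffQuot (Sum.inr 0)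
  have hupd : ∀ (z : κ → Z) (a b : Z),
      Function.update (Sum.elim z ![a]) (Sum.inr (0 : Fin 1)) b = Sum.elim z ![b] := by
    intro z a b
    funext k
    rcases k with k | k
    · simp
    · fin_cases k; simp
  have h' : ∀ z a b, Φ (Sum.elim z ![a]) - Φ (Sum.elim z ![b]) =
      (a - b) * Ψ (Sum.elim (Sum.elim z ![0]) ![a, b]) := by
    intro z a b
    have := h (Sum.elim z ![0]) a b
    rwa [hupd, hupd] at this
  let Y : ℕ → (κ → Z) → Z := fun n => n.rec (fun _ => 0) (fun _ y z => p * Φ (Sum.elim z ![y z]))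
  have hYs : ∀ n z, Y (n + 1) z = p * Φ (Sum.elim z ![Y n z]) := fun n z => rfl
  have hY : ∀ n, IsAn (Y n) := by
    intro n
    induction n with
    | zero => exact isAn_const 0
    | succ n ih =>
      refine (isAn_const _).mul (hΦ.comp (G := fun k z => Sum.elim z ![Y n z] k) fun k => ?_)
      rcases k with k | k
      · exact isAn_coord k
      · fin_cases k; exact ih
  have hE : ∀ n, ∃ E : (κ → Z) → Z, IsAn E ∧
      ∀ z, Y (n + 1) z - Y n z = (p : Z) ^ n * E z := by
    intro n
    induction n with
    | zero => exact ⟨Y 1, hY 1, fun z => by simp [Y]⟩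
    | succ n ih =>
      obtain ⟨E, hE, hE'⟩ := ih
      refine ⟨fun z => E z * Ψ (Sum.elim (Sum.elim z ![0]) ![Y (n + 1) z, Y n z]),
        hE.mul (hΨ.comp (G := fun k z => Sum.elim (Sum.elim z ![0]) ![Y (n + 1) z, Y n z] k)
          fun k => ?_), fun z => ?_⟩
      · rcases k with (k | k) | k
        · exact isAn_coord k
        · fin_cases k; exact isAn_const 0
        · fin_cases k
          · exact hY (n + 1)
          · exact hY n
      · rw [hYs (n + 1), hYs n, ← mul_sub, h', ← hYs n, hE']; ring
  choose E hE hE' using hE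
  choose L hL using fun z => exists_sum (fun n => E n z)
  have hLY : ∀ z K, (p : Z) ^ K ∣ L z - Y K z := by
    intro z K
    convert hL z K using 2
    have : ∀ K, Y K z = ∑ k ∈ range K, (p : Z) ^ k * E k z := by
      intro K
      induction K with
      | zero => simp [Y]
      | succ K ih => rw [sum_range_succ, ← ih, ← hE']; ring
    exact this K
  refine ⟨L, IsAn.series hE hL, fun z => eq_of_dvd fun K => ?_⟩
  have h1 := hLY z (K + 1)
  rw [hYs] at h1
  have h2 : (p : Z) ^ K ∣ p * (Φ (Sum.elim z ![L z]) - Φ (Sum.elim z ![Y K z])) := by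
    rw [h']
    exact ((hLY z K).mul_right _).mul_left _
  convert dvd_sub ((pow_dvd_pow _ (Nat.le_succ K)).trans h1) h2 using 1
  ring

theorem cast_dvd_pow (e : ℕ) (he : 1 ≤ e) : (e : Z) ∣ (p : Z) ^ e := by
  have h0 : (e : Z) ≠ 0 := by exact_mod_cast (by omega : e ≠ 0)
  have h1 := PadicInt.unitCoeff_spec h0
  have h2 : (e : Z).valuation ≤ e := by
    have h3 : (p : Z) ^ (e : Z).valuation ∣ e := by
      conv_rhs => rw [h1]
      exact dvd_mul_left _ _
    have h4 : p ^ (e : Z).valuation ∣ e := by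
      have h5 := (PadicInt.norm_int_le_pow_iff_dvd (p := p) (k := (e : ℤ))
        (n := (e : Z).valuation)).1 (by
        have := (dvd_iff_norm (p := p) (e : Z).valuation (e : Z)).1 h3
        exact_mod_cast this)
      exact_mod_cast h5
    exact ((Nat.lt_pow_self hp.out.one_lt).le).trans (Nat.le_of_dvd (by omega) h4)
  rw [h1]
  exact Units.mul_left_dvd.2 (pow_dvd_pow _ h2)

theorem one_add_pow_expand (e : ℕ) :
    ∃ R : Polynomial Z, (e = 1 → R = 0) ∧
      ∀ a, (1 + a) ^ e = 1 + e * a + a ^ 2 * R.eval a := by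
  rcases e with _ | e
  · exact ⟨0, by simp, by simp⟩
  induction e with
  | zero => exact ⟨0, by simp, by simp⟩
  | succ e ih =>
    obtain ⟨R, -, hR⟩ := ih
    refine ⟨R * (1 + Polynomial.X) + Polynomial.C ((e : Z) + 1), fun h => by omega, fun a => ?_⟩
    rw [pow_succ, hR]
    simp only [Polynomial.eval_add, Polynomial.eval_mul, Polynomial.eval_one, Polynomial.eval_X,
      Polynomial.eval_C]
    push_cast
    ring

theorem isUnit_one_add (a : Z) : IsUnit (1 + p * a) := by
  rw [PadicInt.isUnit_iff]
  have h1 : ‖(p : Z) * a‖ < 1 := by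
    have := (dvd_iff_norm (p := p) 1 (p * a)).1 (by simp)
    refine this.trans_lt ?_
    have hp1 : (1 : ℝ) < p := by exact_mod_cast hp.out.one_lt
    simpa using inv_lt_one_of_one_lt₀ hp1
  have := PadicInt.norm_add_eq_max_of_ne (p := p) (q := 1) (r := p * a) (by
    rw [norm_one]; exact h1.ne')
  rw [this, norm_one, max_eq_left h1.le]

theorem one_add_pow_eq_one {e : ℕ} (he : 1 ≤ e) {y : Z} (h : (1 + p * e * y) ^ e = 1) : y = 0 := by
  obtain ⟨R, -, hR⟩ := one_add_pow_expand (p := p) e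
  rw [hR] at h
  have h0 : (e : Z) ≠ 0 := by exact_mod_cast (by omega : e ≠ 0)
  have h1 : (p * e ^ 2 : Z) * (y * (1 + p * (y * R.eval (p * e * y)))) = 0 := by
    linear_combination h
  rcases mul_eq_zero.1 h1 with h1 | h1
  · exact absurd h1 (mul_ne_zero pne (pow_ne_zero _ h0))
  · rcases mul_eq_zero.1 h1 with h1 | h1
    · exact h1
    · exact absurd h1 (isUnit_one_add _).ne_zero

theorem isAn_eval {κ : Type} (R : Polynomial Z) {F : (κ → Z) → Z} (hF : IsAn F) :
    IsAn (fun x => R.eval (F x)) := by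
  simp only [Polynomial.eval_eq_sum_range]
  exact IsAn.sum _ fun i => (isAn_const _).mul (hF.pow _)

/-- Analytic `e`-th roots of elements close to `1`. -/
theorem exists_root (e : ℕ) :
    ∃ ρ : Z → Z, IsAn (fun v : Fin 1 → Z => ρ (v 0)) ∧ (∀ s, s ∣ ρ s) ∧ (e = 1 → ∀ s, ρ s = s) ∧
      ∀ s, (1 + p * e * ρ s) ^ e = 1 + p * e ^ 2 * s := by
  obtain ⟨R, hR1, hR⟩ := one_add_pow_expand (p := p) e
  have hs : IsAn (p := p) (fun v : Fin 1 ⊕ Fin 1 → Z => v (Sum.inl 0) + v (Sum.inr 0)) :=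
    (isAn_coord _).add (isAn_coord _)
  obtain ⟨Y, hY, h⟩ := IsAn.fixedPoint
    (((hs.pow 2).mul (isAn_eval R ((isAn_const (p * e)).mul hs))).neg)
  have h' : ∀ s : Z, Y ![s] = p * -((s + Y ![s]) ^ 2 * R.eval (p * e * (s + Y ![s]))) := by
    intro s; simpa using h ![s]
  refine ⟨fun s => s + Y ![s], ?_, fun s => ?_, fun h1 s => ?_, fun s => ?_⟩
  · refine (isAn_coord 0).add ?_
    convert hY using 2 with v
    congr 1
    funext k; fin_cases k; rfl
  · obtain ⟨u, hu⟩ := isUnit_one_add (p := p) ((s + Y ![s]) * R.eval (p * e * (s + Y ![s])))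
    rw [← Units.dvd_mul_right (u := u), hu]
    refine ⟨1, ?_⟩
    linear_combination h' s
  · have := h' s
    rw [hR1 h1] at this
    simpa using this
  · simp only [hR]
    linear_combination (p * e ^ 2 : Z) * h' s

/-- Analytic inverse of elements congruent to `1`. -/
theorem exists_inv : ∃ ι : Z → Z, IsAn (fun v : Fin 1 → Z => ι (v 0)) ∧
    ∀ s : Z, (1 + p * s) * (1 + p * ι s) = 1 := by
  have hs : IsAn (p := p) (fun v : Fin 1 ⊕ Fin 1 → Z =>
      v (Sum.inl 0) * (v (Sum.inl 0) - v (Sum.inr 0))) :=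
    (isAn_coord _).mul ((isAn_coord _).sub (isAn_coord _))
  obtain ⟨Y, hY, h⟩ := IsAn.fixedPoint hs
  have h' : ∀ s : Z, Y ![s] = p * (s * (s - Y ![s])) := by
    intro s; simpa using h ![s]
  refine ⟨fun s => Y ![s] - s, ?_, fun s => ?_⟩
  · refine IsAn.sub ?_ (isAn_coord 0)
    convert hY using 2 with v
    congr 1
    funext k; fin_cases k; rfl
  · linear_combination (p : Z) * h' s

/-! ### The domination lemma -/

theorem poly_laurent {κ : Type} (i0 : κ) (A : MvPolynomial (κ ⊕ Fin 2) Z) :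
    ∃ a b : Polynomial (MvPolynomial κ Z), ∀ (z : κ → Z) (u v : Z), u * v = z i0 →
      MvPolynomial.eval (Sum.elim z ![u, v]) A =
        (a.map (MvPolynomial.eval z)).eval u + v * (b.map (MvPolynomial.eval z)).eval v := by
  induction A using MvPolynomial.induction_on with
  | C c => exact ⟨Polynomial.C (MvPolynomial.C c), 0, by simp⟩
  | add A B hA hB =>
    obtain ⟨a, b, h⟩ := hA
    obtain ⟨a', b', h'⟩ := hB
    refine ⟨a + a', b + b', fun z u v huv => ?_⟩
    simp only [map_add, Polynomial.map_add, Polynomial.eval_add, h z u v huv, h' z u v huv]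
    ring
  | mul_X A k hA =>
    obtain ⟨a, b, h⟩ := hA
    have hdiv : ∀ (q : Polynomial (MvPolynomial κ Z)) (z : κ → Z) (t : Z),
        (q.map (MvPolynomial.eval z)).eval t =
          (q.divX.map (MvPolynomial.eval z)).eval t * t + MvPolynomial.eval z (q.coeff 0) := by
      intro q z t
      conv_lhs => rw [← Polynomial.divX_mul_X_add q]
      simp
    rcases k with k | k
    · refine ⟨a * Polynomial.C (MvPolynomial.X k), b * Polynomial.C (MvPolynomial.X k),
        fun z u v huv => ?_⟩
      simp [h z u v huv]
      ring
    · fin_cases k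
      · refine ⟨Polynomial.X * a + Polynomial.C (MvPolynomial.X i0 * b.coeff 0),
          Polynomial.C (MvPolynomial.X i0) * b.divX, fun z u v huv => ?_⟩
        have h1 := hdiv b z v
        simp [h z u v huv]
        rw [h1, ← huv]; ring
      · refine ⟨Polynomial.C (MvPolynomial.X i0) * a.divX,
          Polynomial.X * b + Polynomial.C (a.coeff 0), fun z u v huv => ?_⟩
        have h1 := hdiv a z u
        simp [h z u v huv]
        rw [h1, ← huv]; ring

/-- In a Noetherian power series ring, a `T`-adically convergent sum `f` of elements `e i` can be
rewritten as a finite sum, up to multiplying the terms with factors congruent to `1`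
modulo `T ^ M`. This is an application of the Artin–Rees lemma. -/
theorem finite_domination {B : Type} [CommRing B] [IsNoetherianRing B] (f : PowerSeries B)
    (e : ℕ → PowerSeries B)
    (he : ∀ L, ∃ D₀, ∀ D ≥ D₀, (PowerSeries.X : PowerSeries B) ^ L ∣ f - ∑ i ∈ range D, e i)
    (M : ℕ) (hM : 1 ≤ M) :
    ∃ D, ∃ g : ℕ → PowerSeries B,
      f = ∑ i ∈ range (2 * D), e i * (1 + PowerSeries.X ^ M * g i) := by
  classical
  let J : ℕ →o Ideal (PowerSeries B) :=
    ⟨fun d => Ideal.span {f} ⊔ Ideal.span (e '' (range d : Finset ℕ)), fun d d' h =>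
      sup_le_sup_left (Ideal.span_mono (Set.image_mono (by simpa using h))) _⟩
  obtain ⟨d, hd⟩ := monotone_stabilizes_iff_noetherian.2
    (inferInstance : IsNoetherian (PowerSeries B) (PowerSeries B)) J
  obtain ⟨k0, hk0⟩ := Ideal.exists_pow_inf_eq_pow_smul
    (Ideal.span {(PowerSeries.X : PowerSeries B)}) (J d)
  obtain ⟨D₀, hD₀⟩ := he (k0 + M)
  let D := 2 * max d D₀
  have hDd : d ≤ D := by have := le_max_left d D₀; simp only [D]; omega
  have hX := hD₀ D (by have := le_max_right d D₀; simp only [D]; omega)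
  have hJ : f - ∑ i ∈ range D, e i ∈ J d := by
    rw [hd D hDd]
    refine Ideal.sub_mem _ (Ideal.mem_sup_left (Ideal.mem_span_singleton_self f)) ?_
    exact Ideal.sum_mem _ fun i hi => Ideal.mem_sup_right (Ideal.subset_span ⟨i, by simpa using hi, rfl⟩)
  have h1 : f - ∑ i ∈ range D, e i ∈ Ideal.span {(PowerSeries.X : PowerSeries B)} ^ (k0 + M) •
      (⊤ : Submodule (PowerSeries B) (PowerSeries B)) ⊓ J d := by
    refine ⟨?_, hJ⟩
    rw [Ideal.span_singleton_pow, smul_eq_mul]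
    have : Ideal.span {(PowerSeries.X : PowerSeries B) ^ (k0 + M)} * ⊤ =
      Ideal.span {(PowerSeries.X : PowerSeries B) ^ (k0 + M)} := Ideal.mul_top _
    rw [this]
    exact Ideal.mem_span_singleton.2 hX
  rw [hk0 _ (Nat.le_add_right _ _), Nat.add_sub_cancel_left, Ideal.span_singleton_pow] at h1
  have h2 : f - ∑ i ∈ range D, e i ∈ Ideal.span {(PowerSeries.X : PowerSeries B) ^ M} • J d :=
    Submodule.smul_mono le_rfl inf_le_right h1
  rw [smul_eq_mul, Ideal.mem_span_singleton_mul] at h2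
  obtain ⟨y, hy, hy'⟩ := h2
  rw [hd D hDd] at hy
  obtain ⟨y1, hy1, y2, hy2, rfl⟩ := Submodule.mem_sup.1 hy
  obtain ⟨h, rfl⟩ := Ideal.mem_span_singleton.1 hy1
  obtain ⟨c, hc⟩ : ∃ c : ℕ → PowerSeries B, ∑ i ∈ range D, c i * e i = y2 := by
    obtain ⟨c, hc⟩ := (Submodule.mem_span_image_finset_iff_exists_fun _).1 hy2
    refine ⟨fun i => if h : i ∈ range D then c ⟨i, h⟩ else 0, ?_⟩
    rw [← hc, ← sum_coe_sort]
    exact sum_congr rfl fun i _ => by simp [i.2]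
  obtain ⟨w, hw⟩ : ∃ w, (1 - PowerSeries.X ^ M * h) * w = 1 := by
    have : IsUnit (1 - PowerSeries.X ^ M * h) := by
      rw [PowerSeries.isUnit_iff_constantCoeff]
      simp [zero_pow (by omega : M ≠ 0)]
    exact this.exists_right_inv
  refine ⟨max d D₀, fun i => h * w + c i * w, ?_⟩
  have h3 : ∑ i ∈ range D, e i * (1 + PowerSeries.X ^ M * (h * w + c i * w)) =
      (∑ i ∈ range D, e i + PowerSeries.X ^ M * y2) * w := by
    rw [← hc, mul_sum, ← sum_add_distrib, sum_mul]
    refine sum_congr rfl fun i _ => ?_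
    linear_combination (-e i) * hw
  rw [h3]
  linear_combination (-f) * hw - w * hy'

/-- The domination lemma: on `u * v = ε`, an analytic function of `(z, u, v)` is a finite sum of
monomials in `u` or `v` with analytic coefficients in `z`, up to factors congruent to `1`
modulo `p ^ M`. -/
theorem domination {κ : Type} [Finite κ] {H : (κ ⊕ Fin 2 → Z) → Z} (hH : IsAn H) (i0 : κ)
    (M : ℕ) (hM : 1 ≤ M) :
    ∃ (D : ℕ) (a b : ℕ → (κ → Z) → Z) (G G' : ℕ → (κ ⊕ Fin 2 → Z) → Z),
      (∀ i, IsAn (a i)) ∧ (∀ i, IsAn (b i)) ∧ (∀ i, IsAn (G i)) ∧ (∀ i, IsAn (G' i)) ∧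
      ∀ (z : κ → Z) (u v : Z), u * v = z i0 → H (Sum.elim z ![u, v]) =
        ∑ i ∈ range D, a i z * u ^ i * (1 + p ^ M * G i (Sum.elim z ![u, v])) +
        ∑ i ∈ range D, b i z * v ^ (i + 1) * (1 + p ^ M * G' i (Sum.elim z ![u, v])) := by
  classical
  obtain ⟨P, hP⟩ := hH.exists_series
  choose a b hab using fun k => poly_laurent i0 (P k)
  let n : ℕ → ℕ := fun k => max ((a k).natDegree + 1) ((b k).natDegree + 1)
  let aa : ℕ → PowerSeries (MvPolynomial κ Z) := fun i => PowerSeries.mk fun k => (a k).coeff i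
  let bb : ℕ → PowerSeries (MvPolynomial κ Z) := fun i => PowerSeries.mk fun k => (b k).coeff i
  let r : MvPolynomial κ Z →+* MvPolynomial (κ ⊕ Fin 2) Z := (MvPolynomial.rename Sum.inl).toRingHom
  -- even indices carry the monomials in `u`, odd ones those in `v`
  let eu : ℕ → PowerSeries (MvPolynomial (κ ⊕ Fin 2) Z) := fun i =>
    PowerSeries.map r (aa i) * PowerSeries.C (MvPolynomial.X (Sum.inr 0) ^ i)
  let ew : ℕ → PowerSeries (MvPolynomial (κ ⊕ Fin 2) Z) := fun i =>
    PowerSeries.map r (bb i) * PowerSeries.C (MvPolynomial.X (Sum.inr 1) ^ (i + 1))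
  let e : ℕ → PowerSeries (MvPolynomial (κ ⊕ Fin 2) Z) := fun i =>
    if i % 2 = 0 then eu (i / 2) else ew (i / 2)
  let f : PowerSeries (MvPolynomial (κ ⊕ Fin 2) Z) := PowerSeries.mk fun k =>
    ∑ i ∈ range (2 * n k), PowerSeries.coeff k (e i)
  have hcoe : ∀ k i, 2 * n k ≤ i → PowerSeries.coeff k (e i) = 0 := by
    intro k i hi
    have h1 : (a k).natDegree < i / 2 := by
      have := le_max_left ((a k).natDegree + 1) ((b k).natDegree + 1)
      simp only [n] at hi; omega
    have h2 : (b k).natDegree < i / 2 := by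
      have := le_max_right ((a k).natDegree + 1) ((b k).natDegree + 1)
      simp only [n] at hi; omega
    by_cases hi2 : i % 2 = 0
    · simp only [e, eu, aa, hi2, if_true, PowerSeries.coeff_mul_C, PowerSeries.coeff_map,
        PowerSeries.coeff_mk, Polynomial.coeff_eq_zero_of_natDegree_lt h1, map_zero, zero_mul]
    · simp only [e, ew, bb, hi2, if_false, PowerSeries.coeff_mul_C, PowerSeries.coeff_map,
        PowerSeries.coeff_mk, Polynomial.coeff_eq_zero_of_natDegree_lt h2, map_zero, zero_mul]
  obtain ⟨D, g, hg⟩ := finite_domination f e (by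
    intro L
    refine ⟨∑ k ∈ range L, 2 * n k, fun D hD => ?_⟩
    rw [PowerSeries.X_pow_dvd_iff]
    intro k hk
    have hkD : 2 * n k ≤ D :=
      (single_le_sum (f := fun k => 2 * n k) (fun _ _ => Nat.zero_le _) (mem_range.2 hk)).trans hD
    rw [map_sub, map_sum, sub_eq_zero]
    simp only [f, PowerSeries.coeff_mk]
    refine sum_subset (range_mono hkD) fun i _ hi => hcoe k i ?_
    simpa using hi) M hM
  let φ : (κ ⊕ Fin 2 → Z) → PowerSeries (MvPolynomial (κ ⊕ Fin 2) Z) →+* Z := fun x =>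
    (ev (p := p)).comp (PowerSeries.map (MvPolynomial.eval x))
  have hr : ∀ (z : κ → Z) (u v : Z) (s : PowerSeries (MvPolynomial κ Z)),
      φ (Sum.elim z ![u, v]) (PowerSeries.map r s) =
        ev (PowerSeries.map (MvPolynomial.eval z) s) := by
    intro z u v s
    simp only [φ, RingHom.comp_apply]
    congr 1
    ext k
    simp [r, MvPolynomial.eval_rename]
  have hφC : ∀ x (c : MvPolynomial (κ ⊕ Fin 2) Z), φ x (PowerSeries.C c) =
      MvPolynomial.eval x c := by
    intro x c; simp [φ, ev_C]
  have hφX : ∀ x, φ x PowerSeries.X = p := by intro x; simp [φ, ev_X]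
  have heu : ∀ i z u v, φ (Sum.elim z ![u, v]) (eu i) =
      ev (PowerSeries.map (MvPolynomial.eval z) (aa i)) * u ^ i := by
    intro i z u v; simp only [eu]; rw [map_mul, hr, hφC]; simp
  have hew : ∀ i z u v, φ (Sum.elim z ![u, v]) (ew i) =
      ev (PowerSeries.map (MvPolynomial.eval z) (bb i)) * v ^ (i + 1) := by
    intro i z u v; simp only [ew]; rw [map_mul, hr, hφC]; simp
  have hsum : ∀ (F : ℕ → Z) (n : ℕ), ∑ i ∈ range (2 * n), F i =
      ∑ i ∈ range n, F (2 * i) + ∑ i ∈ range n, F (2 * i + 1) := by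
    intro F n
    induction n with
    | zero => simp
    | succ n ih =>
      rw [show 2 * (n + 1) = 2 * n + 1 + 1 by ring]
      rw [sum_range_succ, sum_range_succ, ih, sum_range_succ, sum_range_succ]; ring
  have he2 : ∀ i, e (2 * i) = eu i := fun i => by simp [e]
  have he21 : ∀ i, e (2 * i + 1) = ew i := fun i => by
    have h1 : (2 * i + 1) % 2 = 1 := by omega
    have h2 : (2 * i + 1) / 2 = i := by omega
    simp [e, h1, h2]
  have hf : ∀ z u v, u * v = z i0 → φ (Sum.elim z ![u, v]) f = H (Sum.elim z ![u, v]) := by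
    intro z u v huv
    refine ev_eq fun K => ?_
    convert hP (Sum.elim z ![u, v]) K using 2
    refine sum_congr rfl fun k _ => ?_
    congr 1
    rw [hab k z u v huv]
    simp only [PowerSeries.coeff_map, f, PowerSeries.coeff_mk, map_sum]
    rw [hsum]
    congr 1
    · rw [Polynomial.eval_eq_sum_range' (n := n k)]
      · refine sum_congr rfl fun i _ => ?_
        rw [he2]
        simp only [eu, aa, PowerSeries.coeff_mul_C, PowerSeries.coeff_map, PowerSeries.coeff_mk]
        simp [r, MvPolynomial.eval_rename]
      · exact (Polynomial.natDegree_map_le).trans_lt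
          ((Nat.lt_succ_self _).trans_le (le_max_left _ _))
    · rw [Polynomial.eval_eq_sum_range' (n := n k), mul_sum]
      · refine sum_congr rfl fun i _ => ?_
        rw [he21]
        simp only [ew, bb, PowerSeries.coeff_mul_C, PowerSeries.coeff_map, PowerSeries.coeff_mk]
        simp [r, MvPolynomial.eval_rename]
        ring
      · exact (Polynomial.natDegree_map_le).trans_lt
          ((Nat.lt_succ_self _).trans_le (le_max_right _ _))
  let au : ℕ → (κ → Z) → Z := fun i z => ev (PowerSeries.map (MvPolynomial.eval z) (aa i))
  let bu : ℕ → (κ → Z) → Z := fun i z => ev (PowerSeries.map (MvPolynomial.eval z) (bb i))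
  have hau : ∀ A : ℕ → PowerSeries (MvPolynomial κ Z), ∀ i,
      IsAn fun z => ev (PowerSeries.map (MvPolynomial.eval z) (A i)) :=
    fun A i => isAn_powerSeries (A i)
  refine ⟨D, au, bu, fun i x => φ x (g (2 * i)), fun i x => φ x (g (2 * i + 1)), hau aa, hau bb,
    fun i => isAn_powerSeries _, fun i => isAn_powerSeries _, fun z u v huv => ?_⟩
  rw [← hf z u v huv, hg, map_sum, hsum]
  congr 1
  · refine sum_congr rfl fun i _ => ?_
    rw [he2 i, map_mul, heu]
    simp only [map_add, map_mul, map_one, map_pow, hφX, au]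
  · refine sum_congr rfl fun i _ => ?_
    rw [he21 i, map_mul, hew]
    simp only [map_add, map_mul, map_one, map_pow, hφX, bu]

/-! ### Divisibility, roots and units in `ℤ_p` -/

theorem p_not_unit : ¬ IsUnit (p : Z) := PadicInt.prime_p.not_isUnit

theorem exists_eq_unit (x : Z) (hx : x ≠ 0) : ∃ w : Z, IsUnit w ∧ x = p ^ x.valuation * w :=
  ⟨PadicInt.unitCoeff hx, (PadicInt.unitCoeff hx).isUnit, by
    rw [mul_comm]; exact PadicInt.unitCoeff_spec hx⟩

theorem val_unit {w : Z} (hw : IsUnit w) : w.valuation = 0 := by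
  obtain ⟨w', hw'⟩ := hw.exists_right_inv
  have h1 : w ≠ 0 := hw.ne_zero
  have h2 : w' ≠ 0 := by rintro rfl; simp at hw'
  have := PadicInt.valuation_mul h1 h2
  rw [hw', PadicInt.valuation_one] at this
  omega

theorem val_mul {x y : Z} (hx : x ≠ 0) (hy : y ≠ 0) :
    (x * y).valuation = x.valuation + y.valuation := PadicInt.valuation_mul hx hy

theorem val_ppow (n : ℕ) : ((p : Z) ^ n).valuation = n := by
  rw [PadicInt.valuation_pow, PadicInt.valuation_p, mul_one]

theorem dvd_iff_val {x y : Z} (hx : x ≠ 0) (hy : y ≠ 0) :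
    x ∣ y ↔ x.valuation ≤ y.valuation := by
  constructor
  · rintro ⟨c, rfl⟩
    rw [val_mul hx (right_ne_zero_of_mul hy)]; omega
  · intro h
    obtain ⟨w, hw, h1⟩ := exists_eq_unit x hx
    obtain ⟨w', hw', h2⟩ := exists_eq_unit y hy
    obtain ⟨i, hi⟩ := hw.exists_right_inv
    rw [h1, h2]
    refine ⟨p ^ (y.valuation - x.valuation) * (i * w'), ?_⟩
    calc (p : Z) ^ y.valuation * w' = (p ^ x.valuation * p ^ (y.valuation - x.valuation)) * w' := by
          rw [← pow_add, Nat.add_sub_cancel' h]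
      _ = _ := by linear_combination (-(p : Z) ^ x.valuation * p ^ (y.valuation - x.valuation) * w') * hi

theorem ppow_dvd_iff {n : ℕ} {x : Z} (hx : x ≠ 0) : (p : Z) ^ n ∣ x ↔ n ≤ x.valuation := by
  rw [dvd_iff_val (ppow_ne n) hx, val_ppow]

theorem unit_of_val {x : Z} (hx : x ≠ 0) (h : x.valuation = 0) : IsUnit x :=
  isUnit_of_dvd_one ((dvd_iff_val hx one_ne_zero).2 (by rw [h]; omega))

theorem dvd_total (x y : Z) : x ∣ y ∨ p * y ∣ x := by
  by_cases hx : x = 0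
  · right; simp [hx]
  by_cases hy : y = 0
  · left; simp [hy]
  rw [dvd_iff_val hx hy, dvd_iff_val (mul_ne_zero pne hy) hx, val_mul pne hy, PadicInt.valuation_p]
  omega

/-- Representatives of the units modulo `p ^ J`. -/
noncomputable def Un (p : ℕ) [Fact p.Prime] (J : ℕ) : Finset ℤ_[p] := by
  classical
  exact ((range (p ^ J)).image fun n : ℕ => (n : ℤ_[p])).filter IsUnit

theorem isUnit_of_mem_Un {J : ℕ} {μ : Z} (h : μ ∈ Un p J) : IsUnit μ := by
  classical
  exact (mem_filter.1 h).2

theorem exists_nat_sub (x : Z) (J : ℕ) : ∃ n < p ^ J, (p : Z) ^ J ∣ x - (n : ℕ) :=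
  ⟨x.appr J, x.appr_lt J, by
    have := PadicInt.appr_spec J x
    rwa [Ideal.mem_span_singleton] at this⟩

theorem exists_Un {J : ℕ} (hJ : 1 ≤ J) {w : Z} (hw : IsUnit w) :
    ∃ μ ∈ Un p J, ∃ s, w = μ * (1 + p ^ J * s) := by
  classical
  obtain ⟨n, hn, c, hc⟩ := exists_nat_sub w J
  have hu : IsUnit (n : Z) := by
    obtain ⟨i, hi⟩ := hw.exists_right_inv
    have h1 : (n : Z) * i = 1 + p * (p ^ (J - 1) * (-c * i)) := by
      have : (p : Z) * p ^ (J - 1) = p ^ J := by rw [← pow_succ']; congr 1; omega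
      linear_combination hi - i * hc + (c * i) * this
    exact isUnit_of_mul_isUnit_left (h1 ▸ isUnit_one_add _)
  obtain ⟨i, hi⟩ := hu.exists_right_inv
  refine ⟨n, ?_, i * c, ?_⟩
  · exact mem_filter.2 ⟨mem_image.2 ⟨n, by simpa using hn, rfl⟩, hu⟩
  · linear_combination hc - p ^ J * c * hi

theorem isUnit_one_add_pow {K : ℕ} (hK : 1 ≤ K) (s : Z) : IsUnit (1 + p ^ K * s) := by
  have : (p : Z) ^ K * s = p * (p ^ (K - 1) * s) := by
    rw [← mul_assoc, ← pow_succ', Nat.sub_add_cancel hK]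
  rw [this]; exact isUnit_one_add _

theorem one_add_inv {K : ℕ} (hK : 1 ≤ K) (s : Z) : ∃ s', (1 + p ^ K * s) * (1 + p ^ K * s') = 1 := by
  obtain ⟨i, hi⟩ := (isUnit_one_add_pow hK s).exists_right_inv
  exact ⟨-s * i, by linear_combination (-(p : Z) ^ K * s) * hi⟩

/-- The set of elements `p ^ n * w` with `w` congruent to `1` modulo `p ^ K`. -/
def QK (K : ℕ) (x : Z) : Prop := ∃ (n : ℕ) (s : Z), x = p ^ n * (1 + p ^ K * s)

theorem QK.ne_zero {K : ℕ} (hK : 1 ≤ K) {x : Z} (h : QK K x) : x ≠ 0 := by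
  obtain ⟨n, s, rfl⟩ := h
  exact mul_ne_zero (ppow_ne n) (isUnit_one_add_pow hK s).ne_zero

theorem QK.mul {K : ℕ} {x y : Z} (hx : QK K x) (hy : QK K y) : QK K (x * y) := by
  obtain ⟨n, s, rfl⟩ := hx
  obtain ⟨m, t, rfl⟩ := hy
  exact ⟨n + m, s + t + p ^ K * s * t, by rw [pow_add]; ring⟩

theorem QK_one (K : ℕ) : QK K (1 : Z) := ⟨0, 0, by simp⟩

theorem QK_ppow (K n : ℕ) : QK K ((p : Z) ^ n) := ⟨n, 0, by simp⟩

theorem QK_one_add (K : ℕ) (s : Z) : QK K (1 + (p : Z) ^ K * s) := ⟨0, s, by simp⟩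

theorem QK.pow {K : ℕ} {x : Z} (hx : QK K x) (n : ℕ) : QK K (x ^ n) := by
  induction n with
  | zero => simpa using QK_one K
  | succ n ih => rw [pow_succ]; exact ih.mul hx

theorem QK.mono {K K' : ℕ} (h : K ≤ K') {x : Z} (hx : QK K' x) : QK K x := by
  obtain ⟨n, s, rfl⟩ := hx
  exact ⟨n, p ^ (K' - K) * s, by rw [← mul_assoc (p ^ K : Z), ← pow_add, Nat.add_sub_cancel' h]⟩

theorem QK.of_mul {K : ℕ} (hK : 1 ≤ K) {x y : Z} (hxy : QK K (x * y)) (hx : QK K x) : QK K y := by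
  have hx0 := hx.ne_zero hK
  have hy0 : y ≠ 0 := right_ne_zero_of_mul (hxy.ne_zero hK)
  have hv := val_mul hx0 hy0
  obtain ⟨n, s, h1⟩ := hx
  obtain ⟨m, t, h2⟩ := hxy
  have hvx : x.valuation = n := by
    rw [h1, val_mul (ppow_ne n) (isUnit_one_add_pow hK s).ne_zero, val_ppow,
      val_unit (isUnit_one_add_pow hK s)]; rfl
  have hvxy : (x * y).valuation = m := by
    rw [h2, val_mul (ppow_ne m) (isUnit_one_add_pow hK t).ne_zero, val_ppow,
      val_unit (isUnit_one_add_pow hK t)]; rfl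
  obtain ⟨s', hs'⟩ := one_add_inv hK s
  refine ⟨m - n, t + s' + p ^ K * t * s', ?_⟩
  have hmn : (p : Z) ^ m = p ^ n * p ^ (m - n) := by rw [← pow_add]; congr 1; omega
  apply mul_left_cancel₀ (ppow_ne (p := p) n)
  calc (p : Z) ^ n * y = (p ^ n * (1 + p ^ K * s) * y) * (1 + p ^ K * s') := by
        linear_combination (-(p : Z) ^ n * y) * hs'
    _ = (p ^ n * p ^ (m - n) * (1 + p ^ K * t)) * (1 + p ^ K * s') := by rw [← h1, h2, hmn]
    _ = _ := by ring

/-- `e`-th powers are injective on `QK K` for large `K`. -/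
theorem QK.pow_inj {e K : ℕ} (he : 1 ≤ e) (hK : e + 1 ≤ K) {x y : Z} (hx : QK K x) (hy : QK K y)
    (h : x ^ e = y ^ e) : x = y := by
  have hK1 : 1 ≤ K := by omega
  have hv : ∀ (n : ℕ) (s : Z), ((p : Z) ^ n * (1 + p ^ K * s)).valuation = n := fun n s => by
    rw [val_mul (ppow_ne n) (isUnit_one_add_pow hK1 s).ne_zero, val_ppow,
      val_unit (isUnit_one_add_pow hK1 s)]; rfl
  obtain ⟨n, s, rfl⟩ := hx
  obtain ⟨m, t, rfl⟩ := hy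
  have hnm : n = m := by
    have := congrArg PadicInt.valuation h
    rw [PadicInt.valuation_pow, PadicInt.valuation_pow, hv, hv] at this
    exact Nat.eq_of_mul_eq_mul_left (by omega) this
  subst hnm
  rw [mul_pow, mul_pow] at h
  have h1 := mul_left_cancel₀ (pow_ne_zero e (ppow_ne (p := p) n)) h
  obtain ⟨t', ht'⟩ := one_add_inv hK1 t
  obtain ⟨c, hc⟩ := cast_dvd_pow (p := p) e he
  have hpK : (p : Z) ^ K = p * e * (c * p ^ (K - e - 1)) := by
    calc (p : Z) ^ K = p * p ^ e * p ^ (K - e - 1) := by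
          rw [← pow_succ', ← pow_add]; congr 1; omega
      _ = _ := by rw [hc]; ring
  have h2 : (1 + p * e * (c * p ^ (K - e - 1) * (s + t' + p ^ K * s * t'))) ^ e = (1 : Z) := by
    have : (1 : Z) + p * e * (c * p ^ (K - e - 1) * (s + t' + p ^ K * s * t')) =
        (1 + p ^ K * s) * (1 + p ^ K * t') := by
      linear_combination (-(s + t' + p ^ K * s * t')) * hpK
    rw [this, mul_pow, h1, ← mul_pow, ht', one_pow]
  have h3 := one_add_pow_eq_one he h2
  have h4 : (1 + p ^ K * s) * (1 + p ^ K * t') = (1 : Z) := by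
    linear_combination ((s + t' + p ^ K * s * t')) * hpK + p * e * h3
  have h5 : (1 : Z) + p ^ K * s = 1 + p ^ K * t := by
    linear_combination (1 + p ^ K * t) * h4 - (1 + p ^ K * s) * ht'
  rw [h5]

open Classical in
/-- The quotient `a / b` when it exists in `ℤ_p`, and `0` otherwise. -/
noncomputable def dv (a b : Z) : Z := if h : b ≠ 0 ∧ b ∣ a then h.2.choose else 0

theorem dv_mul {a b : Z} (hb : b ≠ 0) (h : b ∣ a) : b * dv a b = a := by
  rw [dv, dif_pos ⟨hb, h⟩]; exact (Exists.choose_spec (⟨hb, h⟩ : b ≠ 0 ∧ b ∣ a).2).symm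

theorem dv_eq {a b c : Z} (hb : b ≠ 0) (h : a = b * c) : dv a b = c :=
  mul_left_cancel₀ hb (by rw [dv_mul hb ⟨c, h⟩, h])

theorem dv_of_not {a b : Z} (h : ¬ b ∣ a) : dv a b = 0 := by
  rw [dv, dif_neg (fun h' => h h'.2)]

theorem dv_zero_right (a : Z) : dv a 0 = 0 := by
  rw [dv, dif_neg (fun h' => h'.1 rfl)]

theorem dv_zero_left (a : Z) : dv 0 a = 0 := by
  by_cases h : a = 0
  · rw [h, dv_zero_right]
  · exact dv_eq h (by simp)

open Classical in
/-- The `e`-th root of `f` in `QK K` if it exists (it is unique for `e + 1 ≤ K`), and `0`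
otherwise. -/
noncomputable def rt (e K : ℕ) (f : Z) : Z := if h : ∃ y, QK K y ∧ y ^ e = f then h.choose else 0

theorem rt_eq {e K : ℕ} (he : 1 ≤ e) (hK : e + 1 ≤ K) {f y : Z} (hy : QK K y) (h : y ^ e = f) :
    rt e K f = y := by
  have h' : ∃ y, QK K y ∧ y ^ e = f := ⟨y, hy, h⟩
  rw [rt, dif_pos h']
  exact QK.pow_inj he hK h'.choose_spec.1 hy (h'.choose_spec.2.trans h.symm)

theorem rt_of_not {e K : ℕ} {f : Z} (h : ¬ ∃ y, QK K y ∧ y ^ e = f) : rt e K f = 0 := by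
  rw [rt, dif_neg h]

theorem rt_ne_zero {e K : ℕ} {f : Z} (h : rt e K f ≠ 0) :
    QK K (rt e K f) ∧ rt e K f ^ e = f := by
  by_cases h' : ∃ y, QK K y ∧ y ^ e = f
  · rw [rt, dif_pos h']; exact h'.choose_spec
  · exact absurd (rt_of_not h') h

/-- Elements close to `1` are `k`-th powers of elements close to `1`. -/
theorem exists_root_one (k : ℕ) (hk : 1 ≤ k) (K : ℕ) (s : Z) :
    ∃ y : Z, (1 + p ^ K * y) ^ k = 1 + p ^ (K + 2 * k + 1) * s := by
  obtain ⟨ρ, -, hρ, -, hρ'⟩ := exists_root (p := p) k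
  obtain ⟨c, hc⟩ := cast_dvd_pow (p := p) k hk
  obtain ⟨d, hd⟩ := hρ (p ^ K * (c ^ 2 * s))
  refine ⟨p * k * (c ^ 2 * s * d), ?_⟩
  have := hρ' (p ^ K * (c ^ 2 * s))
  rw [hd] at this
  convert this using 1
  · ring
  · rw [pow_add, pow_add, pow_mul']; rw [hc]; ring

theorem exists_unit_root (k : ℕ) (hk : 1 ≤ k) (K : ℕ) {w : Z} (hw : IsUnit w) :
    ∃ μ ∈ Un p (K + 2 * k + 1), ∃ y, w = μ * (1 + p ^ K * y) ^ k := by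
  obtain ⟨μ, hμ, s, hs⟩ := exists_Un (J := K + 2 * k + 1) (by omega) hw
  obtain ⟨y, hy⟩ := exists_root_one k hk K s
  exact ⟨μ, hμ, y, by rw [hs, hy]⟩

/-- An element whose valuation is divisible by `k` is a `k`-th power up to finitely many units. -/
theorem exists_root_of_dvd (k : ℕ) (hk : 1 ≤ k) (K : ℕ) {f : Z} (hf : f ≠ 0)
    (h : k ∣ f.valuation) : ∃ μ ∈ Un p (K + 2 * k + 1), ∃ y, QK K y ∧ f = μ * y ^ k := by
  obtain ⟨w, hw, h1⟩ := exists_eq_unit f hf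
  obtain ⟨μ, hμ, y, hy⟩ := exists_unit_root k hk K hw
  obtain ⟨n, hn⟩ := h
  refine ⟨μ, hμ, p ^ n * (1 + p ^ K * y), ⟨n, y, rfl⟩, ?_⟩
  rw [h1, hn, hy, mul_comm k n, pow_mul, mul_pow]; ring

/-! ### Base structures, charts and covers -/

section

/-- A class `T` of functions `X → ℤ_p` (terms) and a class `Q` of subsets of `X`, with the closure
properties needed for preparing analytic functions with coefficients in `T`. -/
structure Base (p : ℕ) [Fact p.Prime] (X : Type) where
  /-- the terms -/
  T : (X → ℤ_[p]) → Prop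
  /-- the distinguished subsets -/
  Q : (X → Prop) → Prop
  comp : ∀ {κ : Type} [Finite κ] {H : (κ → ℤ_[p]) → ℤ_[p]}, IsAn H →
    ∀ {f : κ → X → ℤ_[p]}, (∀ i, T (f i)) → T (fun x => H (fun i => f i x))
  div : ∀ {f g : X → ℤ_[p]}, T f → T g → T (fun x => dv (f x) (g x))
  root : ∀ {e K : ℕ}, 1 ≤ e → e + 1 ≤ K → ∀ {f : X → ℤ_[p]}, T f → T (fun x => rt e K (f x))
  zero : ∀ {f : X → ℤ_[p]}, T f → Q (fun x => f x = 0)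
  inter : ∀ {C D : X → Prop}, Q C → Q D → Q (fun x => C x ∧ D x)
  compl : ∀ {C : X → Prop}, Q C → Q (fun x => ¬ C x)

variable {X : Type} (B : Base p X)

namespace Base
variable {B}

theorem T_const (B : Base p X) (c : Z) : B.T (fun _ => c) :=
  B.comp (κ := Empty) (isAn_const c) (f := fun i => i.elim) (fun i => i.elim)

theorem T_comp1 {H : Z → Z} (hH : IsAn fun v : Fin 1 → Z => H (v 0)) {f : X → Z} (hf : B.T f) :
    B.T (fun x => H (f x)) :=
  B.comp hH (f := fun _ => f) (fun _ => hf)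

theorem T_add {f g : X → Z} (hf : B.T f) (hg : B.T g) : B.T (fun x => f x + g x) := by
  have := B.comp (κ := Fin 2) ((isAn_coord (p := p) 0).add (isAn_coord 1)) (f := ![f, g])
    (fun i => by fin_cases i <;> assumption)
  simpa using this

theorem T_mul {f g : X → Z} (hf : B.T f) (hg : B.T g) : B.T (fun x => f x * g x) := by
  have := B.comp (κ := Fin 2) ((isAn_coord (p := p) 0).mul (isAn_coord 1)) (f := ![f, g])
    (fun i => by fin_cases i <;> assumption)
  simpa using this

theorem T_pow {f : X → Z} (hf : B.T f) (n : ℕ) : B.T (fun x => f x ^ n) := by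
  have := B.comp (κ := Fin 1) ((isAn_coord (p := p) 0).pow n) (f := ![f])
    (fun i => by fin_cases i; assumption)
  simpa using this

theorem T_cmul (c : Z) {f : X → Z} (hf : B.T f) : B.T (fun x => c * f x) :=
  T_mul (B.T_const c) hf

theorem T_sub {f g : X → Z} (hf : B.T f) (hg : B.T g) : B.T (fun x => f x - g x) := by
  have := T_add hf (T_cmul (-1) hg)
  simpa [sub_eq_add_neg] using this

theorem Q_union {C D : X → Prop} (hC : B.Q C) (hD : B.Q D) : B.Q (fun x => C x ∨ D x) := by
  have := B.compl (B.inter (B.compl hC) (B.compl hD))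
  simpa only [not_and_or, not_not] using this

theorem Q_true (B : Base p X) : B.Q (fun _ => True) := by
  simpa using B.zero (B.T_const 0)

theorem Q_false (B : Base p X) : B.Q (fun _ => False) := by
  simpa using B.compl B.Q_true

theorem Q_const (B : Base p X) (P : Prop) : B.Q (fun _ => P) := by
  by_cases h : P
  · simpa [h] using B.Q_true
  · simpa [h] using B.Q_false

theorem Q_dvd {f g : X → Z} (hf : B.T f) (hg : B.T g) : B.Q (fun x => f x ∣ g x) := by
  have := Q_union (B.zero hg) (B.compl (B.zero (B.div hg hf)))
  refine (congrArg B.Q (funext fun x => propext ?_)).mp this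
  constructor
  · rintro (h | h)
    · rw [h]; exact dvd_zero _
    · by_contra h'; exact h (dv_of_not h')
  · intro h
    by_cases h0 : g x = 0
    · exact Or.inl h0
    · refine Or.inr fun h' => h0 ?_
      have hf0 : f x ≠ 0 := fun h0' => h0 (by rw [h0'] at h; exact zero_dvd_iff.1 h)
      rw [← dv_mul hf0 h, h', mul_zero]

theorem Q_val_dvd (k : ℕ) (hk : 1 ≤ k) {f : X → Z} (hf : B.T f) :
    B.Q (fun x => f x ≠ 0 ∧ k ∣ (f x).valuation) := by
  have h1 : ∀ μ : Z, B.Q (fun x => rt k (k + 1) (μ * f x) ≠ 0) := fun μ =>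
    B.compl (B.zero (B.root hk le_rfl (T_cmul μ hf)))
  have h2 : ∀ S : Finset Z, B.Q (fun x => ∃ μ ∈ S, rt k (k + 1) (Ring.inverse μ * f x) ≠ 0) := by
    classical
    intro S
    induction S using Finset.induction_on with
    | empty => simpa using B.Q_false
    | insert a S _ ih => simpa using Q_union (h1 (Ring.inverse a)) ih
  refine (congrArg B.Q (funext fun x => propext ?_)).mp (h2 (Un p (k + 1 + 2 * k + 1)))
  constructor
  · rintro ⟨μ, hμ, h⟩
    obtain ⟨hy, h⟩ := rt_ne_zero h
    generalize rt k (k + 1) (Ring.inverse μ * f x) = y at hy h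
    have hμ := isUnit_of_mem_Un hμ
    have h3 := hy.ne_zero (by omega)
    have hf0 : f x ≠ 0 := fun h0 => by
      rw [h0, mul_zero] at h; exact pow_ne_zero k h3 h
    refine ⟨hf0, ?_⟩
    have hi : IsUnit (Ring.inverse μ) := hμ.ringInverse
    have := congrArg PadicInt.valuation h
    rw [PadicInt.valuation_pow, val_mul hi.ne_zero hf0, val_unit hi, zero_add] at this
    exact ⟨_, this.symm⟩
  · rintro ⟨h0, hd⟩
    obtain ⟨μ, hμ, y, hy, h⟩ := exists_root_of_dvd k hk (k + 1) h0 hd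
    refine ⟨μ, hμ, ?_⟩
    have hμ := isUnit_of_mem_Un hμ
    rw [h, ← mul_assoc, Ring.inverse_mul_cancel μ hμ, one_mul, rt_eq hk le_rfl hy rfl]
    exact hy.ne_zero (by omega)

/-- The root lemma: on the set where `f` is nonzero with valuation divisible by `k`, the function
`f` is a `k`-th power of a term up to finitely many unit constants. -/
theorem root_lemma (k : ℕ) (hk : 1 ≤ k) (K : ℕ) (hK : k + 1 ≤ K) {f : X → Z} (hf : B.T f) (μ : Z) :
    ∃ ρ, B.T ρ ∧ B.Q (fun x => ρ x ≠ 0) ∧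
      (∀ x, ρ x ≠ 0 → QK K (ρ x) ∧ (IsUnit μ → f x = μ * ρ x ^ k)) ∧
      ∀ x y, IsUnit μ → QK K y → f x = μ * y ^ k → ρ x = y := by
  refine ⟨fun x => rt k K (Ring.inverse μ * f x), B.root hk hK (T_cmul _ hf),
    B.compl (B.zero (B.root hk hK (T_cmul _ hf))), fun x hx => ?_, fun x y hμ hy h => ?_⟩
  · obtain ⟨h1, h2⟩ := rt_ne_zero hx
    exact ⟨h1, fun hμ => by rw [h2, ← mul_assoc, Ring.mul_inverse_cancel μ hμ, one_mul]⟩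
  · refine rt_eq hk hK hy ?_
    rw [h, ← mul_assoc, Ring.inverse_mul_cancel μ hμ, one_mul]

end Base

/-- Families of functions of `w ∈ ℤ_p ^ σ`, analytic with coefficients which are terms in `x`. -/
def Tn (σ : Type) (g : X → (σ → Z) → Z) : Prop :=
  ∃ (κ : Type) (_ : Finite κ) (z : κ → X → Z) (H : (κ ⊕ σ → Z) → Z),
    (∀ i, B.T (z i)) ∧ IsAn H ∧ ∀ x w, g x w = H (Sum.elim (fun i => z i x) w)

variable {B}

theorem Tn.comp {σ κ : Type} [Finite κ] {H : (κ → Z) → Z} (hH : IsAn H) {g : κ → X → (σ → Z) → Z}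
    (hg : ∀ i, Tn B σ (g i)) : Tn B σ (fun x w => H (fun i => g i x w)) := by
  choose τ fin z G hz hG h using hg
  refine ⟨Σ i, τ i, inferInstance, fun i => z i.1 i.2, fun v => H (fun i => G i
    (Sum.elim (fun j => v (Sum.inl ⟨i, j⟩)) (fun j => v (Sum.inr j)))), fun i => hz _ _, ?_, ?_⟩
  · refine hH.comp fun i => (hG i).comp (κ := (Σ i, τ i) ⊕ σ)
      (G := fun k v => Sum.elim (fun j => v (Sum.inl ⟨i, j⟩))
      (fun j => v (Sum.inr j)) k) fun k => ?_
    rcases k with k | k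
    · exact isAn_coord _
    · exact isAn_coord _
  · intro x w
    simp only [h, Sum.elim_inl, Sum.elim_inr]

theorem Tn.term {σ : Type} {f : X → Z} (hf : B.T f) : Tn B σ (fun x _ => f x) :=
  ⟨Fin 1, inferInstance, fun _ => f, fun v => v (Sum.inl 0), fun _ => hf, isAn_coord _,
    fun _ _ => rfl⟩

theorem Tn.coord {σ : Type} (i : σ) : Tn B σ (fun _ w => w i) :=
  ⟨Empty, inferInstance, fun i => i.elim, fun v => v (Sum.inr i), fun i => i.elim, isAn_coord _,
    fun _ _ => rfl⟩

theorem Tn.subst {σ σ' : Type} [Finite σ] {g : X → (σ → Z) → Z} (hg : Tn B σ g)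
    {h : σ → X → (σ' → Z) → Z} (hh : ∀ i, Tn B σ' (h i)) :
    Tn B σ' (fun x w => g x (fun i => h i x w)) := by
  obtain ⟨κ, _, z, H, hz, hH, e⟩ := hg
  have := Tn.comp hH (g := Sum.elim (fun i x _ => z i x) h) (fun i => by
    rcases i with i | i
    · exact Tn.term (hz i)
    · exact hh i)
  refine (congrArg (Tn B σ') (funext fun x => funext fun w => ?_)).mp this
  rw [e]; congr 1; funext i; rcases i with i | i <;> rfl

/-- The points `(x, u, v)` of a chart. -/
abbrev Pt (p : ℕ) [Fact p.Prime] (X : Type) := X × ℤ_[p] × ℤ_[p]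

variable (B) in
/-- A chart: the set of points `(x, u, v)` with `x` in `C` and `u * v = ε x`, where either `u`
ranges over all of `ℤ_p` (and `v = 0`), or `u` lies in `QK K`. The point `(x, u, v)`
parametrizes the element `c x + β x * u ^ N` of `ℤ_p`. -/
structure Chart where
  /-- the range of the base point -/
  C : X → Prop
  /-- the center -/
  c : X → Z
  /-- the scaling factor -/
  β : X → Z
  /-- the value of `u * v` -/
  ε : X → Z
  /-- the exponent of `u` -/
  N : ℕ
  /-- the congruence level -/
  K : ℕ
  /-- whether the chart is a ball -/
  ball : Prop
  hC : B.Q C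
  hc : B.T c
  hβ : B.T β
  hε : B.T ε
  hN : 1 ≤ N
  hK : 1 ≤ K
  hball : ball → N = 1

namespace Chart

/-- The set of points of a chart. -/
def pts (P : Chart B) (q : Pt p X) : Prop :=
  P.C q.1 ∧ q.2.1 * q.2.2 = P.ε q.1 ∧ (P.ball → q.2.2 = 0) ∧ (¬ P.ball → QK P.K q.2.1)

/-- The element of `ℤ_p` parametrized by a point. -/
noncomputable def t (P : Chart B) (q : Pt p X) : Z := P.c q.1 + P.β q.1 * q.2.1 ^ P.N

/-- The analytic functions on a chart. -/
def O (P : Chart B) (g : Pt p X → Z) : Prop :=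
  ∃ G, Tn B (Fin 2) G ∧ ∀ q, P.pts q → g q = G q.1 ![q.2.1, q.2.2]

theorem O.comp {P : Chart B} {κ : Type} [Finite κ] {H : (κ → Z) → Z} (hH : IsAn H)
    {g : κ → Pt p X → Z} (hg : ∀ i, P.O (g i)) : P.O (fun q => H (fun i => g i q)) := by
  choose G hG h using hg
  exact ⟨_, Tn.comp hH hG, fun q hq => by simp only [h _ q hq]⟩

theorem O.term {P : Chart B} {f : X → Z} (hf : B.T f) : P.O (fun q => f q.1) :=
  ⟨_, Tn.term hf, fun _ _ => rfl⟩

theorem O_const (P : Chart B) (c : Z) : P.O (fun _ => c) := O.term (B.T_const c)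

theorem O_u (P : Chart B) : P.O (fun q => q.2.1) := ⟨_, Tn.coord 0, fun _ _ => rfl⟩

theorem O_v (P : Chart B) : P.O (fun q => q.2.2) := ⟨_, Tn.coord 1, fun _ _ => rfl⟩

theorem O.congr {P : Chart B} {f g : Pt p X → Z} (hf : P.O f) (h : ∀ q, P.pts q → f q = g q) :
    P.O g := by
  obtain ⟨G, hG, e⟩ := hf
  exact ⟨G, hG, fun q hq => by rw [← h q hq, e q hq]⟩

theorem O.comp1 {P : Chart B} {H : Z → Z} (hH : IsAn fun v : Fin 1 → Z => H (v 0)) {f : Pt p X → Z}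
    (hf : P.O f) : P.O (fun x => H (f x)) :=
  O.comp hH (g := fun _ => f) (fun _ => hf)

theorem O.add {P : Chart B} {f g : Pt p X → Z} (hf : P.O f) (hg : P.O g) :
    P.O (fun x => f x + g x) := by
  have := O.comp (κ := Fin 2) ((isAn_coord (p := p) 0).add (isAn_coord 1)) (g := ![f, g])
    (fun i => by fin_cases i <;> assumption)
  simpa using this

theorem O.mul {P : Chart B} {f g : Pt p X → Z} (hf : P.O f) (hg : P.O g) :
    P.O (fun x => f x * g x) := by
  have := O.comp (κ := Fin 2) ((isAn_coord (p := p) 0).mul (isAn_coord 1)) (g := ![f, g])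
    (fun i => by fin_cases i <;> assumption)
  simpa using this

theorem O.pow {P : Chart B} {f : Pt p X → Z} (hf : P.O f) (n : ℕ) : P.O (fun x => f x ^ n) := by
  have := O.comp (κ := Fin 1) ((isAn_coord (p := p) 0).pow n) (g := ![f])
    (fun i => by fin_cases i; assumption)
  simpa using this

theorem O.cmul {P : Chart B} (c : Z) {f : Pt p X → Z} (hf : P.O f) : P.O (fun x => c * f x) :=
  (P.O_const c).mul hf

theorem O.sum {P : Chart B} {σ : Type} (s : Finset σ) {F : σ → Pt p X → Z}
    (hF : ∀ i ∈ s, P.O (F i)) : P.O (fun q => ∑ i ∈ s, F i q) := by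
  classical
  induction s using Finset.induction_on with
  | empty => simpa using P.O_const 0
  | insert a s ha ih =>
    simp only [sum_insert ha]
    exact (hF a (by simp)).add (ih fun i hi => hF i (by simp [hi]))

/-- A function of the form `1 + p ^ M * G` with `G` analytic. -/
def One (P : Chart B) (M : ℕ) (g : Pt p X → Z) : Prop :=
  ∃ G, P.O G ∧ ∀ q, P.pts q → g q = 1 + p ^ M * G q

theorem One.mul {P : Chart B} {M : ℕ} {f g : Pt p X → Z} (hf : P.One M f) (hg : P.One M g) :
    P.One M (fun q => f q * g q) := by
  obtain ⟨F, hF, hf⟩ := hf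
  obtain ⟨G, hG, hg⟩ := hg
  refine ⟨fun q => F q + G q + p ^ M * (F q * G q), (hF.add hG).add ((hF.mul hG).cmul _),
    fun q hq => ?_⟩
  dsimp only; rw [hf q hq, hg q hq]; ring

theorem One_one (P : Chart B) (M : ℕ) : P.One M (fun _ => 1) := ⟨_, P.O_const 0, by simp⟩

theorem One.pow {P : Chart B} {M : ℕ} {f : Pt p X → Z} (hf : P.One M f) (n : ℕ) :
    P.One M (fun q => f q ^ n) := by
  induction n with
  | zero => simpa using P.One_one M
  | succ n ih => simpa [pow_succ] using ih.mul hf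

theorem One.O {P : Chart B} {M : ℕ} {f : Pt p X → Z} (hf : P.One M f) : P.O f := by
  obtain ⟨F, hF, hf⟩ := hf
  exact ((P.O_const 1).add (hF.cmul (p ^ M))).congr fun q hq => (hf q hq).symm

theorem One.mono {P : Chart B} {M M' : ℕ} (h : M ≤ M') {f : Pt p X → Z} (hf : P.One M' f) :
    P.One M f := by
  obtain ⟨F, hF, hf⟩ := hf
  refine ⟨_, hF.cmul (p ^ (M' - M)), fun q hq => ?_⟩
  rw [hf q hq, ← mul_assoc, ← pow_add, Nat.add_sub_cancel' h]

/-- The function is a monomial in `u` or `v`, with a term as coefficient, up to a factor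
congruent to `1` modulo `p ^ M`. On a ball the monomial is constant. -/
def Mono (P : Chart B) (M : ℕ) (g : Pt p X → Z) : Prop :=
  ∃ b, B.T b ∧ ∃ k : ℕ, (P.ball → k = 0) ∧ ∃ E, P.One M E ∧
    ((∀ q, P.pts q → g q = b q.1 * q.2.1 ^ k * E q) ∨
      (∀ q, P.pts q → g q = b q.1 * q.2.2 ^ k * E q))

variable (B) in
/-- `Ref M P P' R`: the map `R` from the points of `P'` to the points of `P` is
analytic and transforms `u` and `v` monomially modulo `p ^ M`. -/
structure Ref (M : ℕ) (P P' : Chart B) (R : Pt p X → Pt p X) : Prop where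
  maps : ∀ q, P'.pts q → P.pts (R q)
  fst : ∀ q, P'.pts q → (R q).1 = q.1
  ht : ∀ q, P'.pts q → P.t (R q) = P'.t q
  hu : P'.O (fun q => (R q).2.1)
  hv : P'.O (fun q => (R q).2.2)
  mono : ¬ P.ball → ∃ e : ℕ, (P'.ball → e = 0) ∧ ∃ b₁ b₂, B.T b₁ ∧ B.T b₂ ∧
    ∃ E₁ E₂, P'.One M E₁ ∧ P'.One M E₂ ∧ ∀ q, P'.pts q →
      (R q).2.1 = b₁ q.1 * q.2.1 ^ e * E₁ q ∧ (R q).2.2 = b₂ q.1 * q.2.2 ^ e * E₂ q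

theorem O.ref {M : ℕ} {P P' : Chart B} {R : Pt p X → Pt p X} (hR : Ref B M P P' R) {g : Pt p X → Z}
    (hg : P.O g) : P'.O (fun q => g (R q)) := by
  obtain ⟨G, hG, h⟩ := hg
  obtain ⟨U, hU, hu⟩ := hR.hu
  obtain ⟨V, hV, hv⟩ := hR.hv
  refine ⟨_, hG.subst (h := ![U, V]) (fun i => by fin_cases i <;> assumption), fun q hq => ?_⟩
  dsimp only at hu hv ⊢
  rw [h _ (hR.maps q hq), hR.fst q hq, hu q hq, hv q hq]
  congr 1; funext i; fin_cases i <;> rfl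

theorem One.ref {M' M : ℕ} {P P' : Chart B} {R : Pt p X → Pt p X} (hR : Ref B M' P P' R)
    {g : Pt p X → Z} (hg : P.One M g) : P'.One M (fun q => g (R q)) := by
  obtain ⟨G, hG, h⟩ := hg
  exact ⟨_, hG.ref hR, fun q hq => h _ (hR.maps q hq)⟩

theorem Mono.ref {M : ℕ} {P P' : Chart B} {R : Pt p X → Pt p X} (hR : Ref B M P P' R)
    {g : Pt p X → Z} (hg : P.Mono M g) : P'.Mono M (fun q => g (R q)) := by
  obtain ⟨b, hb, k, hk, E, hE, h⟩ := hg
  by_cases hP : P.ball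
  · obtain rfl := hk hP
    refine ⟨b, hb, 0, fun _ => rfl, _, hE.ref hR, Or.inl fun q hq => ?_⟩
    dsimp only
    rcases h with h | h <;> rw [h _ (hR.maps q hq), hR.fst q hq] <;> simp
  · obtain ⟨e, he, b₁, b₂, hb₁, hb₂, E₁, E₂, hE₁, hE₂, hR'⟩ := hR.mono hP
    rcases h with h | h
    · refine ⟨fun x => b x * b₁ x ^ k, Base.T_mul hb (Base.T_pow hb₁ k), e * k,
        fun h' => by simp [he h'], _, (hE₁.pow k).mul (hE.ref hR), Or.inl fun q hq => ?_⟩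
      dsimp only
      rw [h _ (hR.maps q hq), hR.fst q hq, (hR' q hq).1]; ring
    · refine ⟨fun x => b x * b₂ x ^ k, Base.T_mul hb (Base.T_pow hb₂ k), e * k,
        fun h' => by simp [he h'], _, (hE₂.pow k).mul (hE.ref hR), Or.inr fun q hq => ?_⟩
      dsimp only
      rw [h _ (hR.maps q hq), hR.fst q hq, (hR' q hq).2]; ring

theorem Ref.refl (M : ℕ) (P : Chart B) : Ref B M P P id where
  maps _ h := h
  fst _ _ := rfl
  ht _ _ := rfl
  hu := P.O_u
  hv := P.O_v
  mono h := ⟨1, fun h' => absurd h' h, fun _ => 1, fun _ => 1, B.T_const 1, B.T_const 1, fun _ => 1,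
    fun _ => 1, P.One_one M, P.One_one M, fun q _ => by simp⟩

theorem Ref.trans {M : ℕ} {P P' P'' : Chart B} {R R' : Pt p X → Pt p X} (h : Ref B M P P' R)
    (h' : Ref B M P' P'' R') : Ref B M P P'' (fun q => R (R' q)) where
  maps q hq := h.maps _ (h'.maps q hq)
  fst q hq := (h.fst _ (h'.maps q hq)).trans (h'.fst q hq)
  ht q hq := (h.ht _ (h'.maps q hq)).trans (h'.ht q hq)
  hu := h.hu.ref h'
  hv := h.hv.ref h'
  mono hP := by
    obtain ⟨e, he, b₁, b₂, hb₁, hb₂, E₁, E₂, hE₁, hE₂, hR⟩ := h.mono hP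
    by_cases hP' : P'.ball
    · obtain rfl := he hP'
      refine ⟨0, fun _ => rfl, b₁, b₂, hb₁, hb₂, _, _, hE₁.ref h', hE₂.ref h', fun q hq => ?_⟩
      have := hR _ (h'.maps q hq)
      simpa [h'.fst q hq] using this
    · obtain ⟨e', he', c₁, c₂, hc₁, hc₂, F₁, F₂, hF₁, hF₂, hR'⟩ := h'.mono hP'
      refine ⟨e' * e, fun h => by simp [he' h], _, _, Base.T_mul hb₁ (Base.T_pow hc₁ e),
        Base.T_mul hb₂ (Base.T_pow hc₂ e), _, _, (hF₁.pow e).mul (hE₁.ref h'),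
        (hF₂.pow e).mul (hE₂.ref h'), fun q hq => ?_⟩
      have h1 := hR _ (h'.maps q hq)
      have h2 := hR' q hq
      rw [h1.1, h1.2, h2.1, h2.2, h'.fst q hq]
      constructor <;> ring

variable (B) in
/-- `Cov M P S Φ`: the points of `P` satisfying `S` are covered by finitely many charts `P'`
mapped to `P`, all of which satisfy `Φ`. -/
def Cov (M : ℕ) (P : Chart B) (S : Pt p X → Prop) (Φ : Chart B → (Pt p X → Pt p X) → Prop) : Prop :=
  ∃ (n : ℕ) (P' : Fin n → Chart B) (R : Fin n → Pt p X → Pt p X),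
    (∀ i, Ref B M P (P' i) (R i) ∧ Φ (P' i) (R i)) ∧
    ∀ q, P.pts q → S q → ∃ i q', (P' i).pts q' ∧ R i q' = q

variable {M : ℕ} {P : Chart B} {S S' : Pt p X → Prop} {Φ Ψ : Chart B → (Pt p X → Pt p X) → Prop}

theorem Cov.of_fintype {ι : Type} [Finite ι] (P' : ι → Chart B) (R : ι → Pt p X → Pt p X)
    (h : ∀ i, Ref B M P (P' i) (R i) ∧ Φ (P' i) (R i))
    (hS : ∀ q, P.pts q → S q → ∃ i q', (P' i).pts q' ∧ R i q' = q) : Cov B M P S Φ := by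
  obtain ⟨n, ⟨e⟩⟩ := Finite.exists_equiv_fin ι
  refine ⟨n, fun i => P' (e.symm i), fun i => R (e.symm i), fun i => h _, fun q hq hSq => ?_⟩
  obtain ⟨i, q', h1, h2⟩ := hS q hq hSq
  exact ⟨e i, q', by simpa using h1, by simpa using h2⟩

theorem Cov.single (P' : Chart B) (R : Pt p X → Pt p X) (h : Ref B M P P' R) (hΦ : Φ P' R)
    (hS : ∀ q, P.pts q → S q → ∃ q', P'.pts q' ∧ R q' = q) : Cov B M P S Φ :=
  Cov.of_fintype (ι := Unit) (fun _ => P') (fun _ => R) (fun _ => ⟨h, hΦ⟩)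
    (fun q hq h => ⟨(), hS q hq h⟩)

theorem Cov.refl (h : Φ P id) : Cov B M P S Φ :=
  Cov.single P id (Ref.refl M P) h fun q hq _ => ⟨q, hq, rfl⟩

theorem Cov.mono (h : Cov B M P S Φ) (hS : ∀ q, P.pts q → S' q → S q)
    (hΦ : ∀ P' R, Ref B M P P' R → Φ P' R → Ψ P' R) : Cov B M P S' Ψ := by
  obtain ⟨n, P', R, h1, h2⟩ := h
  exact ⟨n, P', R, fun i => ⟨(h1 i).1, hΦ _ _ (h1 i).1 (h1 i).2⟩, fun q hq hq' => h2 q hq (hS q hq hq')⟩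

theorem Cov.bind (h : Cov B M P S Φ) (h' : ∀ P' R, Ref B M P P' R → Φ P' R →
    Cov B M P' (fun q => S' (R q)) (fun P'' R' => Ψ P'' (fun q => R (R' q))))
    (hS : ∀ q, P.pts q → S' q → S q := by exact fun _ _ h => h) :
    Cov B M P S' Ψ := by
  obtain ⟨n, P', R, h1, h2⟩ := h
  choose m P'' R' h3 h4 using fun i => h' (P' i) (R i) (h1 i).1 (h1 i).2
  refine Cov.of_fintype (ι := Σ i, Fin (m i)) (fun i => P'' i.1 i.2)
    (fun i q => R i.1 (R' i.1 i.2 q)) (fun i => ⟨(h1 i.1).1.trans (h3 i.1 i.2).1, (h3 i.1 i.2).2⟩)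
    (fun q hq hSq => ?_)
  obtain ⟨i, q', hq', rfl⟩ := h2 q hq (hS q hq hSq)
  obtain ⟨j, q'', hq'', rfl⟩ := h4 i q' hq' hSq
  exact ⟨⟨i, j⟩, q'', hq'', rfl⟩

theorem Cov.iUnion {ι : Type} [Finite ι] {S : ι → Pt p X → Prop} (h : ∀ i, Cov B M P (S i) Φ)
    (hS : ∀ q, P.pts q → S' q → ∃ i, S i q) : Cov B M P S' Φ := by
  choose m P' R h1 h2 using h
  refine Cov.of_fintype (ι := Σ i, Fin (m i)) (fun i => P' i.1 i.2) (fun i => R i.1 i.2)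
    (fun i => h1 i.1 i.2) (fun q hq hSq => ?_)
  obtain ⟨i, hi⟩ := hS q hq hSq
  obtain ⟨j, q', h3, h4⟩ := h2 i q hq hi
  exact ⟨⟨i, j⟩, q', h3, h4⟩

theorem Cov.union {S₁ S₂ : Pt p X → Prop} (h₁ : Cov B M P S₁ Φ) (h₂ : Cov B M P S₂ Φ)
    (hS : ∀ q, P.pts q → S' q → S₁ q ∨ S₂ q) : Cov B M P S' Φ :=
  Cov.iUnion (ι := Bool) (S := fun b => cond b S₁ S₂) (fun b => by cases b <;> assumption)
    fun q hq h => (hS q hq h).elim (fun h => ⟨true, h⟩) (fun h => ⟨false, h⟩)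

theorem Cov.empty (hS : ∀ q, P.pts q → ¬ S q) : Cov B M P S Φ :=
  Cov.of_fintype (ι := Empty) (fun i => i.elim) (fun i => i.elim) (fun i => i.elim)
    (fun q hq h => absurd h (hS q hq))

/-- Restriction of a chart to a smaller base. -/
def restrict (P : Chart B) {D : X → Prop} (hD : B.Q D) : Chart B :=
  { P with C := fun x => P.C x ∧ D x, hC := B.inter P.hC hD }

theorem restrict_pts {D : X → Prop} (hD : B.Q D) (q : Pt p X) :
    (P.restrict hD).pts q ↔ P.pts q ∧ D q.1 := by
  simp only [pts, restrict]; tauto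

theorem Ref.restrict (M : ℕ) (P : Chart B) {D : X → Prop} (hD : B.Q D) :
    Ref B M P (P.restrict hD) id where
  maps q h := ((restrict_pts hD q).1 h).1
  fst _ _ := rfl
  ht _ _ := rfl
  hu := O_u _
  hv := O_v _
  mono h := ⟨1, fun h' => absurd h' h, fun _ => 1, fun _ => 1, B.T_const 1, B.T_const 1, fun _ => 1,
    fun _ => 1, One_one _ M, One_one _ M, fun q _ => by simp⟩

theorem Cov.restrict {D : X → Prop} (hD : B.Q D) (h : Cov B M (P.restrict hD) S Φ)
    (hS : ∀ q, P.pts q → S' q → D q.1 ∧ S q) : Cov B M P S' Φ := by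
  have h1 : Cov B M P (fun q => D q.1) (fun P' R => P' = P.restrict hD ∧ R = id) :=
    Cov.single (P.restrict hD) id (Ref.restrict M P hD) ⟨rfl, rfl⟩
      fun q hq h => ⟨q, (restrict_pts hD q).2 ⟨hq, h⟩, rfl⟩
  refine h1.bind (S' := S') ?_ fun q hq h => (hS q hq h).1
  rintro P' R hR ⟨rfl, rfl⟩
  exact h.mono (fun q hq h => (hS q ((restrict_pts hD q).1 hq).1 h).2) fun _ _ _ h => h

/-- Case distinction on the base. -/
theorem Cov.cases {D : X → Prop} (hD : B.Q D) (h₁ : Cov B M (P.restrict hD) S Φ)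
    (h₂ : Cov B M (P.restrict (B.compl hD)) S Φ) : Cov B M P S Φ := by
  classical
  exact Cov.union (S₁ := fun q => D q.1 ∧ S q) (S₂ := fun q => ¬ D q.1 ∧ S q)
    (h₁.restrict hD fun q hq h => h) (h₂.restrict (B.compl hD) fun q hq h => h)
    fun q hq h => by by_cases h' : D q.1 <;> simp [h', h]

end Chart

end

/-! ### Splitting annuli -/

section

theorem exists_eta (N L : ℕ) (hN : 1 ≤ N) (hL : N + 1 ≤ L) :
    ∃ η η₁ : Z → Z, IsAn (fun v : Fin 1 → Z => η₁ (v 0)) ∧ (∀ w, η w = 1 + p ^ L * η₁ w) ∧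
      (∀ w, η w ^ N = 1 + p ^ (L + 2 * N + 1) * w) ∧ (N = 1 → ∀ w, η w = 1 + p ^ (L + 3) * w) ∧
      ∀ s, ∃ w, 1 + p ^ (L + 2 * N + 1) * s = η w := by
  obtain ⟨ρ, hρ, h1, h2, h3⟩ := exists_root (p := p) N
  obtain ⟨ρ₁, hρ₁, h4⟩ := hρ.split 0
  have h5 : ∀ s, ρ s = s * ρ₁ ![s] := fun s => by
    have h0 : ρ 0 = 0 := zero_dvd_iff.1 (h1 0)
    have := h4 ![s]
    simpa [h0] using this
  obtain ⟨c, hc⟩ := cast_dvd_pow (p := p) N hN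
  have hlin : IsAn fun v : Fin 1 → Z => p ^ L * c ^ 2 * v 0 := (isAn_const _).mul (isAn_coord 0)
  have hη₁ : IsAn (fun v : Fin 1 → Z => p * N * c ^ 2 * v 0 * ρ₁ ![p ^ L * c ^ 2 * v 0]) :=
    ((isAn_const _).mul (isAn_coord 0)).mul
      (hρ₁.comp (G := fun i v => ![p ^ L * c ^ 2 * v 0] i) fun i => by fin_cases i; exact hlin)
  have hpow : ∀ w, (1 + p * N * ρ (p ^ L * c ^ 2 * w)) ^ N = 1 + p ^ (L + 2 * N + 1) * w := fun w => by
    rw [h3, pow_add, pow_add, pow_mul', hc]; ring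
  have hη : ∀ w, (1 : Z) + p * N * ρ (p ^ L * c ^ 2 * w) =
      1 + p ^ L * (p * N * c ^ 2 * w * ρ₁ ![p ^ L * c ^ 2 * w]) := fun w => by rw [h5]; ring
  refine ⟨fun w => 1 + p * N * ρ (p ^ L * c ^ 2 * w),
    fun w => p * N * c ^ 2 * w * ρ₁ ![p ^ L * c ^ 2 * w], hη₁, hη, hpow, ?_, ?_⟩
  · rintro rfl w
    have : c = p := by simpa using hc.symm
    dsimp only; rw [h2 rfl, this]; push_cast; ring
  · intro s
    obtain ⟨R, -, hR⟩ := one_add_pow_expand (p := p) N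
    obtain ⟨w, hw⟩ : ∃ w : Z, (1 + p ^ (L + 2 * N + 1) * s) ^ N = 1 + p ^ (L + 2 * N + 1) * w :=
      ⟨N * s + p ^ (L + 2 * N + 1) * s ^ 2 * R.eval (p ^ (L + 2 * N + 1) * s), by rw [hR]; ring⟩
    refine ⟨w, QK.pow_inj hN hL ((QK_one_add _ _).mono (by omega)) ?_ (hw.trans (hpow w).symm)⟩
    dsimp only; rw [hη]; exact QK_one_add _ _

variable {X : Type} {B : Base p X}

namespace Chart

theorem One.inv {M : ℕ} (hM : 1 ≤ M) {P : Chart B} {f : Pt p X → Z} (hf : P.One M f) :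
    ∃ g, P.One M g ∧ ∀ q, P.pts q → f q * g q = 1 := by
  obtain ⟨G, hG, h⟩ := hf
  obtain ⟨ι, hι, h'⟩ := exists_inv (p := p)
  refine ⟨fun q => 1 + p ^ M * (-1 * (G q * (1 + p * ι (p ^ (M - 1) * G q)))), ⟨_,
    (hG.mul ((P.O_const 1).add ((O.comp1 hι (hG.cmul _)).cmul _))).cmul _, fun q _ => rfl⟩,
    fun q hq => ?_⟩
  have h1 := h' (p ^ (M - 1) * G q)
  have h2 : (p : Z) * p ^ (M - 1) = p ^ M := by rw [← pow_succ']; congr 1; omega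
  rw [← mul_assoc, h2] at h1
  rw [h q hq]
  linear_combination (-(p : Z) ^ M * G q) * h1

variable (B) in
/-- The map `R` between charts is linear in `u` if `P'` is an annulus, and parametrizes a small
disc around a term if `P'` is a ball and the exponent of `P` is `1`. -/
def Lin (K' : ℕ) (P P' : Chart B) (R : Pt p X → Pt p X) : Prop :=
  (¬ P'.ball → P'.N = P.N ∧ ∃ b, B.T b ∧ ∀ q, P'.pts q → (R q).2.1 = b q.1 * q.2.1) ∧
  (P'.ball → P.N = 1 → ∃ b, B.T b ∧ ∃ K₂ ≥ K', ∀ q, P'.pts q →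
    (R q).2.1 = b q.1 * (1 + p ^ K₂ * q.2.1))

theorem Lin.refl (K' : ℕ) {P : Chart B} (hP : ¬ P.ball) : Lin B K' P P id :=
  ⟨fun _ => ⟨rfl, fun _ => 1, B.T_const 1, by simp⟩, fun h => absurd h hP⟩

theorem Lin.trans {M K' : ℕ} {P P' P'' : Chart B} {R R' : Pt p X → Pt p X} (h : Lin B K' P P' R)
    (hP' : ¬ P'.ball) (h' : Lin B K' P' P'' R') (hR' : Ref B M P' P'' R') :
    Lin B K' P P'' (fun q => R (R' q)) := by
  obtain ⟨hN, b, hb, h1⟩ := h.1 hP'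
  constructor
  · intro hP
    obtain ⟨hN', b', hb', h2⟩ := h'.1 hP
    refine ⟨hN'.trans hN, _, Base.T_mul hb hb', fun q hq => ?_⟩
    rw [h1 _ (hR'.maps q hq), h2 q hq, hR'.fst q hq, mul_assoc]
  · intro hP hN1
    obtain ⟨b', hb', K₂, hK₂, h2⟩ := h'.2 hP (hN.trans hN1)
    refine ⟨_, Base.T_mul hb hb', K₂, hK₂, fun q hq => ?_⟩
    rw [h1 _ (hR'.maps q hq), h2 q hq, hR'.fst q hq, mul_assoc]

theorem u_ne {P : Chart B} (hP : ¬ P.ball) {q : Pt p X} (hq : P.pts q) : q.2.1 ≠ 0 :=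
  (hq.2.2.2 hP).ne_zero P.hK

variable {M K' : ℕ} {P : Chart B}

/-- The sub-annulus of points with `u` divisible by `ρ`. -/
theorem exists_subU (M K' : ℕ) (hP : ¬ P.ball) {ρ : X → Z} (hρ : B.T ρ)
    (hρK : ∀ x, ρ x ≠ 0 → QK P.K (ρ x)) :
    Cov B M P (fun q => ρ q.1 ≠ 0 ∧ ρ q.1 ∣ q.2.1) (fun P' R => Lin B K' P P' R ∧ ¬ P'.ball ∧
      ∀ q, P'.pts q → ρ q.1 ≠ 0 ∧ (R q).2.1 = ρ q.1 * q.2.1) := by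
  let P' : Chart B := { P with
    C := fun x => P.C x ∧ ρ x ≠ 0 ∧ ρ x ∣ P.ε x
    hC := B.inter P.hC (B.inter (B.compl (B.zero hρ)) (Base.Q_dvd hρ P.hε))
    β := fun x => P.β x * ρ x ^ P.N
    hβ := Base.T_mul P.hβ (Base.T_pow hρ _)
    ε := fun x => dv (P.ε x) (ρ x)
    hε := B.div P.hε hρ }
  let R : Pt p X → Pt p X := fun q => (q.1, ρ q.1 * q.2.1, q.2.2)
  have hpts : ∀ q, P'.pts q → P.pts (R q) := by
    rintro ⟨x, u, v⟩ ⟨⟨h1, h2, h3⟩, h4, h5, h6⟩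
    refine ⟨h1, ?_, fun h => absurd h hP, fun _ => (hρK x h2).mul (h6 hP)⟩
    simp only [P', R] at h4 ⊢
    rw [mul_assoc, h4, dv_mul h2 h3]
  have hu : P'.O (fun q => ρ q.1 * q.2.1) := (O.term hρ).mul (O_u _)
  refine Cov.single P' R ⟨hpts, fun _ _ => rfl, fun q hq => ?_, hu, O_v _, fun _ => ⟨1,
    fun h => absurd h hP, ρ, fun _ => 1, hρ, B.T_const 1, fun _ => 1, fun _ => 1, One_one _ M,
    One_one _ M, fun q hq => by simp [R]⟩⟩ ⟨⟨fun _ => ⟨rfl, ρ, hρ, fun _ _ => rfl⟩,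
    fun h => absurd h hP⟩, hP, fun q hq => ⟨hq.1.2.1, rfl⟩⟩ ?_
  · simp only [t, P', R]; ring
  · rintro ⟨x, u, v⟩ ⟨h1, h2, h3, h4⟩ ⟨h5, u', hu'⟩
    simp only at h5 hu' h2 h4
    refine ⟨(x, u', v), ⟨⟨h1, h5, u' * v, ?_⟩, ?_, fun h => absurd h hP, fun _ => ?_⟩, ?_⟩
    · rw [← h2, hu']; ring
    · exact (dv_eq h5 (by rw [← h2, hu']; ring)).symm
    · exact QK.of_mul P.hK (hu' ▸ h4 hP) (hρK x h5)
    · simp [R, hu']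

/-- The sub-annulus of points with `u` dividing `σ`. -/
theorem exists_subV (M K' : ℕ) (hP : ¬ P.ball) {σ : X → Z} (hσ : B.T σ) :
    Cov B M P (fun q => σ q.1 ≠ 0 ∧ σ q.1 ∣ P.ε q.1 ∧ q.2.1 ∣ σ q.1)
      (fun P' R => Lin B K' P P' R ∧ ¬ P'.ball ∧
      ∀ q, P'.pts q → σ q.1 ≠ 0 ∧ (R q).2.1 * q.2.2 = σ q.1) := by
  let P' : Chart B := { P with
    C := fun x => P.C x ∧ σ x ≠ 0 ∧ σ x ∣ P.ε x
    hC := B.inter P.hC (B.inter (B.compl (B.zero hσ)) (Base.Q_dvd hσ P.hε))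
    ε := σ
    hε := hσ }
  let R : Pt p X → Pt p X := fun q => (q.1, q.2.1, dv (P.ε q.1) (σ q.1) * q.2.2)
  have hd : B.T (fun x => dv (P.ε x) (σ x)) := B.div P.hε hσ
  have hpts : ∀ q, P'.pts q → P.pts (R q) := by
    rintro ⟨x, u, v⟩ ⟨⟨h1, h2, h3⟩, h4, h5, h6⟩
    refine ⟨h1, ?_, fun h => absurd h hP, fun _ => h6 hP⟩
    simp only [P', R] at h4 ⊢
    have := dv_mul h2 h3
    linear_combination this + dv (P.ε x) (σ x) * h4
  have hv : P'.O (fun q => dv (P.ε q.1) (σ q.1) * q.2.2) := (O.term hd).mul (O_v _)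
  refine Cov.single P' R ⟨hpts, fun _ _ => rfl, fun q hq => rfl, O_u _, hv, fun _ => ⟨1,
    fun h => absurd h hP, fun _ => 1, _, B.T_const 1, hd, fun _ => 1, fun _ => 1, One_one _ M,
    One_one _ M, fun q hq => by simp [R]⟩⟩ ⟨⟨fun _ => ⟨rfl, fun _ => 1, B.T_const 1,
    fun _ _ => by simp [R]⟩, fun h => absurd h hP⟩, hP, fun q hq => ⟨hq.1.2.1, hq.2.1⟩⟩ ?_
  rintro ⟨x, u, v⟩ hq ⟨h5, h6, v', hv'⟩
  have hu0 := u_ne hP hq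
  obtain ⟨h1, h2, h3, h4⟩ := hq
  simp only at h5 hv' h2 h4 h6 hu0
  refine ⟨(x, u, v'), ⟨⟨h1, h5, h6⟩, hv'.symm, fun h => absurd h hP, h4⟩, ?_⟩
  simp only [R]
  congr 2
  apply mul_left_cancel₀ hu0
  have := dv_mul h5 h6
  linear_combination this - h2 - dv (P.ε x) (σ x) * hv'

/-- The set of points where `u` and `ρ` have the same valuation is a finite union of balls. -/
theorem exists_subBall (M K' : ℕ) (hM : 1 ≤ M) (hP : ¬ P.ball) {ρ : X → Z} (hρ : B.T ρ)
    (hρK : ∀ x, ρ x ≠ 0 → QK P.K (ρ x)) :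
    Cov B M P (fun q => ρ q.1 ≠ 0 ∧ ∃ w, IsUnit w ∧ q.2.1 = ρ q.1 * w)
      (fun P' R => Lin B K' P P' R ∧ P'.ball) := by
  let L := P.N + 1 + P.K + K' + M
  have hPK := P.hK
  obtain ⟨η, η₁, hη₁, h1, h2, h3, h4⟩ := exists_eta (p := p) P.N L P.hN (by simp only [L]; omega)
  let J := L + 2 * P.N + 1
  let ι := {μ : Z // μ ∈ Un p J ∧ QK P.K μ}
  have : Finite ι := Set.Finite.subset (Un p J).finite_toSet (fun μ h => h.1)
  let P' : ι → Chart B := fun lam =>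
    { C := fun x => P.C x ∧ ρ x ≠ 0 ∧ ρ x ∣ P.ε x
      hC := B.inter P.hC (B.inter (B.compl (B.zero hρ)) (Base.Q_dvd hρ P.hε))
      c := fun x => P.c x + P.β x * (lam.1 * ρ x) ^ P.N
      hc := Base.T_add P.hc (Base.T_mul P.hβ (Base.T_pow (Base.T_cmul _ hρ) _))
      β := fun x => P.β x * (lam.1 * ρ x) ^ P.N * p ^ J
      hβ := Base.T_mul (Base.T_mul P.hβ (Base.T_pow (Base.T_cmul _ hρ) _)) (B.T_const _)
      ε := fun _ => 0
      hε := B.T_const 0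
      N := 1
      K := 1
      ball := True
      hN := le_rfl
      hK := le_rfl
      hball := fun _ => rfl }
  have hη : ∀ lam, (P' lam).One L (fun q => η q.2.1) := fun lam =>
    ⟨_, O.comp1 hη₁ (O_u _), fun q _ => h1 _⟩
  choose θ hθ hηθ using fun lam => (hη lam).inv (by simp only [L]; omega)
  have hd : B.T (fun x => dv (P.ε x) (ρ x)) := B.div P.hε hρ
  let R : ι → Pt p X → Pt p X := fun lam q =>
    (q.1, lam.1 * ρ q.1 * η q.2.1, Ring.inverse lam.1 * dv (P.ε q.1) (ρ q.1) * θ lam q)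
  have hLM : M ≤ L := by simp only [L]; omega
  refine Cov.of_fintype P' R (fun lam => ⟨⟨?_, fun _ _ => rfl, ?_, ?_, ?_, fun _ => ?_⟩, ⟨?_, ?_⟩,
    trivial⟩) ?_
  · rintro ⟨x, u, v⟩ hq
    have hi := hηθ lam _ hq
    obtain ⟨⟨h5, h6, h7⟩, -⟩ := hq
    refine ⟨h5, ?_, fun h => absurd h hP, fun _ => ?_⟩
    · simp only [R] at hi ⊢
      have hl := Ring.mul_inverse_cancel _ (isUnit_of_mem_Un lam.2.1)
      have hd := dv_mul h6 h7
      calc lam.1 * ρ x * η u * (Ring.inverse lam.1 * dv (P.ε x) (ρ x) * θ lam (x, u, v))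
          = (lam.1 * Ring.inverse lam.1) * (ρ x * dv (P.ε x) (ρ x)) * (η u * θ lam (x, u, v)) := by
            ring
        _ = P.ε x := by rw [hl, hd, hi]; ring
    · refine (lam.2.2.mul (hρK x h6)).mul ?_
      rw [h1]; exact (QK_one_add _ _).mono (by simp only [L]; omega)
  · intro q hq
    simp only [t, P', R, J]
    rw [mul_pow, h2]; ring
  · exact (((B.T_const _ |> O.term).mul (O.term hρ))).mul (hη lam).O
  · exact (((B.T_const _ |> O.term).mul (O.term hd))).mul (hθ lam).O
  · exact ⟨0, fun _ => rfl, _, _, Base.T_cmul lam.1 hρ, Base.T_cmul (Ring.inverse lam.1) hd, _, _,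
      (hη lam).mono hLM, (hθ lam).mono hLM, fun q hq => by simp [R]⟩
  · intro h; exact absurd trivial h
  · intro _ hN1
    exact ⟨_, Base.T_cmul lam.1 hρ, L + 3, by simp only [L]; omega, fun q _ => by
      simp only [R, h3 hN1]⟩
  · rintro ⟨x, u, v⟩ hq ⟨h5, w, hw, h6⟩
    have hu0 := u_ne hP hq
    obtain ⟨h7, h8, -, h9⟩ := hq
    simp only at h5 h6 h8 h9 hu0
    obtain ⟨lam, hlam, s, hs⟩ := exists_Un (J := J) (by omega) hw
    obtain ⟨y, hy⟩ := h4 s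
    have hlamu := isUnit_of_mem_Un hlam
    have hwK : QK P.K w := QK.of_mul P.hK (h6 ▸ h9 hP) (hρK x h5)
    have hlamK : QK P.K lam := by
      refine QK.of_mul P.hK (x := 1 + (p : Z) ^ J * s) (by rw [mul_comm, ← hs]; exact hwK) ?_
      exact (QK_one_add _ _).mono (by simp only [J, L]; omega)
    have hq' : (P' ⟨lam, hlam, hlamK⟩).pts (x, y, 0) := by
      refine ⟨⟨h7, h5, w * v, ?_⟩, by simp [P'], fun _ => rfl, fun h => absurd trivial h⟩
      rw [← h8, h6]; ring
    refine ⟨⟨lam, hlam, hlamK⟩, (x, y, 0), hq', ?_⟩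
    have hm := (P' ⟨lam, hlam, hlamK⟩).pts
    have hu' : lam * ρ x * η y = u := by
      rw [h6, hs, ← hy]; ring
    simp only [R]
    rw [hu']
    congr 2
    apply mul_left_cancel₀ hu0
    rw [h8]
    have hi := hηθ ⟨lam, hlam, hlamK⟩ _ hq'
    have hl := Ring.mul_inverse_cancel _ hlamu
    have hd := dv_mul h5 hq'.1.2.2
    simp only at hi hd
    calc u * (Ring.inverse lam * dv (P.ε x) (ρ x) * θ ⟨lam, hlam, hlamK⟩ (x, y, 0))
        = (lam * Ring.inverse lam) * (ρ x * dv (P.ε x) (ρ x)) *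
          (η y * θ ⟨lam, hlam, hlamK⟩ (x, y, 0)) := by rw [← hu']; ring
      _ = P.ε x := by rw [hl, hd, hi]; ring

end Chart

end

/-! ### Comparing monomials on annuli -/

section

variable {X : Type} {B : Base p X}

theorem Base.Q_ne {f : X → Z} (hf : B.T f) : B.Q (fun x => f x ≠ 0) := B.compl (B.zero hf)

namespace Chart
variable {M K' : ℕ} {P : Chart B}

theorem cov_roots {Φ : Chart B → (Pt p X → Pt p X) → Prop} {f : X → Z} (hf : B.T f) {k : ℕ}
    (hk : 1 ≤ k) (S : Pt p X → Z → Prop)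
    (h : ∀ μ ρ, IsUnit μ → B.T ρ → (∀ x, ρ x ≠ 0 → QK P.K (ρ x) ∧ f x = μ * ρ x ^ k) →
      Cov B M P (fun q => ρ q.1 ≠ 0 ∧ S q (ρ q.1)) Φ) :
    Cov B M P (fun q => f q.1 ≠ 0 ∧ k ∣ (f q.1).valuation ∧
      ∀ y, y ≠ 0 → k * y.valuation = (f q.1).valuation → S q y) Φ := by
  let K := max P.K (k + 1)
  choose ρ hρ _ h1 h2 using fun μ : Z => Base.root_lemma (B := B) k hk K (le_max_right _ _) hf μ
  refine Cov.iUnion (ι := Un p (K + 2 * k + 1)) (fun μ => h μ.1 (ρ μ.1) (isUnit_of_mem_Un μ.2)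
    (hρ _) fun x hx => ⟨(h1 _ _ hx).1.mono (le_max_left _ _), (h1 _ _ hx).2
      (isUnit_of_mem_Un μ.2)⟩) ?_
  rintro q hq ⟨h3, h4, h5⟩
  obtain ⟨μ, hμ, y, hy, h⟩ := exists_root_of_dvd k hk K h3 h4
  have hy0 := hy.ne_zero (by omega)
  have e := h2 μ q.1 y (isUnit_of_mem_Un hμ) hy h
  refine ⟨⟨μ, hμ⟩, ?_⟩
  dsimp only
  rw [e]
  refine ⟨hy0, h5 _ hy0 ?_⟩
  rw [h, val_mul (isUnit_of_mem_Un hμ).ne_zero (pow_ne_zero _ hy0),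
    val_unit (isUnit_of_mem_Un hμ), PadicInt.valuation_pow, zero_add]

/-- `f = p ^ M * E * g` for an analytic function `E`. -/
def Le (P : Chart B) (M : ℕ) (f g : Pt p X → Z) : Prop :=
  ∃ E, P.O E ∧ ∀ q, P.pts q → f q = p ^ M * E q * g q

theorem pair_split_dvd {A D : X → Z} (hA : B.T A) (hD : B.T D) {k : ℕ} (hk : 1 ≤ k)
    (hP : ¬ P.ball) :
    Cov B M P (fun q => A q.1 ≠ 0 ∧ D q.1 ≠ 0 ∧ p ^ M * D q.1 ∣ A q.1 * q.2.1 ^ k)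
      (fun P' R => Lin B K' P P' R ∧ ¬ P'.ball ∧
        P'.Le M (fun q => A q.1 * (R q).2.1 ^ k) (fun q => D q.1)) := by
  have hMD := fun r : ℕ => Base.T_cmul ((p : Z) ^ r) hD
  refine Cov.union (S₁ := fun q => D q.1 ≠ 0 ∧ p ^ M * D q.1 ∣ A q.1)
    (S₂ := fun q => A q.1 ≠ 0 ∧ D q.1 ≠ 0 ∧ ¬ p ^ M * D q.1 ∣ A q.1 ∧
      p ^ M * D q.1 ∣ A q.1 * q.2.1 ^ k) ?_ ?_ ?_
  · refine Cov.restrict (B.inter (Base.Q_ne hD) (Base.Q_dvd (hMD M) hA)) (S := fun _ => True)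
      (Cov.refl ⟨Lin.refl K' hP, hP, _, (O.term (B.div hA (hMD M))).mul ((O_u _).pow k),
        fun q hq => ?_⟩) fun q hq h => ⟨h, trivial⟩
    have := dv_mul (mul_ne_zero (ppow_ne M) hq.1.2.1) hq.1.2.2
    simp only [id]
    linear_combination -q.2.1 ^ k * this
  · refine Cov.iUnion (ι := Fin k) (S := fun r q => (A q.1 ≠ 0 ∧ D q.1 ≠ 0 ∧
      A q.1 ∣ (p : Z) ^ (M + r) * D q.1) ∧ (dv ((p : Z) ^ (M + r) * D q.1) (A q.1) ≠ 0 ∧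
      k ∣ (dv ((p : Z) ^ (M + r) * D q.1) (A q.1)).valuation ∧ ∀ y, y ≠ 0 → k * y.valuation =
        (dv ((p : Z) ^ (M + r) * D q.1) (A q.1)).valuation → y ∣ q.2.1)) (fun r => ?_) ?_
    · refine Cov.restrict (B.inter (Base.Q_ne hA) (B.inter (Base.Q_ne hD)
        (Base.Q_dvd hA (hMD _)))) (cov_roots (B.div (hMD _) hA) hk (fun q y => y ∣ q.2.1) ?_)
        fun q hq h => h
      intro μ ρ hμ hρ h1
      refine (exists_subU (P := P.restrict _) M K' hP hρ fun x hx => (h1 x hx).1).mono (fun q hq h => h) ?_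
      rintro P' R hR ⟨h2, h3, h4⟩
      refine ⟨h2, h3, _, (O_const _ (Ring.inverse μ * (p : Z) ^ (r : ℕ))).mul ((O_u _).pow k),
        fun q hq => ?_⟩
      obtain ⟨h5, h6⟩ := h4 q hq
      have h7 := (h1 _ h5).2
      have h8 := (hR.maps q hq).1.2
      dsimp only at h7 h8 ⊢
      rw [hR.fst q hq] at h8
      have h9 := dv_mul h8.1 h8.2.2
      have hl := Ring.mul_inverse_cancel _ hμ
      rw [h6, mul_pow]
      rw [h7] at h9
      calc A q.1 * (ρ q.1 ^ k * q.2.1 ^ k) =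
          (μ * Ring.inverse μ) * (A q.1 * (ρ q.1 ^ k * q.2.1 ^ k)) := by rw [hl, one_mul]
        _ = _ := by linear_combination Ring.inverse μ * q.2.1 ^ k * h9
    · rintro q hq ⟨h1, h2, h3, h4⟩
      have hu := u_ne hP hq
      have hpD : ∀ r, (p : Z) ^ r * D q.1 ≠ 0 := fun r => mul_ne_zero (ppow_ne _) h2
      have hv : ∀ r, ((p : Z) ^ r * D q.1).valuation = r + (D q.1).valuation := fun r => by
        rw [val_mul (ppow_ne _) h2, val_ppow]
      rw [dvd_iff_val (hpD _) h1, hv] at h3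
      rw [dvd_iff_val (hpD _) (mul_ne_zero h1 (pow_ne_zero _ hu)), hv,
        val_mul h1 (pow_ne_zero _ hu), PadicInt.valuation_pow] at h4
      set a := (A q.1).valuation
      set d := (D q.1).valuation
      obtain ⟨r, hr, c, hc⟩ : ∃ r < k, ∃ c, M + r + d - a = k * c := by
        refine ⟨(k - (M + d - a) % k) % k, Nat.mod_lt _ hk, ?_⟩
        rw [show M + (k - (M + d - a) % k) % k + d - a = (M + d - a) + (k - (M + d - a) % k) % k by
          omega]
        apply Nat.dvd_of_mod_eq_zero
        have := Nat.mod_lt (M + d - a) hk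
        rcases Nat.eq_zero_or_pos ((M + d - a) % k) with h | h
        · rw [h]; simp [h]
        · rw [Nat.mod_eq_of_lt (a := k - (M + d - a) % k) (by omega), Nat.add_mod,
            Nat.mod_eq_of_lt (a := k - (M + d - a) % k) (by omega),
            Nat.add_sub_cancel' (by omega), Nat.mod_self]
      have h5 : A q.1 ∣ (p : Z) ^ (M + r) * D q.1 := by
        rw [dvd_iff_val h1 (hpD _), hv]; omega
      have h6 := dv_mul h1 h5
      have h7 : dv ((p : Z) ^ (M + r) * D q.1) (A q.1) ≠ 0 := fun h => hpD (M + r) (by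
        rw [← h6, h, mul_zero])
      have h8 := congrArg PadicInt.valuation h6
      rw [val_mul h1 h7, hv] at h8
      have h9 : (dv ((p : Z) ^ (M + r) * D q.1) (A q.1)).valuation = k * c := by omega
      refine ⟨⟨r, hr⟩, ⟨h1, h2, h5⟩, h7, ⟨c, h9⟩, fun y hy0 hy => ?_⟩
      rw [dvd_iff_val hy0 hu]
      rw [h9] at hy
      have : y.valuation = c := Nat.eq_of_mul_eq_mul_left hk hy
      rw [this]
      by_contra hlt
      have : k * (q.2.1.valuation + 1) ≤ k * c := Nat.mul_le_mul_left _ (by omega)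
      rw [mul_add] at this
      omega
  · rintro q hq ⟨h1, h2, h3⟩
    by_cases h : p ^ M * D q.1 ∣ A q.1
    · exact Or.inl ⟨h2, h⟩
    · exact Or.inr ⟨h1, h2, h, h3⟩

theorem pair_split_dvd' {A D : X → Z} (hA : B.T A) (hD : B.T D) {k : ℕ} (hk : 1 ≤ k)
    (hP : ¬ P.ball) :
    Cov B M P (fun q => A q.1 ≠ 0 ∧ D q.1 ≠ 0 ∧ p ^ M * (A q.1 * q.2.1 ^ k) ∣ D q.1)
      (fun P' R => Lin B K' P P' R ∧ ¬ P'.ball ∧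
        P'.Le M (fun q => D q.1) (fun q => A q.1 * (R q).2.1 ^ k)) := by
  have hMA := fun r : ℕ => Base.T_cmul ((p : Z) ^ r) hA
  have hAε : B.T (fun x => p ^ M * A x * P.ε x ^ k) := Base.T_mul (hMA M) (Base.T_pow P.hε k)
  refine Cov.union (S₁ := fun q => A q.1 ≠ 0 ∧ P.ε q.1 ≠ 0 ∧ p ^ M * A q.1 * P.ε q.1 ^ k ∣ D q.1)
    (S₂ := fun q => A q.1 ≠ 0 ∧ D q.1 ≠ 0 ∧ ¬ (P.ε q.1 ≠ 0 ∧ p ^ M * A q.1 * P.ε q.1 ^ k ∣ D q.1) ∧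
      p ^ M * (A q.1 * q.2.1 ^ k) ∣ D q.1) ?_ ?_ ?_
  · refine Cov.restrict (B.inter (Base.Q_ne hA) (B.inter (Base.Q_ne P.hε) (Base.Q_dvd hAε hD)))
      (S := fun _ => True)
      (Cov.refl ⟨Lin.refl K' hP, hP, _, (O.term (B.div hD hAε)).mul ((O_v _).pow k),
        fun q hq => ?_⟩) fun q hq h => ⟨h, trivial⟩
    have := dv_mul (mul_ne_zero (mul_ne_zero (ppow_ne M) hq.1.2.1) (pow_ne_zero _ hq.1.2.2.1))
      hq.1.2.2.2
    have h2 : q.2.1 ^ k * q.2.2 ^ k = P.ε q.1 ^ k := by rw [← mul_pow]; exact congrArg (· ^ k) hq.2.1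
    simp only [id]
    linear_combination -this - (p : Z) ^ M * A q.1 *
      dv (D q.1) ((p : Z) ^ M * A q.1 * P.ε q.1 ^ k) * h2
  · refine Cov.iUnion (ι := Fin k) (S := fun r q => (A q.1 ≠ 0 ∧ D q.1 ≠ 0 ∧
      p ^ (M + r) * A q.1 ∣ D q.1) ∧ (dv (D q.1) ((p : Z) ^ (M + r) * A q.1) ≠ 0 ∧
      k ∣ (dv (D q.1) ((p : Z) ^ (M + r) * A q.1)).valuation ∧ ∀ y, y ≠ 0 → k * y.valuation =
        (dv (D q.1) ((p : Z) ^ (M + r) * A q.1)).valuation → y ∣ P.ε q.1 ∧ q.2.1 ∣ y)) (fun r => ?_) ?_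
    · refine Cov.restrict (B.inter (Base.Q_ne hA) (B.inter (Base.Q_ne hD)
        (Base.Q_dvd (hMA _) hD))) (cov_roots (B.div hD (hMA _)) hk
          (fun q y => y ∣ P.ε q.1 ∧ q.2.1 ∣ y) ?_) fun q hq h => h
      intro μ ρ hμ hρ h1
      refine (exists_subV (P := P.restrict _) M K' hP hρ).mono (fun q hq h => h) ?_
      rintro P' R hR ⟨h2, h3, h4⟩
      refine ⟨h2, h3, _, (O_const _ (μ * (p : Z) ^ (r : ℕ))).mul ((O_v _).pow k),
        fun q hq => ?_⟩
      obtain ⟨h5, h6⟩ := h4 q hq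
      have h7 := (h1 _ h5).2
      have h8 := (hR.maps q hq).1.2
      dsimp only at h7 h8 ⊢
      rw [hR.fst q hq] at h8
      have h9 := dv_mul (mul_ne_zero (ppow_ne _) h8.1) h8.2.2
      rw [h7, ← h6] at h9
      rw [← h9]; ring
    · rintro q hq ⟨h1, h2, h3, h4⟩
      have hu := u_ne hP hq
      have hAu := mul_ne_zero h1 (pow_ne_zero k hu)
      have hpA : ∀ r, (p : Z) ^ r * A q.1 ≠ 0 := fun r => mul_ne_zero (ppow_ne _) h1
      have hv : ∀ r, ((p : Z) ^ r * A q.1).valuation = r + (A q.1).valuation := fun r => by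
        rw [val_mul (ppow_ne _) h1, val_ppow]
      rw [dvd_iff_val (mul_ne_zero (ppow_ne _) hAu) h2, val_mul (ppow_ne _) hAu, val_ppow,
        val_mul h1 (pow_ne_zero _ hu), PadicInt.valuation_pow] at h4
      have h3' : P.ε q.1 ≠ 0 → (D q.1).valuation < M + (A q.1).valuation + k * (P.ε q.1).valuation := by
        intro h0
        have h3 : ¬ _ := fun h => h3 ⟨h0, h⟩
        rw [dvd_iff_val (mul_ne_zero (hpA _) (pow_ne_zero _ h0)) h2,
          val_mul (hpA _) (pow_ne_zero _ h0), hv, PadicInt.valuation_pow] at h3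
        omega
      set a := (A q.1).valuation
      set d := (D q.1).valuation
      obtain ⟨r, hr, c, hc, hle⟩ : ∃ r < k, ∃ c, d = M + a + r + k * c ∧ k * c + k > d - M - a := by
        refine ⟨(d - M - a) % k, Nat.mod_lt _ hk, (d - M - a) / k, ?_, ?_⟩
        · have := Nat.mod_add_div (d - M - a) k
          omega
        · have := Nat.mod_add_div (d - M - a) k
          have := Nat.mod_lt (d - M - a) hk
          omega
      have h5 : p ^ (M + r) * A q.1 ∣ D q.1 := by
        rw [dvd_iff_val (hpA _) h2, hv]; omega
      have h6 := dv_mul (hpA _) h5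
      have h7 : dv (D q.1) ((p : Z) ^ (M + r) * A q.1) ≠ 0 := fun h => h2 (by
        rw [← h6, h, mul_zero])
      have h8 := congrArg PadicInt.valuation h6
      rw [val_mul (hpA _) h7, hv] at h8
      have h9 : (dv (D q.1) ((p : Z) ^ (M + r) * A q.1)).valuation = k * c := by omega
      refine ⟨⟨r, hr⟩, ⟨h1, h2, h5⟩, h7, ⟨c, h9⟩, fun y hy0 hy => ?_⟩
      rw [h9] at hy
      have hyc : y.valuation = c := Nat.eq_of_mul_eq_mul_left hk hy
      constructor
      · by_cases h0 : P.ε q.1 = 0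
        · rw [h0]; exact dvd_zero _
        · rw [dvd_iff_val hy0 h0, hyc]
          have := h3' h0
          by_contra hlt
          have : k * ((P.ε q.1).valuation + 1) ≤ k * c := Nat.mul_le_mul_left _ (by omega)
          rw [mul_add] at this
          omega
      · rw [dvd_iff_val hu hy0, hyc]
        by_contra hlt
        have : k * (c + 1) ≤ k * q.2.1.valuation := Nat.mul_le_mul_left _ (by omega)
        rw [mul_add] at this
        omega
  · rintro q hq ⟨h1, h2, h3⟩
    by_cases h : P.ε q.1 ≠ 0 ∧ p ^ M * A q.1 * P.ε q.1 ^ k ∣ D q.1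
    · exact Or.inl ⟨h1, h⟩
    · exact Or.inr ⟨h1, h2, h, h3⟩

/-- After splitting an annulus, the monomials `A * u ^ k` and `D` are comparable, away from
finitely many balls. -/
theorem pair_split (hM : 1 ≤ M) {A D : X → Z} (hA : B.T A) (hD : B.T D) {k : ℕ} (hk : 1 ≤ k)
    (hP : ¬ P.ball) :
    Cov B M P (fun _ => True)
      (fun P' R => Lin B K' P P' R ∧ (P'.ball ∨
        P'.Le M (fun q => A q.1 * (R q).2.1 ^ k) (fun q => D q.1) ∨
        P'.Le M (fun q => D q.1) (fun q => A q.1 * (R q).2.1 ^ k))) := by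
  refine Cov.cases (B.zero hA) ?_ (Cov.cases (B.zero hD) ?_ ?_)
  · refine Cov.refl ⟨Lin.refl K' hP, Or.inr (Or.inl ⟨_, O_const _ 0, fun q hq => ?_⟩)⟩
    simp [hq.1.2]
  · refine Cov.refl ⟨Lin.refl K' hP, Or.inr (Or.inr ⟨_, O_const _ 0, fun q hq => ?_⟩)⟩
    simp [hq.1.2]
  have hb : ¬ ((P.restrict (B.compl (B.zero hA))).restrict (B.compl (B.zero hD))).ball := hP
  have hQ : ∀ q, ((P.restrict (B.compl (B.zero hA))).restrict (B.compl (B.zero hD))).pts q →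
    A q.1 ≠ 0 ∧ D q.1 ≠ 0 := fun q hq => ⟨hq.1.1.2, hq.1.2⟩
  have hL : ∀ P' R, Lin B K' ((P.restrict (B.compl (B.zero hA))).restrict (B.compl (B.zero hD))) P' R
    → Lin B K' P P' R := fun _ _ h => h
  generalize (P.restrict (B.compl (B.zero hA))).restrict (B.compl (B.zero hD)) = P₁ at hb hQ hL ⊢
  have h1 := pair_split_dvd (M := M) (K' := K') hA hD hk hb
  have h2 := pair_split_dvd' (M := M) (K' := K') hA hD hk hb
  have h3 : ∀ e : ℕ, Cov B M P₁ (fun q => dv ((p : Z) ^ e * D q.1) ((p : Z) ^ M * A q.1) ≠ 0 ∧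
      k ∣ (dv ((p : Z) ^ e * D q.1) ((p : Z) ^ M * A q.1)).valuation ∧
      ∀ y, y ≠ 0 → k * y.valuation = (dv ((p : Z) ^ e * D q.1) ((p : Z) ^ M * A q.1)).valuation →
        ∃ w, IsUnit w ∧ q.2.1 = y * w) (fun P' R => Lin B K' P₁ P' R ∧ P'.ball) := fun e =>
    cov_roots (B.div (Base.T_cmul _ hD) (Base.T_cmul _ hA)) hk
      (fun q y => ∃ w, IsUnit w ∧ q.2.1 = y * w)
      fun μ ρ hμ hρ h => exists_subBall M K' hM hb hρ fun x hx => (h x hx).1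
  refine Cov.union (S₁ := fun q => p ^ M * D q.1 ∣ A q.1 * q.2.1 ^ k)
    (S₂ := fun q => ¬ p ^ M * D q.1 ∣ A q.1 * q.2.1 ^ k) (h1.mono (fun q hq h => ⟨(hQ q hq).1,
    (hQ q hq).2, h⟩) fun P' R hR h => ⟨hL _ _ h.1, Or.inr (Or.inl h.2.2)⟩) ?_
    (fun q hq _ => em _)
  refine Cov.union (S₁ := fun q => p ^ M * (A q.1 * q.2.1 ^ k) ∣ D q.1)
    (S₂ := fun q => ¬ p ^ M * (A q.1 * q.2.1 ^ k) ∣ D q.1 ∧ ¬ p ^ M * D q.1 ∣ A q.1 * q.2.1 ^ k)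
    (h2.mono (fun q hq h => ⟨(hQ q hq).1,
    (hQ q hq).2, h⟩) fun P' R hR h => ⟨hL _ _ h.1, Or.inr (Or.inr h.2.2)⟩) ?_
    (fun q hq h => (em _).imp_right fun h' => ⟨h', h⟩)
  refine Cov.iUnion (ι := Fin (2 * M)) (fun e => (h3 e).mono (fun q hq h => h)
    fun P' R hR h => ⟨hL _ _ h.1, Or.inl h.2⟩) ?_
  rintro q hq ⟨h4, h5⟩
  obtain ⟨hA0, hD0⟩ := hQ q hq
  have hu := u_ne hb hq
  have hAu := mul_ne_zero hA0 (pow_ne_zero k hu)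
  rw [dvd_iff_val (mul_ne_zero (ppow_ne _) hAu) hD0, val_mul (ppow_ne _) hAu, val_ppow,
        val_mul hA0 (pow_ne_zero _ hu), PadicInt.valuation_pow] at h4
  rw [dvd_iff_val (mul_ne_zero (ppow_ne _) hD0) hAu, val_mul (ppow_ne _) hD0, val_ppow,
        val_mul hA0 (pow_ne_zero _ hu), PadicInt.valuation_pow] at h5
  set a := (A q.1).valuation
  set d := (D q.1).valuation
  obtain ⟨e, he, he'⟩ : ∃ e < 2 * M, e + d = M + a + k * q.2.1.valuation :=
    ⟨M + a + k * q.2.1.valuation - d, by omega, by omega⟩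
  have hpA : (p : Z) ^ M * A q.1 ≠ 0 := mul_ne_zero (ppow_ne _) hA0
  have hpD : (p : Z) ^ e * D q.1 ≠ 0 := mul_ne_zero (ppow_ne _) hD0
  have h6 : (p : Z) ^ M * A q.1 ∣ p ^ e * D q.1 := by
    rw [dvd_iff_val hpA hpD, val_mul (ppow_ne _) hD0, val_mul (ppow_ne _) hA0, val_ppow, val_ppow]
    omega
  have h7 := dv_mul hpA h6
  have h8 : dv ((p : Z) ^ e * D q.1) ((p : Z) ^ M * A q.1) ≠ 0 := fun h => hpD (by rw [← h7, h, mul_zero])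
  have h9 := congrArg PadicInt.valuation h7
  rw [val_mul hpA h8, val_mul (ppow_ne _) hD0, val_mul (ppow_ne _) hA0, val_ppow, val_ppow] at h9
  have h10 : (dv ((p : Z) ^ e * D q.1) ((p : Z) ^ M * A q.1)).valuation = k * q.2.1.valuation := by omega
  refine ⟨⟨e, he⟩, h8, ⟨_, h10⟩, fun y hy0 hy => ?_⟩
  rw [h10] at hy
  have hy := Nat.eq_of_mul_eq_mul_left hk hy
  obtain ⟨w, hw⟩ := (dvd_iff_val hy0 hu).2 hy.le
  have hw0 : w ≠ 0 := fun h => hu (by rw [hw, h, mul_zero])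
  refine ⟨w, unit_of_val hw0 ?_, hw⟩
  have := congrArg PadicInt.valuation hw
  rw [val_mul hy0 hw0] at this
  omega

end Chart

end

/-! ### Laurent monomials -/

section

variable {X : Type} {B : Base p X}

namespace Chart
variable {M K' : ℕ} {P : Chart B}

/-- A Laurent monomial of degree `d` in `u`. -/
def Lau (P : Chart B) (d : ℤ) (m : Pt p X → Z) : Prop :=
  ∃ (n k : ℕ) (A D : X → Z), B.T A ∧ B.T D ∧ (k : ℤ) - n = d ∧
    ∀ q, P.pts q → D q.1 ≠ 0 ∧ m q * D q.1 * q.2.1 ^ n = A q.1 * q.2.1 ^ k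

theorem Lau.u {a : X → Z} (ha : B.T a) (i : ℕ) : P.Lau i (fun q => a q.1 * q.2.1 ^ i) :=
  ⟨0, i, a, fun _ => 1, ha, B.T_const 1, by simp, fun q _ => by simp⟩

theorem Lau.v {b : X → Z} (hb : B.T b) (j : ℕ) : P.Lau (-j) (fun q => b q.1 * q.2.2 ^ j) :=
  ⟨j, 0, fun x => b x * P.ε x ^ j, fun _ => 1, Base.T_mul hb (Base.T_pow P.hε j), B.T_const 1,
    by simp, fun q hq => by
      refine ⟨one_ne_zero, ?_⟩
      have h := hq.2.1
      dsimp only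
      rw [← h]; ring⟩

theorem Lau.ref {d : ℤ} {m : Pt p X → Z} (h : P.Lau d m) {P' : Chart B} {R : Pt p X → Pt p X}
    (hR : Ref B M P P' R) (hL : Lin B K' P P' R) (hP : ¬ P.ball) (hP' : ¬ P'.ball) :
    P'.Lau d (fun q => m (R q)) := by
  obtain ⟨n, k, A, D, hA, hD, hd, h⟩ := h
  obtain ⟨b, hb, h1⟩ := (hL.1 hP').2
  refine ⟨n, k, fun x => A x * b x ^ k, fun x => D x * b x ^ n, Base.T_mul hA (Base.T_pow hb k),
    Base.T_mul hD (Base.T_pow hb n), hd, fun q hq => ?_⟩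
  obtain ⟨h2, h3⟩ := h _ (hR.maps q hq)
  have hu := u_ne hP (hR.maps q hq)
  rw [h1 q hq] at hu h3
  rw [hR.fst q hq] at h2 h3
  refine ⟨mul_ne_zero h2 (pow_ne_zero _ (left_ne_zero_of_mul hu)), ?_⟩
  dsimp only
  rw [mul_pow, mul_pow] at h3
  linear_combination h3

theorem Le.ref {M' : ℕ} {f g : Pt p X → Z} (h : P.Le M f g) {P' : Chart B} {R : Pt p X → Pt p X}
    (hR : Ref B M' P P' R) : P'.Le M (fun q => f (R q)) (fun q => g (R q)) := by
  obtain ⟨E, hE, h⟩ := h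
  exact ⟨_, hE.ref hR, fun q hq => h _ (hR.maps q hq)⟩

theorem Le.trans {f g h : Pt p X → Z} (h1 : P.Le M f g) (h2 : P.Le M g h) : P.Le M f h := by
  obtain ⟨E, hE, h1⟩ := h1
  obtain ⟨F, hF, h2⟩ := h2
  refine ⟨_, (hE.mul hF).cmul (p ^ M), fun q hq => ?_⟩
  rw [h1 q hq, h2 q hq]; ring

theorem lau_pair (hM : 1 ≤ M) (hP : ¬ P.ball) {d₁ d₂ : ℤ} (hd : d₁ ≠ d₂) {m₁ m₂ : Pt p X → Z}
    (h₁ : P.Lau d₁ m₁) (h₂ : P.Lau d₂ m₂) :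
    Cov B M P (fun _ => True) (fun P' R => Lin B K' P P' R ∧ (P'.ball ∨
      P'.Le M (fun q => m₁ (R q)) (fun q => m₂ (R q)) ∨
      P'.Le M (fun q => m₂ (R q)) (fun q => m₁ (R q)))) := by
  wlog h : d₂ < d₁ generalizing d₁ d₂ m₁ m₂
  · refine (this hd.symm h₂ h₁ (by omega)).mono (fun q hq h => h) fun P' R hR h => ⟨h.1, ?_⟩
    have := h.2; tauto
  obtain ⟨n₁, k₁, A₁, D₁, hA₁, hD₁, hd₁, h₁⟩ := h₁
  obtain ⟨n₂, k₂, A₂, D₂, hA₂, hD₂, hd₂, h₂⟩ := h₂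
  obtain ⟨k, hk, hk'⟩ : ∃ k : ℕ, 1 ≤ k ∧ k₁ + n₂ = k + (k₂ + n₁) :=
    ⟨k₁ + n₂ - (k₂ + n₁), by omega, by omega⟩
  refine (pair_split (K' := K') hM (Base.T_mul hA₁ hD₂) (Base.T_mul hA₂ hD₁) hk hP).mono
    (fun q hq h => h) fun P' R hR h => ⟨h.1, h.2.imp_right fun h => ?_⟩
  have key : ∀ q, P'.pts q → D₁ q.1 ≠ 0 ∧ D₂ q.1 ≠ 0 ∧ (R q).2.1 ≠ 0 ∧
      m₁ (R q) * D₁ q.1 * (R q).2.1 ^ n₁ = A₁ q.1 * (R q).2.1 ^ k₁ ∧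
      m₂ (R q) * D₂ q.1 * (R q).2.1 ^ n₂ = A₂ q.1 * (R q).2.1 ^ k₂ := fun q hq => by
    have e1 := h₁ _ (hR.maps q hq)
    have e2 := h₂ _ (hR.maps q hq)
    rw [hR.fst q hq] at e1 e2
    exact ⟨e1.1, e2.1, u_ne hP (hR.maps q hq), e1.2, e2.2⟩
  refine h.imp ?_ ?_
  · rintro ⟨E, hE, h⟩
    refine ⟨E, hE, fun q hq => ?_⟩
    obtain ⟨hD1, hD2, hu, e1, e2⟩ := key q hq
    have := h q hq
    dsimp only at this ⊢
    apply mul_right_cancel₀ (mul_ne_zero (mul_ne_zero hD1 hD2) (pow_ne_zero (n₁ + n₂) hu))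
    generalize (R q).2.1 = u at *
    have e3 : u ^ k₁ * u ^ n₂ = u ^ k * (u ^ k₂ * u ^ n₁) := by rw [← pow_add, hk']; ring
    rw [pow_add]
    linear_combination D₂ q.1 * u ^ n₂ * e1 + A₁ q.1 * D₂ q.1 * e3 + (u ^ k₂ * u ^ n₁) * this -
      p ^ M * E q * D₁ q.1 * u ^ n₁ * e2
  · rintro ⟨E, hE, h⟩
    refine ⟨E, hE, fun q hq => ?_⟩
    obtain ⟨hD1, hD2, hu, e1, e2⟩ := key q hq
    have := h q hq
    dsimp only at this ⊢
    apply mul_right_cancel₀ (mul_ne_zero (mul_ne_zero hD1 hD2) (pow_ne_zero (n₁ + n₂) hu))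
    generalize (R q).2.1 = u at *
    have e3 : u ^ k₁ * u ^ n₂ = u ^ k * (u ^ k₂ * u ^ n₁) := by rw [← pow_add, hk']; ring
    rw [pow_add]
    linear_combination D₁ q.1 * u ^ n₁ * e2 + (u ^ k₂ * u ^ n₁) * this -
      p ^ M * E q * D₂ q.1 * u ^ n₂ * e1 - p ^ M * E q * A₁ q.1 * D₂ q.1 * e3

/-- Finitely many Laurent monomials of distinct degrees: after splitting an annulus one of them
dominates all others, away from finitely many balls. -/
theorem multi_split (hM : 1 ≤ M) (hP : ¬ P.ball) {ι : Type} (s : Finset ι) (hs : s.Nonempty)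
    (d : ι → ℤ) (hd : Set.InjOn d s) (m : ι → Pt p X → Z) (hm : ∀ i ∈ s, P.Lau (d i) (m i)) :
    Cov B M P (fun _ => True) (fun P' R => Lin B K' P P' R ∧ (P'.ball ∨
      ∃ i₀ ∈ s, ∀ i ∈ s, i ≠ i₀ → P'.Le M (fun q => m i (R q)) (fun q => m i₀ (R q)))) := by
  classical
  induction hs using Finset.Nonempty.cons_induction with
  | singleton a =>
    exact Cov.refl ⟨Lin.refl K' hP, Or.inr ⟨a, by simp, fun i hi h => by simp_all⟩⟩
  | cons a s ha hs ih =>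
    refine (ih (hd.mono (by simp)) fun i hi => hm i (by simp [hi])).bind ?_
    rintro P' R hR ⟨h1, h2⟩
    by_cases hP' : P'.ball
    · exact Cov.refl ⟨h1, Or.inl hP'⟩
    obtain ⟨i₀, hi₀, h2⟩ := h2.resolve_left hP'
    have hne : a ≠ i₀ := fun h => ha (h ▸ hi₀)
    refine (lau_pair (K' := K') hM hP' (fun h => hne (hd (by simp) (by simp [hi₀]) h))
      ((hm a (by simp)).ref hR h1 hP hP') ((hm i₀ (by simp [hi₀])).ref hR h1 hP hP')).mono
      (fun q hq h => h) ?_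
    rintro P'' R' hR' ⟨h3, h4⟩
    refine ⟨h1.trans hP' h3 hR', h4.imp_right ?_⟩
    rintro (h4 | h4)
    · refine ⟨i₀, by simp [hi₀], fun i hi hne => ?_⟩
      rcases Finset.mem_cons.1 hi with rfl | hi
      · exact h4
      · exact (h2 i hi hne).ref hR'
    · refine ⟨a, by simp, fun i hi hne => ?_⟩
      have hi := (Finset.mem_cons.1 hi).resolve_left hne
      by_cases h : i = i₀
      · subst h; exact h4
      · exact ((h2 i hi h).ref hR').trans h4

end Chart

end

section

variable {X : Type} {B : Base p X}

/-! ### Preparation on balls -/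

theorem dv_mul' {a b : Z} (h : b ∣ a) : b * dv a b = a := by
  by_cases hb : b = 0
  · subst hb; rw [zero_mul]; exact (zero_dvd_iff.1 h).symm
  · exact dv_mul hb h

section Tn
variable {σ : Type}

theorem Tn.const (c : Z) : Tn B σ (fun _ _ => c) := Tn.term (B.T_const c)

theorem Tn.add {f g : X → (σ → Z) → Z} (hf : Tn B σ f) (hg : Tn B σ g) :
    Tn B σ (fun x w => f x w + g x w) := by
  have := Tn.comp (κ := Fin 2) ((isAn_coord (p := p) 0).add (isAn_coord 1)) (g := ![f, g])
    (fun i => by fin_cases i <;> assumption)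
  simpa using this

theorem Tn.mul {f g : X → (σ → Z) → Z} (hf : Tn B σ f) (hg : Tn B σ g) :
    Tn B σ (fun x w => f x w * g x w) := by
  have := Tn.comp (κ := Fin 2) ((isAn_coord (p := p) 0).mul (isAn_coord 1)) (g := ![f, g])
    (fun i => by fin_cases i <;> assumption)
  simpa using this

theorem Tn.cmul (c : Z) {f : X → (σ → Z) → Z} (hf : Tn B σ f) : Tn B σ (fun x w => c * f x w) :=
  (Tn.const c).mul hf

theorem Tn.pow {f : X → (σ → Z) → Z} (hf : Tn B σ f) (n : ℕ) :
    Tn B σ (fun x w => f x w ^ n) := by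
  have := Tn.comp (κ := Fin 1) ((isAn_coord (p := p) 0).pow n) (g := ![f])
    (fun i => by fin_cases i; assumption)
  simpa using this

theorem Tn.sum {τ : Type} (s : Finset τ) {F : τ → X → (σ → Z) → Z}
    (hF : ∀ i ∈ s, Tn B σ (F i)) : Tn B σ (fun x w => ∑ i ∈ s, F i x w) := by
  classical
  induction s using Finset.induction_on with
  | empty => simpa using Tn.const 0
  | insert a s ha ih =>
    simp only [sum_insert ha]
    exact (hF a (by simp)).add (ih fun i hi => hF i (by simp [hi]))

theorem Tn.eval [Finite σ] {g : X → (σ → Z) → Z} (hg : Tn B σ g) {h : σ → X → Z}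
    (hh : ∀ i, B.T (h i)) : B.T (fun x => g x (fun i => h i x)) := by
  obtain ⟨κ, _, z, H, hz, hH, e⟩ := hg
  have := B.comp hH (f := Sum.elim z h) (fun i => by
    rcases i with i | i
    · exact hz i
    · exact hh i)
  refine (congrArg B.T (funext fun x => ?_)).mp this
  rw [e]; congr 1; funext i; rcases i with i | i <;> rfl

end Tn

variable (B) in
/-- Families of analytic functions of one variable. -/
def T1 (F : X → Z → Z) : Prop := Tn B (Fin 1) (fun x w => F x (w 0))

variable (B) in
/-- Families of analytic functions of two variables. -/
def T2 (F : X → Z → Z → Z) : Prop := Tn B (Fin 2) (fun x w => F x (w 0) (w 1))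

theorem T1.subst {F : X → Z → Z} (hF : T1 B F) {σ : Type} {h : X → (σ → Z) → Z} (hh : Tn B σ h) :
    Tn B σ (fun x w => F x (h x w)) :=
  Tn.subst (σ := Fin 1) hF (h := fun _ => h) (fun _ => hh)

theorem T1.eval {F : X → Z → Z} (hF : T1 B F) {s : X → Z} (hs : B.T s) : B.T (fun x => F x (s x)) :=
  Tn.eval (σ := Fin 1) hF (h := fun _ => s) (fun _ => hs)

theorem T2.subst {F : X → Z → Z → Z} (hF : T2 B F) {σ : Type} {h h' : X → (σ → Z) → Z}
    (hh : Tn B σ h) (hh' : Tn B σ h') : Tn B σ (fun x w => F x (h x w) (h' x w)) :=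
  Tn.subst (σ := Fin 2) hF (h := ![h, h']) (fun i => by fin_cases i <;> assumption)

theorem T2.taylor {F : X → Z → Z → Z} (hF : T2 B F) (n : ℕ) : ∃ (g : ℕ → X → Z → Z)
    (F' : X → Z → Z → Z), (∀ j, T1 B (g j)) ∧ T2 B F' ∧
    ∀ x s y, F x s y = ∑ j ∈ range n, g j x s * y ^ j + y ^ n * F' x s y := by
  classical
  obtain ⟨κ, _, z, H, hz, hH, e⟩ := hF
  obtain ⟨g, hg, h⟩ := hH.taylor (Sum.inr 1)
  have hu : ∀ (x : X) (s y : Z), Function.update (Sum.elim (fun i => z i x) ![s, y] : κ ⊕ Fin 2 → Z)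
      (Sum.inr 1) 0 = Sum.elim (fun i => z i x) ![s, 0] := by
    intro x s y
    funext k
    rcases k with k | k
    · simp
    · fin_cases k <;> simp
  have hT : ∀ j, Tn B (Fin 2) (fun x w => g j (Sum.elim (fun i => z i x) w)) := fun j =>
    ⟨κ, inferInstance, z, g j, hz, hg j, fun _ _ => rfl⟩
  refine ⟨fun j x s => g j (Sum.elim (fun i => z i x) ![s, 0]),
    fun x s y => g n (Sum.elim (fun i => z i x) ![s, y]), fun j => ?_, ?_, fun x s y => ?_⟩
  · refine (congrArg (Tn B (Fin 1)) (funext fun x => funext fun w => ?_)).mp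
      ((hT j).subst (h := ![fun _ w => w 0, fun _ _ => 0])
      (fun i => by fin_cases i; exacts [Tn.coord 0, Tn.const 0]))
    congr 2; funext i; fin_cases i <;> rfl
  · refine (congrArg (Tn B (Fin 2)) (funext fun x => funext fun w => ?_)).mp (hT n)
    congr 2; funext i; fin_cases i <;> rfl
  · have := e x ![s, y]
    simp only [Matrix.cons_val_zero, Matrix.cons_val_one] at this
    rw [this, h n, hu]; rfl

theorem T1.taylor {F : X → Z → Z} (hF : T1 B F) (n : ℕ) : ∃ (g : ℕ → X → Z)
    (F' : X → Z → Z), (∀ j, B.T (g j)) ∧ T1 B F' ∧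
    ∀ x y, F x y = ∑ j ∈ range n, g j x * y ^ j + y ^ n * F' x y := by
  obtain ⟨g, F', hg, hF', h⟩ := T2.taylor (F := fun x _ y => F x y) (hF.subst (Tn.coord 1)) n
  exact ⟨_, _, fun j => (hg j).eval (B.T_const 0), hF'.subst (Tn.const 0) (Tn.coord 0),
    fun x y => h x 0 y⟩

/-- The effect of a translation on a function in normal form. The coefficient of `y ^ d` is
computed up to a quadratic error. -/
theorem recenter (d : ℕ) {f : ℕ → X → Z} (hf : ∀ j, B.T (f j)) {G : X → Z → Z} (hG : T1 B G) :
    ∃ (ψ : ℕ → X → Z → Z) (R : X → Z → Z) (G' : X → Z → Z → Z), (∀ j, T1 B (ψ j)) ∧ T1 B R ∧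
      T2 B G' ∧ ∀ x s y, ∑ j ∈ range (d + 1), f j x * (s + y) ^ j +
        (s + y) ^ (d + 1) * (1 + p * G x (s + y)) = ∑ j ∈ range d, ψ j x s * y ^ j +
        (f d x + (d + 1) * s * (1 + p * G x s) + p * s ^ 2 * R x s) * y ^ d +
        y ^ (d + 1) * (1 + p * G' x s y) := by
  have hsy : Tn B (Fin 2) (fun _ w => w 0 + w 1) := (Tn.coord 0).add (Tn.coord 1)
  obtain ⟨g, G₁, hg, hG₁, h1⟩ := T2.taylor (F := fun x s y => G x (s + y)) (hG.subst hsy) 1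
  have h1' : ∀ x s y, G x (s + y) = G x s + y * G₁ x s y := by
    intro x s y
    have h2 := h1 x s 0
    have h3 := h1 x s y
    simp only [add_zero, range_one, sum_singleton, pow_zero, mul_one, pow_one, zero_mul] at h2 h3
    rw [h3, h2]
  let Q : Z → Z → Z := fun s y => ∑ m ∈ range d, ((d + 1).choose m : Z) * s ^ (d - 1 - m) * y ^ m
  have hQ : T2 B (fun _ s y => Q s y) := Tn.sum _ fun m _ =>
    ((Tn.const _).mul ((Tn.coord 0).pow _)).mul ((Tn.coord 1).pow _)
  have hQe : ∀ s y : Z, (s + y) ^ (d + 1) = y ^ (d + 1) + (d + 1) * s * y ^ d + s ^ 2 * Q s y := by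
    intro s y
    rw [add_comm s y, add_pow, sum_range_succ, sum_range_succ]
    simp only [Q, mul_sum]
    have : ∀ m ∈ range d, y ^ m * s ^ (d + 1 - m) * ((d + 1).choose m : Z) =
        s ^ 2 * (((d + 1).choose m : Z) * s ^ (d - 1 - m) * y ^ m) := fun m hm => by
      have : d + 1 - m = d - 1 - m + 2 := by have := mem_range.1 hm; omega
      rw [this, pow_add]; ring
    rw [sum_congr rfl this]
    simp
    ring
  obtain ⟨r, r', hr, hr', h2⟩ := T2.taylor (F := fun x s y => Q s y * G x (s + y))
    (Tn.mul hQ (hG.subst hsy)) (d + 1)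
  refine ⟨fun j x s => ∑ i ∈ range (d + 1), f i x * ((i.choose j : Z) * s ^ (i - j)) +
    (s ^ 2 * (((d + 1).choose j : Z) * s ^ (d - 1 - j)) + p * s ^ 2 * r j x s), r d,
    fun x s y => G x (s + y) + ((d + 1) * s * G₁ x s y + s ^ 2 * r' x s y), fun j => ?_, hr d, ?_, ?_⟩
  · exact (Tn.sum _ fun i _ => (Tn.term (hf i)).mul ((Tn.const _).mul ((Tn.coord 0).pow _))).add
      ((((Tn.coord 0).pow _).mul ((Tn.const _).mul ((Tn.coord 0).pow _))).add
      ((((Tn.const _).mul ((Tn.coord 0).pow _))).mul (hr j)))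
  · exact (hG.subst hsy).add ((((Tn.const _).mul (Tn.coord 0)).mul hG₁).add
      (((Tn.coord 0).pow _).mul hr'))
  · intro x s y
    have h3 : ∑ j ∈ range (d + 1), f j x * (s + y) ^ j =
        ∑ m ∈ range d, (∑ i ∈ range (d + 1), f i x * ((i.choose m : Z) * s ^ (i - m))) * y ^ m +
          f d x * y ^ d := by
      have h4 : ∀ i ∈ range (d + 1), f i x * (s + y) ^ i =
          ∑ m ∈ range (d + 1), f i x * ((i.choose m : Z) * s ^ (i - m)) * y ^ m := fun i hi => by
        rw [add_comm s y, add_pow, mul_sum]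
        have hi := mem_range.1 hi
        refine Eq.trans (sum_congr rfl fun m _ => ?_) (sum_subset (s₁ := range (i + 1))
          (range_subset_range.2 hi) fun m _ hm => ?_)
        · ring
        · rw [Nat.choose_eq_zero_of_lt (by simpa using hm)]; simp
      rw [sum_congr rfl h4, sum_comm, sum_range_succ]
      congr 1
      · exact sum_congr rfl fun m _ => (sum_mul _ _ _).symm
      · rw [sum_range_succ, sum_eq_zero fun i hi => ?_]
        · simp
        · rw [Nat.choose_eq_zero_of_lt (mem_range.1 hi)]; simp
    have h5 := h2 x s y
    have h6 := h1' x s y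
    rw [sum_range_succ] at h5
    rw [h3, hQe]
    have h7 : ∑ j ∈ range d, (∑ i ∈ range (d + 1), f i x * ((i.choose j : Z) * s ^ (i - j)) +
        (s ^ 2 * (((d + 1).choose j : Z) * s ^ (d - 1 - j)) + p * s ^ 2 * r j x s)) * y ^ j =
        ∑ j ∈ range d, (∑ i ∈ range (d + 1), f i x * ((i.choose j : Z) * s ^ (i - j))) * y ^ j +
        (s ^ 2 * Q s y + p * s ^ 2 * ∑ j ∈ range d, r j x s * y ^ j) := by
      simp only [Q, mul_sum]
      rw [← sum_add_distrib, ← sum_add_distrib]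
      exact sum_congr rfl fun m _ => by ring
    rw [h7]
    linear_combination ((d : Z) + 1) * s * y ^ d * p * h6 + p * s ^ 2 * h5

end

section

variable {X : Type} {B : Base p X}

theorem T1.diff {F : X → Z → Z} (hF : T1 B F) : ∃ F₁ : X → Z → Z → Z, T2 B F₁ ∧
    ∀ x s y, F x (s + y) = F x s + y * F₁ x s y := by
  have hsy : Tn B (Fin 2) (fun _ w => w 0 + w 1) := (Tn.coord 0).add (Tn.coord 1)
  obtain ⟨g, G₁, hg, hG₁, h1⟩ := T2.taylor (F := fun x s y => F x (s + y)) (hF.subst hsy) 1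
  refine ⟨G₁, hG₁, fun x s y => ?_⟩
  have h2 := h1 x s 0
  have h3 := h1 x s y
  simp only [add_zero, range_one, sum_singleton, pow_zero, mul_one, pow_one, zero_mul] at h2 h3
  rw [h3, h2]

theorem T1.fixedPoint {Φ : X → Z → Z} (hΦ : T1 B Φ) : ∃ y, B.T y ∧ ∀ x, y x = p * Φ x (y x) := by
  obtain ⟨κ, _, z, H, hz, hH, e⟩ := hΦ
  obtain ⟨Y, hY, h⟩ := hH.fixedPoint
  refine ⟨fun x => Y (fun i => z i x), B.comp hY hz, fun x => ?_⟩
  have h1 := e x ![Y (fun i => z i x)]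
  simp only [Matrix.cons_val_zero] at h1
  rw [h1]
  exact h _

theorem T1.const {f : X → Z} (hf : B.T f) : T1 B (fun x _ => f x) := Tn.term hf

theorem T2.at {F : X → Z → Z → Z} (hF : T2 B F) {s : X → Z} (hs : B.T s) {b : X → Z}
    (hb : B.T b) : T1 B (fun x y => F x (s x) (b x * y)) :=
  hF.subst (Tn.term hs) ((Tn.term hb).mul (Tn.coord 0))

namespace Chart
variable {M K' : ℕ} {P : Chart B}

theorem O.T1 {F : X → Z → Z} (hF : T1 B F) {g : Pt p X → Z} (hg : P.O g) :
    P.O (fun q => F q.1 (g q)) := by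
  obtain ⟨G, hG, h⟩ := hg
  exact ⟨_, hF.subst hG, fun q hq => by dsimp only; rw [h q hq]⟩

theorem Mono.cmul {g : Pt p X → Z} (hg : P.Mono M g) {a : X → Z} (ha : B.T a) :
    P.Mono M (fun q => a q.1 * g q) := by
  obtain ⟨b, hb, k, hk, E, hE, h⟩ := hg
  refine ⟨_, Base.T_mul ha hb, k, hk, E, hE, h.imp (fun h q hq => ?_) fun h q hq => ?_⟩ <;>
    · dsimp only; rw [h q hq]; ring

theorem Mono.congr {g g' : Pt p X → Z} (hg : P.Mono M g) (h : ∀ q, P.pts q → g' q = g q) :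
    P.Mono M g' := by
  obtain ⟨b, hb, k, hk, E, hE, h'⟩ := hg
  exact ⟨b, hb, k, hk, E, hE, h'.imp (fun h' q hq => (h q hq).trans (h' q hq))
    fun h' q hq => (h q hq).trans (h' q hq)⟩

/-- A finite sum of almost monomial functions one of which dominates the others. -/
theorem dom_sum {ι : Type} (s : Finset ι) {i₀ : ι} (hi₀ : i₀ ∈ s) {m e : ι → Pt p X → Z}
    (hm : ∀ i ∈ s, i ≠ i₀ → P.Le M (m i) (m i₀)) (he : ∀ i ∈ s, P.One M (e i)) :
    ∃ E, P.One M E ∧ ∀ q, P.pts q → ∑ i ∈ s, m i q * e i q = m i₀ q * E q := by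
  classical
  obtain ⟨G, hG, h0⟩ := he i₀ hi₀
  have : ∀ i, ∃ F, P.O F ∧ ∀ q, P.pts q → i ∈ s.erase i₀ → m i q = p ^ M * F q * m i₀ q := fun i => by
    by_cases hi : i ∈ s.erase i₀
    · obtain ⟨F, hF, h⟩ := hm i (mem_of_mem_erase hi) (ne_of_mem_erase hi)
      exact ⟨F, hF, fun q hq _ => h q hq⟩
    · exact ⟨_, P.O_const 0, fun q hq h => absurd h hi⟩
  choose F hF h using this
  refine ⟨fun q => 1 + p ^ M * (G q + ∑ i ∈ s.erase i₀, F i q * e i q), ⟨_, hG.add (O.sum _ fun i hi =>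
    (hF i).mul (he i (mem_of_mem_erase hi)).O), fun _ _ => rfl⟩, fun q hq => ?_⟩
  rw [← add_sum_erase s _ hi₀, sum_congr rfl fun i hi => by rw [h i q hq hi], h0 q hq]
  have : ∑ i ∈ s.erase i₀, p ^ M * F i q * m i₀ q * e i q =
      p ^ M * m i₀ q * ∑ i ∈ s.erase i₀, F i q * e i q := by
    rw [mul_sum]; exact sum_congr rfl fun i _ => by ring
  rw [this]; ring

/-- Covering a disc inside a ball by a ball. -/
theorem cov_aff (hP : P.ball) {D : X → Prop} (hD : B.Q D) {s b : X → Z} (hs : B.T s)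
    (hb : B.T b) : Cov B M P (fun q => D q.1 ∧ ∃ w, q.2.1 = s q.1 + b q.1 * w)
      (fun P' R => P'.ball ∧ (∀ x, P'.C x → D x ∧ P.C x) ∧
        ∀ q, P'.pts q → (R q).2.1 = s q.1 + b q.1 * q.2.1) := by
  have hN := P.hball hP
  let P' : Chart B := { P with
    C := fun x => P.C x ∧ D x
    hC := B.inter P.hC hD
    c := fun x => P.c x + P.β x * s x
    hc := Base.T_add P.hc (Base.T_mul P.hβ hs)
    β := fun x => P.β x * b x
    hβ := Base.T_mul P.hβ hb }
  let R : Pt p X → Pt p X := fun q => (q.1, s q.1 + b q.1 * q.2.1, q.2.2)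
  refine Cov.single P' R ⟨?_, fun _ _ => rfl, fun q _ => ?_,
    (O.term hs).add ((O.term hb).mul (O_u _)), O_v _, fun h => absurd hP h⟩
    ⟨hP, fun x h => ⟨h.2, h.1⟩, fun q hq => rfl⟩ ?_
  · rintro ⟨x, u, v⟩ ⟨h1, h2, h3, -⟩
    refine ⟨h1.1, ?_, h3, fun h => absurd hP h⟩
    have := h3 hP
    simp only [P', R] at this h2 ⊢
    rw [this] at h2 ⊢
    rw [← h2]; ring
  · simp only [t, P', R, hN, pow_one]; ring
  · rintro ⟨x, u, v⟩ ⟨h1, h2, h3, -⟩ ⟨h5, w, hw⟩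
    have hv := h3 hP
    simp only at hw hv h2 h1 h5
    refine ⟨(x, w, v), ⟨⟨h1, h5⟩, ?_, h3, fun h => absurd hP h⟩, by simp [R, hw]⟩
    simp only [P']
    rw [hv] at h2 ⊢
    rw [← h2]; ring

/-- Covering a disc inside a ball by annuli. -/
theorem cov_ann (hP : P.ball) {D : X → Prop} (hD : B.Q D) {s b : X → Z} (hs : B.T s)
    (hb : B.T b) : Cov B M P (fun q => D q.1 ∧ ∃ w, q.2.1 = s q.1 + b q.1 * w)
      (fun P' R => ¬ P'.ball ∧ P'.N = 1 ∧ (∀ x, P'.C x → D x ∧ P.C x) ∧ ∃ μ : Z,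
        ∀ q, P'.pts q → (R q).2.1 = s q.1 + b q.1 * (μ * q.2.1)) := by
  have hN := P.hball hP
  let ι := {μ : Z // μ ∈ Un p 1 ∨ μ = 0}
  have : Finite ι := Set.Finite.subset (((Un p 1).finite_toSet).insert 0) (fun μ h => by
    rcases h with h | h
    · exact Or.inr h
    · exact Or.inl h)
  let P' : ι → Chart B := fun μ =>
    { C := fun x => P.C x ∧ D x ∧ P.ε x = 0
      hC := B.inter P.hC (B.inter hD (B.zero P.hε))
      c := fun x => P.c x + P.β x * s x
      hc := Base.T_add P.hc (Base.T_mul P.hβ hs)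
      β := fun x => μ.1 * (P.β x * b x)
      hβ := Base.T_cmul _ (Base.T_mul P.hβ hb)
      ε := fun _ => 0
      hε := B.T_const 0
      N := 1
      K := 1
      ball := False
      hN := le_rfl
      hK := le_rfl
      hball := fun h => h.elim }
  let R : ι → Pt p X → Pt p X := fun μ q => (q.1, s q.1 + b q.1 * (μ.1 * q.2.1), 0)
  refine Cov.of_fintype P' R (fun μ => ⟨⟨?_, fun _ _ => rfl, fun q _ => ?_,
    (O.term hs).add ((O.term hb).mul ((O_u _).cmul _)), O_const _ 0, fun h => absurd hP h⟩,
    fun h => h, rfl, fun x h => ⟨h.2.1, h.1⟩, μ.1, fun q hq => rfl⟩) ?_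
  · rintro ⟨x, u, v⟩ ⟨h1, -⟩
    exact ⟨h1.1, by simp [R, h1.2.2], fun _ => rfl, fun h => absurd hP h⟩
  · simp only [t, P', R, hN, pow_one]; ring
  · rintro ⟨x, u, v⟩ ⟨h1, h2, h3, -⟩ ⟨h5, w, hw⟩
    have hv := h3 hP
    simp only at hw hv h2 h1 h5
    subst hv
    rw [mul_zero] at h2
    by_cases h0 : w = 0
    · refine ⟨⟨0, Or.inr rfl⟩, (x, 1, 0), ⟨⟨h1, h5, h2.symm⟩, by simp [P'], fun _ => rfl,
        fun _ => QK_one _⟩, ?_⟩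
      simp [R, hw, h0]
    · obtain ⟨w', hw', h6⟩ := exists_eq_unit w h0
      obtain ⟨μ, hμ, y, h7⟩ := exists_Un (J := 1) le_rfl hw'
      refine ⟨⟨μ, Or.inl hμ⟩, (x, p ^ w.valuation * (1 + p ^ 1 * y), 0), ⟨⟨h1, h5, h2.symm⟩,
        by simp [P'], fun _ => rfl, fun _ => ⟨_, _, rfl⟩⟩, ?_⟩
      simp only [R]
      rw [hw]
      congr 4
      rw [h7] at h6
      calc μ * (p ^ w.valuation * (1 + p ^ 1 * y)) = p ^ w.valuation * (μ * (1 + p ^ 1 * y)) := by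
            ring
        _ = w := h6.symm

variable (B) in
/-- The function `g` becomes almost monomial after covering `P` by annuli. -/
def Prep (M : ℕ) (P : Chart B) (S : Pt p X → Prop) (g : Pt p X → Z) : Prop :=
  Cov B M P S (fun P' R => ¬ P'.ball ∧ P'.Mono M (fun q => g (R q)))

theorem prep_mono (hP : P.ball) {S : Pt p X → Prop} {g : Pt p X → Z} (hg : P.Mono M g) :
    Prep B M P S g := by
  refine (cov_ann hP B.Q_true (B.T_const 0) (B.T_const 1)).mono (fun q hq _ => ⟨trivial, q.2.1,
    by ring⟩) fun P' R hR h => ⟨h.1, hg.ref hR⟩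

theorem Prep.cmul {S : Pt p X → Prop} {g g' : Pt p X → Z} (hg : Prep B M P S g) {a : X → Z}
    (ha : B.T a) (h : ∀ q, P.pts q → g' q = a q.1 * g q) : Prep B M P S g' := by
  refine Cov.mono hg (fun q hq h => h) fun P' R hR h' => ⟨h'.1, (h'.2.cmul ha).congr fun q hq => ?_⟩
  rw [h _ (hR.maps q hq), hR.fst q hq]

/-- A sum of `n` terms of the form `a u ^ j (1 + p G)`. -/
def Form (P : Chart B) (n : ℕ) (g : Pt p X → Z) : Prop :=
  ∃ (a : ℕ → X → Z) (G : ℕ → X → Z → Z), (∀ j, B.T (a j)) ∧ (∀ j, T1 B (G j)) ∧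
    ∀ q, P.pts q → g q = ∑ j ∈ range n, a j q.1 * q.2.1 ^ j * (1 + p * G j q.1 q.2.1)

/-- A function in normal form of degree `n`. -/
def NF (P : Chart B) (n : ℕ) (g : Pt p X → Z) : Prop :=
  ∃ (f : ℕ → X → Z) (G : X → Z → Z), (∀ j, B.T (f j)) ∧ T1 B G ∧
    ∀ q, P.pts q → g q = ∑ j ∈ range n, f j q.1 * q.2.1 ^ j + q.2.1 ^ n * (1 + p * G q.1 q.2.1)

/-- Near a point where the coefficient of `y ^ d` in the expansion of a normal form of degree
`d + 1` is not too small, the normal form is a sum of only `d + 1` terms. -/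
theorem form_of_disc {d : ℕ} {F : X → Z → Z} {ψ : ℕ → X → Z → Z} {φ : X → Z → Z}
    {G : X → Z → Z → Z} (hψ : ∀ j, T1 B (ψ j)) (hφ : T1 B φ) (hG : T2 B G)
    (h : ∀ x s y, F x (s + y) = ∑ j ∈ range d, ψ j x s * y ^ j + φ x s * y ^ d +
      y ^ (d + 1) * (1 + p * G x s y)) {s b : X → Z} (hs : B.T s) (hb : B.T b)
    (hd : ∀ q, P.pts q → p * φ q.1 (s q.1) ∣ b q.1) {g : Pt p X → Z}
    (hg : ∀ q, P.pts q → g q = F q.1 (s q.1 + b q.1 * q.2.1)) : P.Form (d + 1) g := by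
  have hφs := hφ.eval hs
  let c : X → Z := fun x => dv (b x) (p * φ x (s x))
  have hc : B.T c := B.div hb (Base.T_cmul _ hφs)
  refine ⟨fun j x => if j < d then ψ j x (s x) * b x ^ j else φ x (s x) * b x ^ d,
    fun j x y => if j < d then 0 else c x * (y * (1 + p * G x (s x) (b x * y))), fun j => ?_,
    fun j => ?_, fun q hq => ?_⟩
  · dsimp only; split_ifs
    · exact Base.T_mul ((hψ j).eval hs) (Base.T_pow hb j)
    · exact Base.T_mul hφs (Base.T_pow hb d)
  · dsimp only; split_ifs
    · exact Tn.const 0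
    · exact (Tn.term hc).mul ((Tn.coord 0).mul ((Tn.const 1).add ((Tn.const _).mul (hG.at hs hb))))
  · have hbc : p * φ q.1 (s q.1) * c q.1 = b q.1 := dv_mul' (hd q hq)
    rw [hg q hq, h, sum_range_succ]
    simp only [lt_irrefl, if_false]
    have h1 : ∀ j ∈ range d, (if j < d then ψ j q.1 (s q.1) * b q.1 ^ j
        else φ q.1 (s q.1) * b q.1 ^ d) * q.2.1 ^ j * (1 + p * if j < d then 0 else
        c q.1 * (q.2.1 * (1 + p * G q.1 (s q.1) (b q.1 * q.2.1)))) =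
        ψ j q.1 (s q.1) * (b q.1 * q.2.1) ^ j := fun j hj => by
      simp only [mem_range.1 hj, if_true]; ring
    rw [sum_congr rfl h1]
    simp only [mul_pow, pow_succ]
    linear_combination (-(b q.1 ^ d * q.2.1 ^ d * q.2.1 *
      (1 + p * G q.1 (s q.1) (b q.1 * q.2.1)))) * hbc

/-- A normal form of degree `0` is almost constant on small discs. -/
theorem prep_nf_zero (hP : P.ball) {g : Pt p X → Z} (hg : P.NF 0 g) :
    Prep B M P (fun _ => True) g := by
  obtain ⟨f, G, hf, hG, h⟩ := hg
  obtain ⟨G₁, hG₁, h1⟩ := hG.diff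
  refine Cov.iUnion (ι := Fin (p ^ M)) (S := fun n q => True ∧ ∃ w, q.2.1 = ((n : ℕ) : Z) + p ^ M * w)
    (fun n => ?_) fun q hq _ => ?_
  · refine (cov_aff hP B.Q_true (B.T_const ((n : ℕ) : Z)) (B.T_const ((p : Z) ^ M))).bind
      fun P' R hR h' => ?_
    refine (prep_mono (S := fun _ => True) h'.1 (g := fun q => g (R q)) ?_).mono
      (fun _ _ _ => trivial) fun _ _ _ h => h
    obtain ⟨-, -, h2⟩ := h'
    let f₀ : X → Z := fun x => 1 + p * G x ((n : ℕ) : Z)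
    have hf₀ : B.T f₀ := Base.T_add (B.T_const 1) (Base.T_cmul _ (hG.eval (B.T_const _)))
    refine ⟨f₀, hf₀, 0, fun _ => rfl, fun q => 1 + p ^ M * (dv 1 (f₀ q.1) *
      (p * (q.2.1 * G₁ q.1 ((n : ℕ) : Z) (p ^ M * q.2.1)))), ⟨_,
      (O.term (B.div (B.T_const 1) hf₀)).mul (((O_u _).mul (O.T1 (hG₁.at (B.T_const _)
        (B.T_const _)) (O_u _))).cmul _), fun q _ => rfl⟩, Or.inl fun q hq => ?_⟩
    have h3 : f₀ q.1 * dv 1 (f₀ q.1) = 1 := dv_mul' (isUnit_one_add _).dvd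
    dsimp only
    rw [h _ (hR.maps q hq), hR.fst q hq, h2 q hq, h1]
    simp only [range_zero, sum_empty, pow_zero]
    linear_combination (-(p ^ M * (p * (q.2.1 * G₁ q.1 ((n : ℕ) : Z) (p ^ M * q.2.1))))) * h3
  · obtain ⟨n, hn, w, hw⟩ := exists_nat_sub q.2.1 M
    exact ⟨⟨n, hn⟩, trivial, w, by linear_combination hw⟩

/-- Near an approximate zero of the coefficient of `u ^ d`, a normal form of degree `d + 1` can be
centered at an exact zero, and the resulting monomials can be compared. -/
theorem prep_nf_disc {d l o : ℕ} {e' : Z} (hM : 1 ≤ M) (hP : P.ball)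
    (ih : ∀ P' : Chart B, P'.ball → ∀ g, P'.Form (d + 1) g → Prep B M P' (fun _ => True) g)
    {f : ℕ → X → Z} {G : X → Z → Z} (hf : ∀ j, B.T (f j)) (hG : T1 B G)
    (he : IsUnit e') (hd : ((d : Z) + 1) = p ^ o * e') (hMl : M ≤ l) (hol : o ≤ l)
    (hD : ∀ x, P.C x → (p : Z) ^ (l + o + 1) ∣ f d x) {g : Pt p X → Z}
    (hg : ∀ q, P.pts q → g q = ∑ j ∈ range (d + 1), f j q.1 * q.2.1 ^ j +
      q.2.1 ^ (d + 1) * (1 + p * G q.1 q.2.1)) :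
    Prep B M P (fun q => (p : Z) ^ l ∣ q.2.1) g := by
  obtain ⟨ψ, R₁, G₁, hψ, hR₁, hG₁, h1⟩ := recenter d hf hG
  -- the center `p ^ l * y` of the disc, a zero of the coefficient of `u ^ d`
  have hpl : T1 B (fun _ w => p ^ l * w) := (Tn.const _).mul (Tn.coord 0)
  obtain ⟨y, hy, hye⟩ := T1.fixedPoint (B := B) (Φ := fun x w => -Ring.inverse e' *
    (dv (f d x) ((p : Z) ^ (l + o + 1)) + (e' * (w * G x (p ^ l * w)) +
      p ^ (l - o) * (w ^ 2 * R₁ x (p ^ l * w)))))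
    ((Tn.const _).mul ((Tn.term (B.div (hf d) (B.T_const _))).add (((Tn.const _).mul
      ((Tn.coord 0).mul (hG.subst hpl))).add ((Tn.const _).mul (((Tn.coord 0).pow 2).mul
      (hR₁.subst hpl))))))
  have hc : B.T (fun x => p ^ l * y x) := Base.T_cmul _ hy
  have hee := Ring.mul_inverse_cancel e' he
  have hz : ∀ x, P.C x → f d x + (d + 1) * (p ^ l * y x) * (1 + p * G x (p ^ l * y x)) +
      p * (p ^ l * y x) ^ 2 * R₁ x (p ^ l * y x) = 0 := fun x hx => by
    have h2 := hye x
    have h3 := dv_mul' (hD x hx)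
    obtain ⟨k, rfl⟩ := Nat.exists_eq_add_of_le hol
    simp only [Nat.add_sub_cancel_left] at h2
    rw [hd]
    generalize dv (f d x) (p ^ (o + k + o + 1)) = g0 at *
    generalize G x (p ^ (o + k) * y x) = g1 at *
    generalize R₁ x (p ^ (o + k) * y x) = g2 at *
    generalize y x = y at *
    rw [← h3]
    linear_combination (p ^ (o + (o + k)) * e') * h2 -
      (p ^ (o + (o + k)) * p * (g0 + (e' * (y * g1) + p ^ k * (y ^ 2 * g2)))) * hee
  -- the normal form with respect to the new center
  let f₂ : ℕ → X → Z := fun j x => if j < d then ψ j x (p ^ l * y x) else 0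
  have hf₂ : ∀ j, B.T (f₂ j) := fun j => by
    dsimp only [f₂]; split_ifs
    · exact (hψ j).eval hc
    · exact B.T_const 0
  let G₂ : X → Z → Z := fun x w => G₁ x (p ^ l * y x) w
  have hG₂ : T1 B G₂ := hG₁.subst (Tn.term hc) (Tn.coord 0)
  have h2 : ∀ q, P.pts q → ∀ w, q.2.1 = p ^ l * y q.1 + w →
      g q = ∑ j ∈ range (d + 1), f₂ j q.1 * w ^ j + w ^ (d + 1) * (1 + p * G₂ q.1 w) := by
    intro q hq w hw
    rw [hg q hq, hw, h1, hz _ hq.1, sum_range_succ _ d]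
    simp only [f₂, lt_irrefl, if_false, zero_mul, add_zero]
    congr 1
    exact sum_congr rfl fun j hj => by rw [if_pos (mem_range.1 hj)]
  obtain ⟨ψ₃, R₃, G₃, hψ₃, hR₃, hG₃, h3⟩ := recenter d hf₂ hG₂
  obtain ⟨G₄, hG₄, h4⟩ := hG₂.diff
  refine (cov_ann hP B.Q_true hc (B.T_const ((p : Z) ^ l))).bind ?_ fun q hq ⟨w, hw⟩ =>
    ⟨trivial, w - y q.1, by rw [hw]; ring⟩
  rintro P' R hR ⟨hP', hN', -, μ, hμ⟩
  refine Cov.mono (S := fun _ => True) ?_ (fun _ _ _ => trivial) fun _ _ _ h => h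
  let η : X → Z := fun x => 1 + p * G₂ x 0
  have hη : B.T η := Base.T_add (B.T_const 1) (Base.T_cmul _ (hG₂.eval (B.T_const 0)))
  have hηu : ∀ x, IsUnit (η x) := fun x => isUnit_one_add _
  let a : ℕ → X → Z := fun j x => if j < d then f₂ j x * (p ^ l * μ) ^ j else
    (p ^ l * μ) ^ j * η x
  have ha : ∀ j, B.T (a j) := fun j => by
    dsimp only [a]; split_ifs
    · exact Base.T_mul (hf₂ j) (B.T_const _)
    · exact Base.T_cmul _ hη
  let s : Finset ℕ := insert (d + 1) (range d)
  let E : ℕ → Pt p X → Z := fun j q => if j < d then 1 else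
    1 + p ^ M * (p ^ (l - M) * p * μ * (dv 1 (η q.1) * (q.2.1 * G₄ q.1 0 (p ^ l * μ * q.2.1))))
  have hE : ∀ j, P'.One M (E j) := fun j => by
    dsimp only [E]; split_ifs
    · exact One_one _ _
    · exact ⟨_, ((O.term (B.div (B.T_const 1) hη)).mul ((O_u _).mul (O.T1 (hG₄.at (B.T_const 0)
        (B.T_const _)) (O_u _)))).cmul _, fun q _ => rfl⟩
  have h5 : ∀ q, P'.pts q → g (R q) = ∑ j ∈ s, (a j q.1 * q.2.1 ^ j) * E j q := fun q hq => by
    rw [h2 _ (hR.maps q hq) (p ^ l * (μ * q.2.1)) (by rw [hμ q hq, hR.fst q hq]), hR.fst q hq,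
      sum_insert (by simp), sum_range_succ _ d]
    have h6 := h4 q.1 0 (p ^ l * (μ * q.2.1))
    have h7 : η q.1 * dv 1 (η q.1) = 1 := dv_mul' (hηu q.1).dvd
    have h8 : (p : Z) ^ M * p ^ (l - M) = p ^ l := by rw [← pow_add, Nat.add_sub_cancel' hMl]
    rw [zero_add] at h6
    rw [sum_congr rfl (g := fun j => a j q.1 * q.2.1 ^ j * E j q) fun j hj => by
      simp only [a, E, mem_range.1 hj, if_true]; ring]
    have h9 : ¬ d + 1 < d := by omega
    simp only [a, E, f₂, lt_irrefl, if_false, h9]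
    rw [h6, ← mul_assoc ((p : Z) ^ l) μ]
    simp only [η] at h7 ⊢
    generalize G₄ q.1 0 ((p : Z) ^ l * μ * q.2.1) = g4 at *
    generalize dv 1 (1 + (p : Z) * G₂ q.1 0) = i at *
    generalize (p : Z) ^ (l - M) = r at *
    linear_combination (-((p ^ l * μ * q.2.1) ^ (d + 1) * (p ^ l * μ * q.2.1 * p * g4))) * h7 -
      ((p ^ l * μ) ^ (d + 1) * (1 + p * G₂ q.1 0) * q.2.1 ^ (d + 1) * p * μ * i * q.2.1 * g4) * h8
  refine (multi_split (K' := o + 1) hM hP' s (by simp [s]) (fun j => (j : ℤ))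
    (fun i _ j _ h => by simpa using h) (fun j q => a j q.1 * q.2.1 ^ j)
    (fun j _ => Lau.u (ha j) j)).bind ?_
  rintro P'' R' hR' ⟨hL, hPR⟩
  by_cases hb : P''.ball
  · obtain ⟨b, hb', K₂, hK₂, h6⟩ := hL.2 hb hN'
    have hs : B.T (fun x => p ^ l * μ * b x) := Base.T_cmul _ hb'
    refine (ih P'' hb (fun q => g (R (R' q))) ?_).mono (fun _ _ _ => trivial) fun _ _ _ h => h
    refine form_of_disc (d := d)
      (F := fun x y => ∑ j ∈ range (d + 1), f₂ j x * y ^ j + y ^ (d + 1) * (1 + p * G₂ x y)) hψ₃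
      (φ := fun x s => f₂ d x + (d + 1) * s * (1 + p * G₂ x s) +
      p * s ^ 2 * R₃ x s) ?_ hG₃ h3 hs (b := fun x => p ^ l * μ * b x * p ^ K₂)
      (Base.T_mul hs (B.T_const _)) (fun q hq => ?_) fun q hq => ?_
    · exact ((Tn.term (hf₂ d)).add (((Tn.const _).mul (Tn.coord 0)).mul ((Tn.const 1).add
        ((Tn.const _).mul hG₂)))).add (((Tn.const _).mul ((Tn.coord 0).pow 2)).mul hR₃)
    · have h7 : f₂ d q.1 = 0 := by simp [f₂]
      rw [h7, hd]
      obtain ⟨k, hk⟩ := Nat.exists_eq_add_of_le hol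
      obtain ⟨k', hk'⟩ := Nat.exists_eq_add_of_le hK₂
      generalize G₂ q.1 ((p : Z) ^ l * μ * b q.1) = g2
      generalize R₃ q.1 ((p : Z) ^ l * μ * b q.1) = r3
      obtain ⟨i, hi⟩ := he.exists_right_inv
      have hu := isUnit_one_add (g2 + i * ((p : Z) ^ k * μ * b q.1 * r3))
      obtain ⟨j, hj⟩ := hu.exists_right_inv
      refine ⟨p ^ k' * i * j, ?_⟩
      rw [hk', hk]
      generalize b q.1 = b at *
      have hpp : (p : Z) ^ (o + k) = p ^ o * p ^ k := pow_add _ _ _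
      have hpp' : (p : Z) ^ (o + 1 + k') = p ^ o * p * p ^ k' := by rw [pow_add, pow_succ]
      rw [hpp, hpp']
      linear_combination (-(p ^ o * p ^ k * μ * b * (p ^ o * p * p ^ k'))) * hj -
        (p ^ o * p ^ k * μ * b * (p ^ o * p * p ^ k')) * j * (1 + p * g2) * hi
    · rw [h2 _ (hR.maps _ (hR'.maps q hq)) (p ^ l * μ * b q.1 + p ^ l * μ * b q.1 * p ^ K₂ * q.2.1)
        (by rw [hμ _ (hR'.maps q hq), h6 q hq, hR.fst _ (hR'.maps q hq), hR'.fst q hq]; ring)]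
      rw [hR.fst _ (hR'.maps q hq), hR'.fst q hq]
  · obtain ⟨i₀, hi₀, h6⟩ := hPR.resolve_left hb
    refine Cov.refl ⟨hb, ?_⟩
    obtain ⟨E', hE', h7⟩ := dom_sum s hi₀ h6 fun i _ => (hE i).ref hR'
    have h8 : P'.Mono M (fun q => a i₀ q.1 * q.2.1 ^ i₀) :=
      ⟨a i₀, ha i₀, i₀, fun h => absurd h hP', _, One_one _ _, Or.inl fun q hq => by simp⟩
    obtain ⟨b, hb2, k, hk, E₀, hE₀, h9⟩ := h8.ref hR'
    refine ⟨b, hb2, k, hk, _, hE₀.mul hE', h9.imp (fun h9 q hq => ?_) fun h9 q hq => ?_⟩ <;>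
    · have := h7 q hq
      have h10 := h9 q hq
      dsimp only at this h10 ⊢
      rw [id, h5 _ (hR'.maps q hq), this, h10]; ring

/-- Preparation of normal forms of degree `d + 1`, given the preparation of forms with `d + 1` terms.
On a small disc, either the Taylor coefficient of degree `d` is not small, and it dominates the
leading term, or the disc can be recentered so that this coefficient vanishes. -/
theorem prep_nf_succ {d : ℕ} (hM : 1 ≤ M) (hP : P.ball)
    (ih : ∀ P' : Chart B, P'.ball → ∀ g, P'.Form (d + 1) g → Prep B M P' (fun _ => True) g)
    {g : Pt p X → Z} (hg : P.NF (d + 1) g) : Prep B M P (fun _ => True) g := by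
  obtain ⟨f, G, hf, hG, hg⟩ := hg
  obtain ⟨ψ, R₁, G₁, hψ, hR₁, hG₁, h1⟩ := recenter d hf hG
  let φ : X → Z → Z := fun x s => f d x + (d + 1) * s * (1 + p * G x s) + p * s ^ 2 * R₁ x s
  have hφ : T1 B φ := ((Tn.term (hf d)).add (((Tn.const _).mul (Tn.coord 0)).mul ((Tn.const 1).add
    ((Tn.const _).mul hG)))).add (((Tn.const _).mul ((Tn.coord 0).pow 2)).mul hR₁)
  have hd0 : ((d : Z) + 1) ≠ 0 := by exact_mod_cast Nat.succ_ne_zero d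
  obtain ⟨e', he', hd⟩ := exists_eq_unit _ hd0
  generalize ((d : Z) + 1).valuation = o at hd
  let l := max o M
  let L := l + o + 1
  refine Cov.iUnion (ι := Fin (p ^ L)) (S := fun n q => (p : Z) ^ L ∣ q.2.1 - ((n : ℕ) : Z))
    (fun n => ?_) fun q hq _ => ?_
  · have hφn : B.T (fun x => φ x ((n : ℕ) : Z)) := hφ.eval (B.T_const _)
    have hD : B.Q (fun x => (p : Z) ^ L ∣ φ x ((n : ℕ) : Z)) := Base.Q_dvd (B.T_const _) hφn
    classical
    refine Cov.union
      (S₁ := fun q => (p : Z) ^ L ∣ φ q.1 ((n : ℕ) : Z) ∧ (p : Z) ^ L ∣ q.2.1 - ((n : ℕ) : Z))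
      (S₂ := fun q => ¬ (p : Z) ^ L ∣ φ q.1 ((n : ℕ) : Z) ∧ (p : Z) ^ L ∣ q.2.1 - ((n : ℕ) : Z))
      ?_ ?_ (fun q hq h => by tauto)
    · refine (cov_aff hP hD (B.T_const ((n : ℕ) : Z)) (B.T_const 1)).bind ?_
        fun q hq ⟨h, w, hw⟩ => ⟨h, p ^ L * w, by linear_combination hw⟩
      rintro P' R hR ⟨hP', hC, hu⟩
      refine (prep_nf_disc (d := d) (l := l) (o := o) (g := fun q => g (R q)) hM hP' ih
        (f := fun j x => if j < d then ψ j x ((n : ℕ) : Z) else φ x ((n : ℕ) : Z))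
        (G := fun x y => G₁ x ((n : ℕ) : Z) y) (fun j => ?_) ?_ he' hd (le_max_right _ _)
        (le_max_left _ _) (fun x hx => ?_) fun q hq => ?_).mono (fun q hq h => ?_) fun _ _ _ h => h
      · split_ifs
        · exact (hψ j).eval (B.T_const _)
        · exact hφn
      · exact hG₁.subst (Tn.const _) (Tn.coord 0)
      · simpa using (hC x hx).1
      · rw [hg _ (hR.maps q hq), hu q hq, hR.fst q hq, one_mul, h1, sum_range_succ _ d]
        simp only [lt_irrefl, if_false]
        congr 2
        exact sum_congr rfl fun j hj => by rw [if_pos (mem_range.1 hj)]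
      · have := h.2
        rw [hu q hq, one_mul, add_sub_cancel_left] at this
        exact (pow_dvd_pow _ (by simp only [L]; omega)).trans this
    · refine (cov_aff hP (B.compl hD) (B.T_const ((n : ℕ) : Z)) (B.T_const ((p : Z) ^ L))).bind ?_
        fun q hq ⟨h, w, hw⟩ => ⟨h, w, by linear_combination hw⟩
      rintro P' R hR ⟨hP', hC, hu⟩
      refine (ih P' hP' (fun q => g (R q)) ?_).mono (fun _ _ _ => trivial) fun _ _ _ h => h
      refine form_of_disc (d := d)
        (F := fun x y => ∑ j ∈ range (d + 1), f j x * y ^ j + y ^ (d + 1) * (1 + p * G x y)) hψ hφ hG₁ h1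
        (B.T_const ((n : ℕ) : Z)) (B.T_const ((p : Z) ^ L))
        (fun q hq => ?_) fun q hq => ?_
      · exact (dvd_total _ _).resolve_left (hC _ hq.1).1
      · rw [hg _ (hR.maps q hq), hu q hq, hR.fst q hq]
  · obtain ⟨n, hn, h⟩ := exists_nat_sub q.2.1 L
    exact ⟨⟨n, hn⟩, h⟩

/-- Preparation of sums of finitely many almost monomial terms on balls. -/
theorem prep_form (hM : 1 ≤ M) (n : ℕ) : ∀ P : Chart B, P.ball → ∀ g, P.Form n g →
    Prep B M P (fun _ => True) g := by
  classical
  induction n with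
  | zero =>
    rintro P hP g ⟨a, G, -, -, h⟩
    exact prep_mono hP ⟨fun _ => 0, B.T_const 0, 0, fun _ => rfl, _, One_one _ _,
      Or.inl fun q hq => by rw [h q hq]; simp⟩
  | succ δ ih =>
    rintro P hP g ⟨a, G, ha, hG, h⟩
    let D : ℕ → X → Prop := fun j x => p * a j x ∣ a δ x
    have hD : ∀ j, B.Q (D j) := fun j => Base.Q_dvd (Base.T_cmul _ (ha j)) (ha δ)
    have hDs : B.Q (fun x => ∃ j < δ, D j x) := by
      have : ∀ n, B.Q (fun x => ∃ j < n, D j x) := fun n => by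
        induction n with
        | zero => simpa using B.Q_false
        | succ n ih =>
          refine (congrArg B.Q (funext fun x => propext ?_)).mp (Base.Q_union ih (hD n))
          simp only [Nat.lt_succ_iff_lt_or_eq, or_and_right, exists_or, exists_eq_left]
      exact this δ
    refine Cov.cases hDs (Cov.iUnion (ι := Fin δ) (S := fun j q => D j q.1) (fun j => ?_) ?_) ?_
    · refine Cov.restrict (P := P.restrict hDs) (hD j) (S := fun _ => True) ?_ fun q hq h => ⟨h, trivial⟩
      refine ih ((P.restrict hDs).restrict (hD j)) hP g ?_
      let c : X → Z := fun x => dv (a δ x) (p * a j x)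
      have hc : B.T c := B.div (ha δ) (Base.T_cmul _ (ha j))
      refine ⟨a, fun i => if i = (j : ℕ) then fun x u => G j x u + c x * (u ^ (δ - j) *
        (1 + p * G δ x u)) else G i, ha, fun i => ?_, fun q hq => ?_⟩
      · dsimp only; split_ifs
        · exact Tn.add (hG j) ((Tn.term hc).mul (((Tn.coord 0).pow _).mul ((Tn.const 1).add
            ((Tn.const _).mul (hG δ)))))
        · exact hG i
      · rw [restrict_pts, restrict_pts] at hq
        have hj := j.2
        have hcc : p * a j q.1 * c q.1 = a δ q.1 := dv_mul' hq.2
        rw [h q hq.1.1, sum_range_succ, ← add_sum_erase _ _ (mem_range.2 hj),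
          ← add_sum_erase (range δ) _ (mem_range.2 hj)]
        have h1 : ∀ i ∈ (range δ).erase ↑j, a i q.1 * q.2.1 ^ i * (1 + p * (if i = (j : ℕ) then
            fun x u => G j x u + c x * (u ^ (δ - j) * (1 + p * G δ x u)) else G i) q.1 q.2.1) =
            a i q.1 * q.2.1 ^ i * (1 + p * G i q.1 q.2.1) := fun i hi => by
          rw [if_neg (ne_of_mem_erase hi)]
        rw [sum_congr rfl h1]
        simp only [if_true]
        have hpw : q.2.1 ^ δ = q.2.1 ^ (j : ℕ) * q.2.1 ^ (δ - j) := by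
          rw [← pow_add, Nat.add_sub_cancel' hj.le]
        rw [hpw]
        linear_combination (-(q.2.1 ^ (j : ℕ) * q.2.1 ^ (δ - j) * (1 + p * G δ q.1 q.2.1))) * hcc
    · rintro q hq -
      obtain ⟨j, hj, h⟩ := ((restrict_pts hDs q).1 hq).2
      exact ⟨⟨j, hj⟩, h⟩
    · let b : ℕ → X → Z := fun j x => dv (a j x) (a δ x)
      have hb : ∀ j, B.T (b j) := fun j => B.div (ha j) (ha δ)
      obtain ⟨σ, S', hσ, hS', h1⟩ := T1.taylor (B := B) (F := fun x u => ∑ j ∈ range δ,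
        b j x * u ^ j * G j x u) (Tn.sum _ fun j _ =>
        ((Tn.term (hb j)).mul ((Tn.coord 0).pow j)).mul (hG j)) δ
      let g' : Pt p X → Z := fun q => ∑ j ∈ range δ, (b j q.1 + p * σ j q.1) * q.2.1 ^ j +
        q.2.1 ^ δ * (1 + p * (G δ q.1 q.2.1 + S' q.1 q.2.1))
      have key : (P.restrict (B.compl hDs)).NF δ g' :=
        ⟨fun j x => b j x + p * σ j x, fun x u => G δ x u + S' x u,
          fun j => Base.T_add (hb j) (Base.T_cmul _ (hσ j)), Tn.add (hG δ) hS', fun q _ => rfl⟩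
      have key2 : Prep B M (P.restrict (B.compl hDs)) (fun _ => True) g' := by
        obtain rfl | ⟨d, rfl⟩ : δ = 0 ∨ ∃ d, δ = d + 1 := by
          cases δ <;> simp
        · exact prep_nf_zero (P := P.restrict (B.compl hDs)) hP key
        · exact prep_nf_succ (P := P.restrict (B.compl hDs)) hM hP ih key
      refine key2.cmul (ha δ) fun q hq => ?_
      rw [restrict_pts] at hq
      have h2 : ∀ j < δ, a δ q.1 * b j q.1 = a j q.1 := fun j hj =>
        dv_mul' ((dvd_total _ _).resolve_right fun h => hq.2 ⟨j, hj, h⟩)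
      have h3 := h1 q.1 q.2.1
      rw [h q hq.1, sum_range_succ]
      have h4 : ∑ j ∈ range δ, a j q.1 * q.2.1 ^ j * (1 + p * G j q.1 q.2.1) =
          a δ q.1 * (∑ j ∈ range δ, b j q.1 * q.2.1 ^ j +
            p * ∑ j ∈ range δ, b j q.1 * q.2.1 ^ j * G j q.1 q.2.1) := by
        rw [mul_sum, ← sum_add_distrib, mul_sum]
        exact sum_congr rfl fun j hj => by rw [← h2 j (mem_range.1 hj)]; ring
      have h5 : ∑ j ∈ range δ, (b j q.1 + p * σ j q.1) * q.2.1 ^ j =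
          ∑ j ∈ range δ, b j q.1 * q.2.1 ^ j + p * ∑ j ∈ range δ, σ j q.1 * q.2.1 ^ j := by
        rw [mul_sum, ← sum_add_distrib]
        exact sum_congr rfl fun j _ => by ring
      simp only [g']
      rw [h4, h5]
      linear_combination a δ q.1 * p * h3

end Chart

end

/-! ### The preparation theorem for analytic functions -/

section

variable {X : Type} {B : Base p X}

namespace Chart
variable {M K' : ℕ} {P : Chart B}

/-- The domination lemma on a chart. -/
theorem O.dom (hM : 1 ≤ M) {g : Pt p X → Z} (hg : P.O g) :
    ∃ (D : ℕ) (a b : ℕ → X → Z) (G G' : ℕ → X → (Fin 2 → Z) → Z), (∀ i, B.T (a i)) ∧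
      (∀ i, B.T (b i)) ∧ (∀ i, Tn B (Fin 2) (G i)) ∧ (∀ i, Tn B (Fin 2) (G' i)) ∧
      ∀ q, P.pts q → g q =
        ∑ i ∈ range D, a i q.1 * q.2.1 ^ i * (1 + p ^ M * G i q.1 ![q.2.1, q.2.2]) +
        ∑ i ∈ range D, b i q.1 * q.2.2 ^ (i + 1) * (1 + p ^ M * G' i q.1 ![q.2.1, q.2.2]) := by
  obtain ⟨g₀, ⟨κ, _, z, H, hz, hH, e⟩, hg⟩ := hg
  -- the product `u * v` is added to the parameters
  have hH' : IsAn (fun w : Option κ ⊕ Fin 2 → Z => H (Sum.elim (fun i => w (Sum.inl (some i)))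
      (fun i => w (Sum.inr i)))) := by
    refine hH.comp (G := fun i w => Sum.elim (fun i => w (Sum.inl (some i)))
      (fun i => w (Sum.inr i)) i) fun i => ?_
    rcases i with i | i <;> exact isAn_coord _
  obtain ⟨D, a, b, G, G', ha, hb, hG, hG', h⟩ := domination hH' none M hM
  let z' : Option κ → X → Z := fun i => i.elim P.ε z
  have hz' : ∀ i, B.T (z' i) := fun i => by
    rcases i with _ | i
    · exact P.hε
    · exact hz i
  refine ⟨D, fun i x => a i (fun k => z' k x), fun i x => b i (fun k => z' k x),
    fun i x w => G i (Sum.elim (fun k => z' k x) w), fun i x w => G' i (Sum.elim (fun k => z' k x) w),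
    fun i => B.comp (ha i) hz', fun i => B.comp (hb i) hz',
    fun i => ⟨_, inferInstance, z', _, hz', hG i, fun _ _ => rfl⟩,
    fun i => ⟨_, inferInstance, z', _, hz', hG' i, fun _ _ => rfl⟩, fun q hq => ?_⟩
  have h1 := h (fun k => z' k q.1) q.2.1 q.2.2 hq.2.1
  rw [hg q hq, e]
  exact h1

/-- Preparation of analytic functions on balls. -/
theorem prep_ball (hM : 1 ≤ M) (hP : P.ball) {g : Pt p X → Z} (hg : P.O g) :
    Prep B M P (fun _ => True) g := by
  obtain ⟨D, a, b, G, G', ha, hb, hG, hG', h⟩ := hg.dom hM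
  refine prep_form hM D P hP g ⟨a, fun i x u => p ^ (M - 1) * G i x ![u, 0], ha, fun i => ?_,
    fun q hq => ?_⟩
  · refine Tn.cmul _ ((congrArg (Tn B (Fin 1)) (funext fun x => funext fun w => ?_)).mp
      ((hG i).subst (h := ![fun _ w => w 0, fun _ _ => 0])
      (fun i => by fin_cases i; exacts [Tn.coord 0, Tn.const 0])))
    congr 1; funext i; fin_cases i <;> rfl
  · have hv : q.2.2 = 0 := hq.2.2.1 hP
    have hpp : (p : Z) * p ^ (M - 1) = p ^ M := by rw [← pow_succ', Nat.sub_add_cancel hM]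
    rw [h q hq, hv]
    simp only [pow_succ, mul_zero, zero_mul, sum_const_zero, add_zero]
    exact sum_congr rfl fun i _ => by rw [← hpp]; ring

/-- Preparation of analytic functions: every analytic function on a chart becomes almost
monomial after covering the chart by annuli. -/
theorem prep (hM : 1 ≤ M) {g : Pt p X → Z} (hg : P.O g) : Prep B M P (fun _ => True) g := by
  by_cases hP : P.ball
  · exact prep_ball hM hP hg
  obtain ⟨D, a, b, G, G', ha, hb, hG, hG', h⟩ := hg.dom hM
  obtain rfl | hD := Nat.eq_zero_or_pos D
  · exact Cov.refl ⟨hP, fun _ => 0, B.T_const 0, 0, fun _ => rfl, _, One_one _ _,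
      Or.inl fun q hq => by simp [h q hq]⟩
  let s : Finset (ℕ ⊕ ℕ) := (range D).disjSum (range D)
  let d : ℕ ⊕ ℕ → ℤ := Sum.elim (fun i => (i : ℤ)) (fun i => -((i + 1 : ℕ) : ℤ))
  let m : ℕ ⊕ ℕ → Pt p X → Z := Sum.elim (fun i q => a i q.1 * q.2.1 ^ i)
    (fun i q => b i q.1 * q.2.2 ^ (i + 1))
  let e : ℕ ⊕ ℕ → Pt p X → Z := Sum.elim (fun i q => 1 + p ^ M * G i q.1 ![q.2.1, q.2.2])
    (fun i q => 1 + p ^ M * G' i q.1 ![q.2.1, q.2.2])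
  have hs : s.Nonempty := ⟨Sum.inl 0, by simp [s, hD]⟩
  have hd : Set.InjOn d s := by
    rintro (i | i) - (j | j) - hij <;> simp only [d, Sum.elim_inl, Sum.elim_inr] at hij <;>
      (congr 1; omega)
  have hm : ∀ i ∈ s, P.Lau (d i) (m i) := by
    rintro (i | i) -
    · exact Lau.u (ha i) i
    · exact Lau.v (hb i) (i + 1)
  have he : ∀ i, P.One M (e i) := by
    rintro (i | i)
    · exact ⟨_, ⟨_, hG i, fun _ _ => rfl⟩, fun _ _ => rfl⟩
    · exact ⟨_, ⟨_, hG' i, fun _ _ => rfl⟩, fun _ _ => rfl⟩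
  have hmono : ∀ i, P.Mono M (m i) := by
    rintro (i | i)
    · exact ⟨a i, ha i, i, fun h => absurd h hP, _, One_one _ _, Or.inl fun q hq => by simp [m]⟩
    · exact ⟨b i, hb i, i + 1, fun h => absurd h hP, _, One_one _ _,
        Or.inr fun q hq => by simp [m]⟩
  refine (multi_split (K' := 0) hM hP s hs d hd m hm).bind ?_
  rintro P' R hR ⟨-, h1⟩
  by_cases hb : P'.ball
  · exact prep_ball hM hb (hg.ref hR)
  obtain ⟨i₀, hi₀, h2⟩ := h1.resolve_left hb
  refine Cov.refl ⟨hb, ?_⟩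
  obtain ⟨E', hE', h7⟩ := dom_sum s hi₀ h2 fun i _ => (he i).ref hR
  obtain ⟨b', hb2, k, hk, E₀, hE₀, h9⟩ := (hmono i₀).ref hR
  refine ⟨b', hb2, k, hk, _, hE₀.mul hE', h9.imp (fun h9 q hq => ?_) fun h9 q hq => ?_⟩ <;>
  · have h10 := h9 q hq
    have h11 := h7 q hq
    simp only [s, sum_disjSum, m, e, Sum.elim_inl, Sum.elim_inr] at h11
    dsimp only [id] at h10 ⊢
    rw [h _ (hR.maps q hq), h11]
    simp only [m] at h10
    rw [h10]; ring

end Chart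

end

/-! ### Roots of analytic functions on charts -/

section

variable {X : Type} {B : Base p X}

theorem rt_mul_pow {e K : ℕ} (he : 1 ≤ e) (hK : e + 1 ≤ K) (a : Z) {w : Z} (hw : QK K w) :
    rt e K (a * w ^ e) = rt e K a * w := by
  have hK1 : 1 ≤ K := by omega
  have hw0 := hw.ne_zero hK1
  by_cases h : ∃ y, QK K y ∧ y ^ e = a
  · obtain ⟨y, hy, rfl⟩ := h
    rw [rt_eq he hK hy rfl, rt_eq he hK (hy.mul hw) (mul_pow y w e)]
  · rw [rt_of_not h, zero_mul]
    refine rt_of_not fun ⟨y, hy, hya⟩ => h ?_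
    have hd : w ∣ y := by
      rw [dvd_iff_val hw0 (hy.ne_zero hK1)]
      have h1 : w ^ e ∣ y ^ e := ⟨a, by rw [hya, mul_comm]⟩
      rw [dvd_iff_val (pow_ne_zero e hw0) (pow_ne_zero e (hy.ne_zero hK1)), PadicInt.valuation_pow,
        PadicInt.valuation_pow] at h1
      exact Nat.le_of_mul_le_mul_left h1 he
    obtain ⟨c, rfl⟩ := hd
    refine ⟨c, QK.of_mul hK1 hy hw, ?_⟩
    rw [mul_pow, mul_comm] at hya
    exact mul_right_cancel₀ (pow_ne_zero e hw0) hya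

theorem rt_zero {e K : ℕ} (he : 1 ≤ e) (hK : e + 1 ≤ K) : rt e K (0 : Z) = 0 :=
  rt_of_not fun ⟨_, hy, h⟩ => (pow_ne_zero e (hy.ne_zero (by omega))) h

/-- Every nonzero element is an `e`-th power of an element of `QK K`, up to finitely many factors. -/
theorem exists_finite_pow (e K : ℕ) (he : 1 ≤ e) : ∃ S : Set Z, S.Finite ∧
    ∀ u : Z, u ≠ 0 → ∃ l ∈ S, ∃ w, QK K w ∧ u = l * w ^ e := by
  refine ⟨(fun x : ℕ × Z => p ^ x.1 * x.2) '' ((range e : Set ℕ) ×ˢ (Un p (K + 2 * e + 1) : Set Z)),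
    (Set.Finite.prod (finite_toSet _) (finite_toSet _)).image _, fun u hu => ?_⟩
  obtain ⟨w, hw, h1⟩ := exists_eq_unit u hu
  obtain ⟨μ, hμ, y, hy⟩ := exists_unit_root e he K hw
  refine ⟨_, ⟨(u.valuation % e, μ), ⟨by simpa using Nat.mod_lt _ he, hμ⟩, rfl⟩,
    p ^ (u.valuation / e) * (1 + p ^ K * y), ⟨_, _, rfl⟩, ?_⟩
  calc u = p ^ u.valuation * w := h1
    _ = p ^ (u.valuation % e + e * (u.valuation / e)) * w := by rw [Nat.mod_add_div]
    _ = _ := by rw [hy, pow_add, mul_comm e, pow_mul]; simp only [mul_pow]; ring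

namespace Chart
variable {M K' : ℕ} {P : Chart B}

theorem Ref.level {M' : ℕ} (h : M ≤ M') {P P' : Chart B} {R : Pt p X → Pt p X}
    (hR : Ref B M' P P' R) : Ref B M P P' R where
  maps := hR.maps
  fst := hR.fst
  ht := hR.ht
  hu := hR.hu
  hv := hR.hv
  mono hP := by
    obtain ⟨e, he, b₁, b₂, hb₁, hb₂, E₁, E₂, hE₁, hE₂, h'⟩ := hR.mono hP
    exact ⟨e, he, b₁, b₂, hb₁, hb₂, E₁, E₂, hE₁.mono h, hE₂.mono h, h'⟩

theorem Cov.level {M' : ℕ} (h : M ≤ M') {S : Pt p X → Prop}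
    {Φ : Chart B → (Pt p X → Pt p X) → Prop} (hC : Cov B M' P S Φ) : Cov B M P S Φ := by
  obtain ⟨n, P', R, h1, h2⟩ := hC
  exact ⟨n, P', R, fun i => ⟨(h1 i).1.level h, (h1 i).2⟩, h2⟩

theorem Mono.level {M' : ℕ} (h : M ≤ M') {g : Pt p X → Z} (hg : P.Mono M' g) : P.Mono M g := by
  obtain ⟨b, hb, k, hk, E, hE, heq⟩ := hg
  exact ⟨b, hb, k, hk, E, hE.mono h, heq⟩

/-- Refining an annulus by adjoining `e`-th roots of the coordinates. -/
theorem cov_pow (hP : ¬ P.ball) {e K₁ : ℕ} (he : 1 ≤ e) (hK₁ : e + 1 ≤ K₁) (hK : P.K ≤ K₁) :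
    Cov B M P (fun _ => True) (fun P' R => ¬ P'.ball ∧ ∃ l n : Z, ∀ q, P'.pts q →
      (R q).2.1 = l * q.2.1 ^ e ∧ (R q).2.2 = n * q.2.2 ^ e ∧ QK K₁ q.2.1 ∧
      (QK K₁ q.2.2 ∨ q.2.2 = 0)) := by
  obtain ⟨S, hS, h⟩ := exists_finite_pow (p := p) e K₁ he
  have hK1 : 1 ≤ K₁ := by omega
  let ι₁ := {l : Z // l ∈ S ∧ QK P.K l}
  have : Finite ι₁ := Set.Finite.subset hS fun l h => h.1
  let ι₂ := {l : Z // l ∈ S}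
  have : Finite ι₂ := hS
  -- the part where `v ≠ 0`, and the part where `v = 0`
  refine Cov.union (S₁ := fun q => q.2.2 ≠ 0) (S₂ := fun q => q.2.2 = 0) ?_ ?_
    fun q _ _ => (em _).symm
  · have hT : ∀ i : ι₁ × ι₂, B.T fun x => dv (P.ε x) (i.1.1 * i.2.1) := fun i =>
      B.div P.hε (B.T_const _)
    let P' : ι₁ × ι₂ → Chart B := fun i =>
      { C := fun x => P.C x ∧ (i.1.1 * i.2.1 ∣ P.ε x ∧ ¬ rt e K₁ (dv (P.ε x) (i.1.1 * i.2.1)) = 0)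
        hC := B.inter P.hC (B.inter (Base.Q_dvd (B.T_const _) P.hε)
          (B.compl (B.zero (B.root he hK₁ (hT i)))))
        c := P.c
        hc := P.hc
        β := fun x => P.β x * i.1.1 ^ P.N
        hβ := Base.T_mul P.hβ (B.T_const _)
        ε := fun x => rt e K₁ (dv (P.ε x) (i.1.1 * i.2.1))
        hε := B.root he hK₁ (hT i)
        N := e * P.N
        K := K₁
        ball := False
        hN := Nat.mul_pos he P.hN
        hK := hK1
        hball := fun h => h.elim }
    refine Cov.of_fintype P' (fun i q => (q.1, i.1.1 * q.2.1 ^ e, i.2.1 * q.2.2 ^ e))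
      (fun i => ⟨⟨?_, fun _ _ => rfl, fun q _ => ?_, ((O_u _).pow e).cmul _, ((O_v _).pow e).cmul _,
        fun _ => ⟨e, fun h => h.elim, _, _, B.T_const i.1.1, B.T_const i.2.1, _, _, One_one _ _,
          One_one _ _, fun q _ => by simp⟩⟩, fun h => h, i.1.1, i.2.1,
        fun q hq => ⟨rfl, rfl, hq.2.2.2 (fun h => h), Or.inl ?_⟩⟩) ?_
    · rintro ⟨x, u, v⟩ ⟨⟨h1, h2, h3⟩, h4, -, h5⟩
      simp only [P'] at h2 h3 h4 h5
      have h6 := rt_ne_zero h3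
      refine ⟨h1, ?_, fun h => absurd h hP, fun _ => i.1.2.2.mul (((h5 fun h => h).mono hK).pow e)⟩
      have h7 := dv_mul' h2
      rw [← h6.2, ← h4] at h7
      dsimp only
      rw [← h7]; ring
    · simp only [t, P']; ring
    · have h3 := hq.1.2.2
      have h4 := hq.2.1
      simp only [P'] at h3 h4
      exact QK.of_mul hK1 (h4 ▸ (rt_ne_zero h3).1) (hq.2.2.2 fun h => h)
    · rintro ⟨x, u, v⟩ ⟨h1, h2, -, h4⟩ hv
      have hu := h4 hP
      simp only at hv hu h2
      obtain ⟨l, hl, w, hw, hlw⟩ := h u (hu.ne_zero P.hK)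
      obtain ⟨n, hn, y, hy, hny⟩ := h v hv
      have hl' : QK P.K l := by
        rw [hlw, mul_comm] at hu
        exact QK.of_mul P.hK hu ((hw.mono hK).pow e)
      have hl0 : l ≠ 0 := hl'.ne_zero P.hK
      have hn0 : n ≠ 0 := fun h => hv (by rw [hny, h, zero_mul])
      have h5 : P.ε x = l * n * (w * y) ^ e := by rw [← h2, hlw, hny]; ring
      have h6 : rt e K₁ (dv (P.ε x) (l * n)) = w * y :=
        rt_eq he hK₁ (hw.mul hy) (dv_eq (mul_ne_zero hl0 hn0) h5).symm
      refine ⟨(⟨l, hl, hl'⟩, ⟨n, hn⟩), (x, w, y), ⟨⟨h1, ⟨_, h5⟩, ?_⟩, h6.symm, fun h => h.elim,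
        fun _ => hw⟩, ?_⟩
      · exact h6 ▸ (hw.mul hy).ne_zero hK1
      · simp [hlw, hny]
  · let P' : ι₁ → Chart B := fun i =>
      { C := fun x => P.C x ∧ P.ε x = 0
        hC := B.inter P.hC (B.zero P.hε)
        c := P.c
        hc := P.hc
        β := fun x => P.β x * i.1 ^ P.N
        hβ := Base.T_mul P.hβ (B.T_const _)
        ε := fun x => 0
        hε := B.T_const 0
        N := e * P.N
        K := K₁
        ball := False
        hN := Nat.mul_pos he P.hN
        hK := hK1
        hball := fun h => h.elim }
    have hv0 : ∀ i q, (P' i).pts q → q.2.2 = 0 := fun i q hq =>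
      (mul_eq_zero.1 hq.2.1).resolve_left ((hq.2.2.2 fun h => h).ne_zero hK1)
    refine Cov.of_fintype P' (fun i q => (q.1, i.1 * q.2.1 ^ e, 0 * q.2.2 ^ e))
      (fun i => ⟨⟨?_, fun _ _ => rfl, fun q _ => ?_, ((O_u _).pow e).cmul _, ((O_v _).pow e).cmul _,
        fun _ => ⟨e, fun h => h.elim, _, _, B.T_const i.1, B.T_const 0, _, _, One_one _ _,
          One_one _ _, fun q _ => by simp⟩⟩, fun h => h, i.1, 0,
        fun q hq => ⟨rfl, rfl, hq.2.2.2 (fun h => h), Or.inr (hv0 i q hq)⟩⟩) ?_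
    · rintro ⟨x, u, v⟩ ⟨h1, h4, -, h5⟩
      exact ⟨h1.1, by simp [h1.2], fun h => absurd h hP,
        fun _ => i.2.2.mul (((h5 fun h => h).mono hK).pow e)⟩
    · simp only [t, P']; ring
    · rintro ⟨x, u, v⟩ ⟨h1, h2, -, h4⟩ hv
      have hu := h4 hP
      simp only at hv hu h2
      obtain ⟨l, hl, w, hw, hlw⟩ := h u (hu.ne_zero P.hK)
      have hl' : QK P.K l := by
        rw [hlw, mul_comm] at hu
        exact QK.of_mul P.hK hu ((hw.mono hK).pow e)
      refine ⟨⟨l, hl, hl'⟩, (x, w, 0), ⟨⟨h1, by rw [← h2, hv, mul_zero]⟩, mul_zero _,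
        fun h => h.elim, fun _ => hw⟩, ?_⟩
      simp [hlw, hv]

/-- Analytic functions are stable under taking roots, after covering. -/
theorem cov_root (hM : 1 ≤ M) {e K : ℕ} (he : 1 ≤ e) (hK : e + 1 ≤ K) {f : Pt p X → Z}
    (hf : P.O f) : Cov B M P (fun _ => True) (fun P' R => P'.O (fun q => rt e K (f (R q)))) := by
  let M' := max M (K + 2 * e + 1)
  obtain ⟨η, η₁, hη₁, h1, h2, -, -⟩ := exists_eta (p := p) e K he hK
  refine ((prep (M := M') (hM.trans (le_max_left _ _)) hf).level (le_max_left _ _)).bind ?_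
  rintro P' R hR ⟨hP', b, hb, k, -, E, hE, h3⟩
  obtain ⟨G, hG, hE⟩ := hE.mono (le_max_right M (K + 2 * e + 1))
  refine (cov_pow (K₁ := max K P'.K) hP' he (hK.trans (le_max_left _ _)) (le_max_right _ _)).mono
    (fun _ _ h => h) fun P'' R' hR' ⟨hP'', l, n, h4⟩ => ?_
  have hO : P''.O (fun q => η (G (R' q))) :=
    ((P''.O_const 1).add ((O.comp1 hη₁ (hG.ref hR')).cmul (p ^ K))).congr fun q _ => (h1 _).symm
  have hQ : ∀ w, QK K (η w) := fun w => ⟨0, η₁ w, by rw [h1]; simp⟩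
  have key : ∀ a w s : Z, (QK K w ∨ w = 0) →
      rt e K (a * w ^ e * (1 + (p : Z) ^ (K + 2 * e + 1) * s)) = rt e K a * w * η s := by
    rintro a w s (hw | rfl)
    · rw [← h2, mul_assoc, ← mul_pow, rt_mul_pow he hK _ (hw.mul (hQ s))]; ring
    · rw [zero_pow (by omega), mul_zero, zero_mul, rt_zero he hK]; ring
  have hz : ∀ w : Z, QK (max K P'.K) w ∨ w = 0 → QK K (w ^ k) ∨ w ^ k = 0 := fun w hw => by
    rcases hw with hw | rfl
    · exact Or.inl ((hw.mono (le_max_left _ _)).pow k)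
    · rcases k with _ | k
      · exact Or.inl (by simpa using QK_one K)
      · exact Or.inr (by simp)
  rcases h3 with h3 | h3
  · have hT : B.T (fun x => rt e K (b x * l ^ k)) := B.root he hK (Base.T_mul hb (B.T_const _))
    refine ((O.term hT).mul ((P''.O_u.pow k).mul hO)).congr fun q hq => ?_
    have h5 : f (R (R' q)) = _ := h3 _ (hR'.maps q hq)
    dsimp only
    obtain ⟨h6, -, h7, -⟩ := h4 q hq
    rw [h5, hE _ (hR'.maps q hq), h6, hR'.fst q hq]
    rw [show b q.1 * (l * q.2.1 ^ e) ^ k = b q.1 * l ^ k * (q.2.1 ^ k) ^ e by ring,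
      key _ _ _ (hz _ (Or.inl h7))]
    ring
  · have hT : B.T (fun x => rt e K (b x * n ^ k)) := B.root he hK (Base.T_mul hb (B.T_const _))
    refine ((O.term hT).mul ((P''.O_v.pow k).mul hO)).congr fun q hq => ?_
    have h5 : f (R (R' q)) = _ := h3 _ (hR'.maps q hq)
    dsimp only
    obtain ⟨-, h6, -, h7⟩ := h4 q hq
    rw [h5, hE _ (hR'.maps q hq), h6, hR'.fst q hq]
    rw [show b q.1 * (n * q.2.2 ^ e) ^ k = b q.1 * n ^ k * (q.2.2 ^ k) ^ e by ring,
      key _ _ _ (hz _ h7)]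
    ring

end Chart

end

section

variable {X : Type} {B : Base p X}

/-! ### Analytic functions on charts are stable under division -/

theorem dv_mul_unit {a b w e e' i : Z} (he : IsUnit e) (hi : e' * i = 1) (hw : b * w * e' ≠ 0) :
    dv (a * w * e) (b * w * e') = dv a b * e * i := by
  have hb : b ≠ 0 := fun h => hw (by rw [h]; ring)
  have hw' : w ≠ 0 := fun h => hw (by rw [h]; ring)
  by_cases h : b ∣ a
  · refine dv_eq hw ?_
    have := dv_mul hb h
    linear_combination (-(w * e)) * this - b * w * dv a b * e * hi
  · rw [dv_of_not h, dv_of_not, zero_mul, zero_mul]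
    rintro ⟨c, hc⟩
    apply h
    rw [← he.dvd_mul_right]
    exact ⟨e' * c, mul_right_cancel₀ hw' (by linear_combination hc)⟩

namespace Chart
variable {M K' : ℕ} {P : Chart B}

/-- The monomial of degree `d`, which is a power of `u` if `0 ≤ d` and a power of `v` else. -/
noncomputable def wd (d : ℤ) (q : Pt p X) : Z := if 0 ≤ d then q.2.1 ^ d.toNat else q.2.2 ^ (-d).toNat

theorem Lau.wd {b : X → Z} (hb : B.T b) (d : ℤ) : P.Lau d (fun q => b q.1 * wd d q) := by
  by_cases h : 0 ≤ d
  · have := Lau.u (P := P) hb d.toNat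
    rw [Int.toNat_of_nonneg h] at this
    simpa [Chart.wd, h] using this
  · have := Lau.v (P := P) hb (-d).toNat
    rw [Int.toNat_of_nonneg (by omega), neg_neg] at this
    simpa [Chart.wd, h] using this

theorem Mono.exists_wd {g : Pt p X → Z} (hg : P.Mono M g) :
    ∃ b, B.T b ∧ ∃ d : ℤ, (P.ball → d = 0) ∧ ∃ E, P.One M E ∧
      ∀ q, P.pts q → g q = b q.1 * wd d q * E q := by
  obtain ⟨b, hb, k, hk, E, hE, h | h⟩ := hg
  · exact ⟨b, hb, k, fun h => by simp [hk h], E, hE, fun q hq => by simp [h q hq, wd]⟩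
  · refine ⟨b, hb, -k, fun h => by simp [hk h], E, hE, fun q hq => ?_⟩
    rcases k with _ | k
    · simp [h q hq, wd]
    · rw [h q hq, wd, if_neg (by push_cast; omega), neg_neg, Int.toNat_natCast]

theorem One.isUnit {E : Pt p X → Z} (hM : 1 ≤ M) (hE : P.One M E) {q : Pt p X} (hq : P.pts q) :
    IsUnit (E q) := by
  obtain ⟨g, -, h⟩ := hE.inv hM
  exact IsUnit.of_mul_eq_one _ (h q hq)

theorem Mono.exists_zero (hM : 1 ≤ M) {g : Pt p X → Z} (hg : P.Mono M g) :
    ∃ D : X → Prop, B.Q D ∧ ∀ q, P.pts q → (g q = 0 ↔ D q.1) := by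
  obtain ⟨b, hb, d, hd, E, hE, h⟩ := hg.exists_wd
  by_cases h0 : 0 ≤ d
  · refine ⟨_, B.zero hb, fun q hq => ?_⟩
    rw [h q hq, mul_eq_zero, or_iff_left (hE.isUnit hM hq).ne_zero, mul_eq_zero, or_iff_left]
    by_cases hP : P.ball
    · simp [wd, hd hP]
    · simp [wd, h0, u_ne hP hq]
  · have hP : ¬ P.ball := fun h => by have := hd h; omega
    refine ⟨_, Base.Q_union (B.zero hb) (B.zero P.hε), fun q hq => ?_⟩
    rw [h q hq, mul_eq_zero, or_iff_left (hE.isUnit hM hq).ne_zero, mul_eq_zero, ← hq.2.1,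
      mul_eq_zero, or_iff_right (u_ne hP hq)]
    simp only [wd, if_neg h0]
    rw [pow_eq_zero_iff (by omega)]

theorem O_wd (P : Chart B) (d : ℤ) : P.O (wd d) := by
  by_cases h : 0 ≤ d
  · exact (P.O_u.pow d.toNat).congr fun q _ => by simp [wd, h]
  · exact (P.O_v.pow (-d).toNat).congr fun q _ => by simp [wd, h]

/-- Analytic functions are stable under division, after covering. -/
theorem cov_div (hM : 1 ≤ M) {f g : Pt p X → Z} (hf : P.O f) (hg : P.O g) :
    Cov B M P (fun _ => True) (fun P' R => P'.O (fun q => dv (f (R q)) (g (R q)))) := by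
  refine (prep hM hf).bind ?_
  rintro P₁ R₁ hR₁ ⟨-, hf⟩
  refine (prep hM (hg.ref hR₁)).bind ?_
  rintro P₂ R₂ hR₂ ⟨hP₂, hg⟩
  replace hf := hf.ref hR₂
  dsimp only at hf hg
  suffices H : ∀ f g, P₂.Mono M f → P₂.Mono M g → Cov B M P₂ (fun _ => True)
      (fun P' R => P'.O (fun q => dv (f (R q)) (g (R q)))) from H _ _ hf hg
  intro f g hf hg
  obtain ⟨D, hD, hD'⟩ := hg.exists_zero hM
  refine Cov.cases hD (Cov.refl ?_) ?_
  · refine (O_const _ 0).congr fun q hq => ?_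
    rw [restrict_pts] at hq
    simp only [id]
    rw [(hD' q hq.1).2 hq.2, dv_zero_right]
  replace hf := hf.ref (Ref.restrict M P₂ (B.compl hD))
  replace hg := hg.ref (Ref.restrict M P₂ (B.compl hD))
  have hg0 : ∀ q, (P₂.restrict (B.compl hD)).pts q → g q ≠ 0 := fun q hq => by
    rw [restrict_pts] at hq
    exact fun h => hq.2 ((hD' q hq.1).1 h)
  have hP : ¬ (P₂.restrict (B.compl hD)).ball := hP₂
  generalize P₂.restrict (B.compl hD) = P₂ at hf hg hg0 hP
  clear hD' hD hP₂ D
  dsimp only [id] at hf hg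
  -- the case of equal degrees
  have same : ∀ (P' : Chart B) (b b' : X → Z) (d : ℤ) (E E' f g : Pt p X → Z), B.T b → B.T b' →
      P'.One M E → P'.One M E' → (∀ q, P'.pts q → g q ≠ 0) →
      (∀ q, P'.pts q → f q = b q.1 * wd d q * E q) →
      (∀ q, P'.pts q → g q = b' q.1 * wd d q * E' q) → P'.O (fun q => dv (f q) (g q)) := by
    intro P' b b' d E E' f g hb hb' hE hE' h0 h h'
    obtain ⟨I, hI, hI'⟩ := hE'.inv hM
    refine (((O.term (B.div hb hb')).mul hE.O).mul hI.O).congr fun q hq => ?_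
    rw [h q hq, h' q hq, dv_mul_unit (hE.isUnit hM hq) (hI' q hq)]
    rw [← h' q hq]; exact h0 q hq
  obtain ⟨b, hb, d, -, E, hE, h⟩ := hf.exists_wd
  obtain ⟨b', hb', d', -, E', hE', h'⟩ := hg.exists_wd
  by_cases hd : d = d'
  · subst hd
    exact Cov.refl (same _ _ _ _ _ _ _ _ hb hb' hE hE' hg0 h h')
  refine (lau_pair (K' := 0) hM hP hd (Lau.wd hb d) (Lau.wd hb' d')).mono (fun _ _ h => h) ?_
  rintro P' R hR ⟨-, hP' | ⟨F, hF, h1⟩ | ⟨F, hF, h1⟩⟩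
  · obtain ⟨b₁, hb₁, d₁, hd₁, E₁, hE₁, h₁⟩ := (hf.ref hR).exists_wd
    obtain ⟨b₂, hb₂, d₂, hd₂, E₂, hE₂, h₂⟩ := (hg.ref hR).exists_wd
    obtain rfl := hd₁ hP'
    obtain rfl := hd₂ hP'
    exact same _ _ _ _ _ _ _ _ hb₁ hb₂ hE₁ hE₂ (fun q hq => hg0 _ (hR.maps q hq)) h₁ h₂
  · obtain ⟨I, hI, hI'⟩ := hE'.inv hM
    refine (((hF.cmul (p ^ M)).mul (hE.O.ref hR)).mul (hI.O.ref hR)).congr fun q hq => ?_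
    have hq' := hR.maps q hq
    have h2 := h1 q hq
    dsimp only at h2 ⊢
    refine (dv_eq (hg0 _ hq') ?_).symm
    rw [h _ hq', h' _ hq', h2]
    linear_combination (-((p : Z) ^ M * F q * E (R q) * b' (R q).1 * wd d' (R q))) * hI' _ hq'
  · refine (O_const _ 0).congr fun q hq => ?_
    have hq' := hR.maps q hq
    have h2 := h1 q hq
    dsimp only at h2 ⊢
    have h3 := hg0 _ hq'
    rw [dv_of_not]
    rintro ⟨c, hc⟩
    rw [h' _ hq', h2] at h3 hc
    rw [h _ hq'] at hc
    have h4 : b (R q).1 * wd d (R q) ≠ 0 := fun h => h3 (by rw [h]; ring)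
    have h5 := mul_left_cancel₀ h4 (show _ * E (R q) = _ * ((p : Z) ^ M * (F q * E' (R q) * c)) by
      linear_combination hc)
    have h6 := hE.isUnit hM hq'
    rw [h5] at h6
    exact p_not_unit (isUnit_of_dvd_unit (dvd_pow_self _ (by omega)) (isUnit_of_mul_isUnit_left h6))

end Chart

end

section

variable {X : Type} {B : Base p X}

/-! ### Terms and the preparation theorem -/

namespace Chart
variable {M : ℕ} {P : Chart B}

theorem Cov.forall {κ : Type} [Finite κ] {Φ : κ → Chart B → Prop}
    (hΦ : ∀ i P P' R, Ref B M P P' R → Φ i P → Φ i P')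
    (h : ∀ i P, Cov B M P (fun _ => True) (fun P' _ => Φ i P')) (P : Chart B) :
    Cov B M P (fun _ => True) (fun P' _ => ∀ i, Φ i P') := by
  classical
  have := Fintype.ofFinite κ
  suffices H : ∀ (s : Finset κ), Cov B M P (fun _ => True) (fun P' _ => ∀ i ∈ s, Φ i P') by
    simpa using H Finset.univ
  intro s
  induction s using Finset.induction_on with
  | empty => exact Cov.refl (by simp)
  | insert a s _ ih =>
    refine ih.bind fun P' R _ h1 => (h a P').mono (fun _ _ h => h) fun P'' R' hR' h2 i hi => ?_
    rcases Finset.mem_insert.1 hi with rfl | hi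
    · exact h2
    · exact hΦ _ _ _ _ hR' (h1 i hi)

end Chart

/-- Terms in the variables indexed by `ι`: the functions obtained from the coordinates by composition
with analytic functions, division and extraction of roots. -/
inductive IsTerm {ι : Type} : ((ι → ℤ_[p]) → ℤ_[p]) → Prop
  | coord (i : ι) : IsTerm (fun x => x i)
  | comp {κ : Type} [Finite κ] {H : (κ → ℤ_[p]) → ℤ_[p]} (hH : IsAn H)
      {f : κ → (ι → ℤ_[p]) → ℤ_[p]} (hf : ∀ i, IsTerm (f i)) : IsTerm (fun x => H (fun i => f i x))
  | div {f g : (ι → ℤ_[p]) → ℤ_[p]} (hf : IsTerm f) (hg : IsTerm g) :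
      IsTerm (fun x => dv (f x) (g x))
  | root {e K : ℕ} (he : 1 ≤ e) (hK : e + 1 ≤ K) {f : (ι → ℤ_[p]) → ℤ_[p]} (hf : IsTerm f) :
      IsTerm (fun x => rt e K (f x))

/-- Boolean combinations of zero sets of terms. -/
inductive IsQf {ι : Type} : ((ι → ℤ_[p]) → Prop) → Prop
  | zero {f : (ι → ℤ_[p]) → ℤ_[p]} (hf : IsTerm f) : IsQf (fun x => f x = 0)
  | inter {C D : (ι → ℤ_[p]) → Prop} (hC : IsQf C) (hD : IsQf D) : IsQf (fun x => C x ∧ D x)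
  | compl {C : (ι → ℤ_[p]) → Prop} (hC : IsQf C) : IsQf (fun x => ¬ C x)

/-- The base structure of all terms in the variables indexed by `ι`. -/
def termBase (p : ℕ) [Fact p.Prime] (ι : Type) : Base p (ι → ℤ_[p]) where
  T := IsTerm
  Q := IsQf
  comp hH _ hf := IsTerm.comp hH hf
  div := IsTerm.div
  root := IsTerm.root
  zero := IsQf.zero
  inter := IsQf.inter
  compl := IsQf.compl

theorem IsTerm.subst {ι ι' : Type} {F : (ι → Z) → Z} (hF : IsTerm F) {r : (ι' → Z) → ι → Z}
    (hr : ∀ i, IsTerm (fun x => r x i)) : IsTerm (fun x => F (r x)) := by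
  induction hF with
  | coord i => exact hr i
  | comp hH _ ih => exact IsTerm.comp hH ih
  | div _ _ h1 h2 => exact h1.div h2
  | root he hK _ h => exact h.root he hK

/-- Adding a coordinate. -/
def snoc {ι : Type} (x : ι → ℤ_[p]) (t : ℤ_[p]) : Option ι → ℤ_[p] := fun o => o.elim t x

namespace Chart

theorem O_t {X : Type} {B : Base p X} (P : Chart B) : P.O P.t :=
  (O.term P.hc).add ((O.term P.hβ).mul (P.O_u.pow P.N))

/-- Terms are analytic on charts, after covering. -/
theorem cov_term {ι : Type} {M : ℕ} (hM : 1 ≤ M) {F : (Option ι → Z) → Z} (hF : IsTerm F)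
    (P : Chart (termBase p ι)) : Cov _ M P (fun _ => True)
      (fun P' _ => P'.O (fun q => F (snoc q.1 (P'.t q)))) := by
  have stab : ∀ {F : (Option ι → Z) → Z} {P P' : Chart (termBase p ι)} {R}, Ref _ M P P' R →
      P.O (fun q => F (snoc q.1 (P.t q))) → P'.O (fun q => F (snoc q.1 (P'.t q))) :=
    fun hR h => (h.ref hR).congr fun q hq => by
      rw [hR.fst q hq, hR.ht q hq]
  induction hF generalizing P with
  | coord i =>
    refine Cov.refl ?_
    rcases i with _ | i
    · exact P.O_t
    · exact O.term (B := termBase p ι) (f := fun x => x i) (IsTerm.coord i)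
  | @comp κ _ H hH f _ ih =>
    exact (Cov.forall (Φ := fun i P => P.O (fun q => f i (snoc q.1 (P.t q))))
      (fun i P P' R hR h => stab hR h) ih P).mono (fun _ _ h => h)
      fun P' R _ h => O.comp hH h
  | div _ _ h1 h2 =>
    refine (h1 P).bind fun P₁ R₁ _ h1 => (h2 P₁).bind fun P₂ R₂ hR₂ h2 =>
      (cov_div hM (stab hR₂ h1) h2).mono (fun _ _ h => h) fun P₃ R₃ hR₃ h3 =>
        h3.congr fun q hq => ?_
    dsimp only; rw [hR₃.fst q hq, hR₃.ht q hq]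
  | root he hK _ h1 =>
    refine (h1 P).bind fun P₁ R₁ _ h1 =>
      (cov_root hM he hK h1).mono (fun _ _ h => h) fun P₃ R₃ hR₃ h3 => h3.congr fun q hq => ?_
    dsimp only; rw [hR₃.fst q hq, hR₃.ht q hq]

/-- The preparation theorem: the affine line is covered by finitely many annular charts,
on which finitely many given terms are monomials up to units. -/
theorem cov_terms {ι κ : Type} [Finite κ] {F : κ → (Option ι → Z) → Z} (hF : ∀ i, IsTerm (F i)) :
    ∃ (n : ℕ) (P : Fin n → Chart (termBase p ι)), (∀ j, ¬ (P j).ball) ∧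
      (∀ j i, (P j).Mono 1 (fun q => F i (snoc q.1 ((P j).t q)))) ∧
      ∀ x t, ∃ j u v, (P j).pts (x, u, v) ∧ (P j).t (x, u, v) = t := by
  have stab : ∀ (i : κ) (P P' : Chart (termBase p ι)) (R), Ref _ 1 P P' R →
      P.Mono 1 (fun q => F i (snoc q.1 (P.t q))) → P'.Mono 1 (fun q => F i (snoc q.1 (P'.t q))) :=
    fun i P P' R hR h => (h.ref hR).congr fun q hq => by
      rw [hR.fst q hq, hR.ht q hq]
  have h1 : ∀ (i : κ) (P : Chart (termBase p ι)), Cov _ 1 P (fun _ => True)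
      (fun P' _ => P'.Mono 1 (fun q => F i (snoc q.1 (P'.t q)))) := fun i P =>
    (cov_term le_rfl (hF i) P).bind fun P₁ R₁ _ h1 =>
      (prep le_rfl h1).mono (fun _ _ h => h) fun P₂ R₂ hR₂ h2 => h2.2.congr fun q hq => by
        dsimp only; rw [hR₂.fst q hq, hR₂.ht q hq]
  have h2 : ∀ P : Chart (termBase p ι), Cov _ 1 P (fun _ => True)
      (fun P' _ => ¬ P'.ball ∧ ∀ i, P'.Mono 1 (fun q => F i (snoc q.1 (P'.t q)))) := fun P =>
    (Cov.forall stab h1 P).bind fun P₁ R₁ _ h3 => (prep le_rfl P₁.O_t).mono (fun _ _ h => h)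
      fun P₂ R₂ hR₂ h4 => ⟨h4.1, fun i => stab i _ _ _ hR₂ (h3 i)⟩
  let P₀ : Chart (termBase p ι) :=
    { C := fun _ => True, c := fun _ => 0, β := fun _ => 1, ε := fun _ => 0, N := 1, K := 1,
      ball := True, hC := (termBase p ι).Q_true, hc := (termBase p ι).T_const 0,
      hβ := (termBase p ι).T_const 1, hε := (termBase p ι).T_const 0, hN := le_rfl, hK := le_rfl,
      hball := fun _ => rfl }
  obtain ⟨n, P, R, h3, h4⟩ := h2 P₀
  refine ⟨n, P, fun j => (h3 j).2.1, fun j => (h3 j).2.2, fun x t => ?_⟩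
  obtain ⟨j, ⟨x', u, v⟩, hq, h5⟩ := h4 (x, t, 0) ⟨trivial, mul_zero _, fun _ => rfl,
    fun h => absurd trivial h⟩ trivial
  have h6 := (h3 j).1.fst _ hq
  have h7 := (h3 j).1.ht _ hq
  rw [h5] at h6 h7
  obtain rfl : x = x' := h6
  exact ⟨j, u, v, hq, by rw [← h7]; simp [Chart.t, P₀]⟩

end Chart

end

/-! ### Definable sets -/

/-- Semilinear (that is, Presburger definable) conditions on tuples of natural numbers. -/
def SL {κ : Type} (Θ : (κ → ℕ) → Prop) : Prop := IsSemilinearSet {γ | Θ γ}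

/-- Affine functions on tuples of natural numbers. -/
def Aff {κ : Type} (f : (κ → ℕ) → ℕ) : Prop :=
  ∃ (a : ℕ) (φ : (κ → ℕ) →+ ℕ), ∀ γ, f γ = a + φ γ

section SL
variable {κ κ' : Type}

theorem Aff.const (a : ℕ) : Aff (fun _ : κ → ℕ => a) := ⟨a, 0, fun _ => rfl⟩

theorem Aff.coord (i : κ) : Aff (fun γ : κ → ℕ => γ i) :=
  ⟨0, Pi.evalAddMonoidHom _ i, fun γ => by simp⟩

theorem Aff.add {f g : (κ → ℕ) → ℕ} (hf : Aff f) (hg : Aff g) : Aff (fun γ => f γ + g γ) := by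
  obtain ⟨a, φ, h⟩ := hf
  obtain ⟨b, ψ, h'⟩ := hg
  exact ⟨a + b, φ + ψ, fun γ => by simp [h, h']; ring⟩

theorem Aff.mul (c : ℕ) {f : (κ → ℕ) → ℕ} (hf : Aff f) : Aff (fun γ => c * f γ) := by
  obtain ⟨a, φ, h⟩ := hf
  exact ⟨c * a, c • φ, fun γ => by simp [h]; ring⟩

theorem SL.congr {Θ Θ' : (κ → ℕ) → Prop} (h : SL Θ) (h' : ∀ γ, Θ' γ ↔ Θ γ) : SL Θ' := by
  rwa [show Θ' = Θ from funext fun γ => propext (h' γ)]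

theorem SL.and {Θ Θ' : (κ → ℕ) → Prop} (h : SL Θ) (h' : SL Θ') : SL (fun γ => Θ γ ∧ Θ' γ) :=
  IsSemilinearSet.inter h h'

theorem SL.or {Θ Θ' : (κ → ℕ) → Prop} (h : SL Θ) (h' : SL Θ') : SL (fun γ => Θ γ ∨ Θ' γ) :=
  IsSemilinearSet.union h h'

theorem SL.not [Finite κ] {Θ : (κ → ℕ) → Prop} (h : SL Θ) : SL (fun γ => ¬ Θ γ) :=
  IsSemilinearSet.compl h

theorem SL.const [Finite κ] (P : Prop) : SL (fun _ : κ → ℕ => P) := by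
  by_cases h : P
  · exact SL.congr (Θ := fun _ => True) IsSemilinearSet.univ fun _ => by simp [h]
  · exact SL.congr (Θ := fun _ => False) IsSemilinearSet.empty fun _ => by simp [h]

theorem SL.eq [Finite κ] {f g : (κ → ℕ) → ℕ} (hf : Aff f) (hg : Aff g) :
    SL (fun γ => f γ = g γ) := by
  obtain ⟨a, φ, h⟩ := hf
  obtain ⟨b, ψ, h'⟩ := hg
  simp only [h, h']
  exact isSemilinearSet_setOfPred_eq a b φ ψ

theorem Aff.eq' [Finite κ] {f : (κ → ℕ) → ℕ} (hf : Aff f) (n : ℕ) : SL (fun γ => f γ = n) :=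
  SL.eq hf (Aff.const n)

theorem SL.reindex [Finite κ'] {Θ : (κ → ℕ) → Prop} (h : SL Θ) (r : κ → κ') :
    SL (fun γ : κ' → ℕ => Θ (fun i => γ (r i))) :=
  IsSemilinearSet.preimage h (LinearMap.funLeft ℕ ℕ r)

theorem SL.exists {Θ : (κ ⊕ κ' → ℕ) → Prop} (h : SL Θ) :
    SL (fun γ : κ → ℕ => ∃ δ : κ' → ℕ, Θ (Sum.elim γ δ)) :=
  IsSemilinearSet.proj h

theorem SL.forall_fin [Finite κ] {α : Type} [Finite α] {Θ : α → (κ → ℕ) → Prop} (h : ∀ i, SL (Θ i)) :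
    SL (fun γ => ∀ i, Θ i γ) := by
  refine SL.congr (Θ := fun γ => ¬ γ ∈ ⋃ i, {γ | ¬ Θ i γ}) ?_ fun γ => by simp
  exact SL.not (IsSemilinearSet.iUnion fun i => (h i).not)

theorem SL.le [Finite κ] {f g : (κ → ℕ) → ℕ} (hf : Aff f) (hg : Aff g) :
    SL (fun γ => f γ ≤ g γ) := by
  obtain ⟨a, φ, h⟩ := hf
  obtain ⟨b, ψ, h'⟩ := hg
  have : SL (fun γ : κ ⊕ Unit → ℕ => a + φ (fun i => γ (Sum.inl i)) + γ (Sum.inr ()) =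
      b + ψ (fun i => γ (Sum.inl i))) :=
    SL.eq (Aff.add ⟨a, φ.comp (LinearMap.funLeft ℕ ℕ Sum.inl).toAddMonoidHom, fun _ => rfl⟩
      (Aff.coord _)) ⟨b, ψ.comp (LinearMap.funLeft ℕ ℕ Sum.inl).toAddMonoidHom, fun _ => rfl⟩
  refine this.exists.congr fun γ => ?_
  rw [h, h', le_iff_exists_add]
  simp only [Sum.elim_inl, Sum.elim_inr]
  exact ⟨fun ⟨c, hc⟩ => ⟨fun _ => c, hc.symm⟩, fun ⟨δ, hc⟩ => ⟨_, hc.symm⟩⟩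

end SL

/-- The valuation increased by `1`, and `0` at `0`. -/
noncomputable def ord1 (x : ℤ_[p]) : ℕ := by
  classical exact if x = 0 then 0 else x.valuation + 1

theorem ord1_zero : ord1 (0 : Z) = 0 := if_pos rfl

theorem ord1_ne {x : Z} (h : x ≠ 0) : ord1 x = x.valuation + 1 := if_neg h

theorem ord1_eq_zero {x : Z} : ord1 x = 0 ↔ x = 0 := by
  by_cases h : x = 0
  · simp [h, ord1_zero]
  · simp [h, ord1_ne]

theorem ppow_dvd_iff_ord1 {n : ℕ} {x : Z} : (p : Z) ^ n ∣ x ↔ ord1 x = 0 ∨ n + 1 ≤ ord1 x := by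
  by_cases h : x = 0
  · simp [h, ord1_zero]
  · rw [ord1_ne h, ppow_dvd_iff h]; omega

/-- Sets of pairs `(x, γ)` given by a semilinear condition on `γ` and on the valuations of
finitely many terms in `x`. -/
def IsDf {ι κ : Type} (S : (ι → ℤ_[p]) → (κ → ℕ) → Prop) : Prop :=
  ∃ (σ : Type) (_ : Finite σ) (τ : σ → (ι → ℤ_[p]) → ℤ_[p]) (Θ : (σ ⊕ κ → ℕ) → Prop),
    (∀ j, IsTerm (τ j)) ∧ SL Θ ∧ ∀ x γ, S x γ ↔ Θ (Sum.elim (fun j => ord1 (τ j x)) γ)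

section Df
variable {ι κ ι' κ' : Type} [Finite κ]

omit [Finite κ] in
theorem IsDf.of {σ : Type} [Finite σ] {τ : σ → (ι → Z) → Z} {Θ : (σ ⊕ κ → ℕ) → Prop}
    (hτ : ∀ j, IsTerm (τ j)) (hΘ : SL Θ) :
    IsDf (fun x γ => Θ (Sum.elim (fun j => ord1 (τ j x)) γ)) :=
  ⟨σ, inferInstance, τ, Θ, hτ, hΘ, fun _ _ => Iff.rfl⟩

omit [Finite κ] in
theorem IsDf.congr {S S' : (ι → Z) → (κ → ℕ) → Prop} (h : IsDf S) (h' : ∀ x γ, S' x γ ↔ S x γ) :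
    IsDf S' := by
  rwa [show S' = S from funext₂ fun x γ => propext (h' x γ)]

theorem IsDf.not {S : (ι → Z) → (κ → ℕ) → Prop} (h : IsDf S) : IsDf (fun x γ => ¬ S x γ) := by
  obtain ⟨σ, _, τ, Θ, hτ, hΘ, h⟩ := h
  simp only [h]
  exact IsDf.of hτ hΘ.not

theorem IsDf.and {S S' : (ι → Z) → (κ → ℕ) → Prop} (h : IsDf S) (h' : IsDf S') :
    IsDf (fun x γ => S x γ ∧ S' x γ) := by
  obtain ⟨σ, _, τ, Θ, hτ, hΘ, h⟩ := h
  obtain ⟨σ', _, τ', Θ', hτ', hΘ', h'⟩ := h'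
  refine (IsDf.of (τ := Sum.elim τ τ') (κ := κ) (fun j => by rcases j with j | j; exacts [hτ j, hτ' j])
    ((hΘ.reindex (Sum.map Sum.inl id)).and (hΘ'.reindex (Sum.map Sum.inr id)))).congr fun x γ => ?_
  rw [h, h']
  have e1 : ∀ g : σ ⊕ σ' → ℕ, (fun i => Sum.elim g γ (Sum.map Sum.inl id i)) =
      Sum.elim (fun j => g (Sum.inl j)) γ := fun g => by funext i; rcases i <;> rfl
  have e2 : ∀ g : σ ⊕ σ' → ℕ, (fun i => Sum.elim g γ (Sum.map Sum.inr id i)) =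
      Sum.elim (fun j => g (Sum.inr j)) γ := fun g => by funext i; rcases i <;> rfl
  rw [e1, e2]; rfl

theorem IsDf.or {S S' : (ι → Z) → (κ → ℕ) → Prop} (h : IsDf S) (h' : IsDf S') :
    IsDf (fun x γ => S x γ ∨ S' x γ) :=
  (h.not.and h'.not).not.congr fun _ _ => by tauto

theorem IsDf.sl {Θ : (κ → ℕ) → Prop} (h : SL Θ) : IsDf (fun (_ : ι → Z) γ => Θ γ) :=
  (IsDf.of (σ := Empty) (τ := fun j => j.elim) (fun j => j.elim) (h.reindex Sum.inr)).congr
    fun _ _ => Iff.rfl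

theorem IsDf.const (P : Prop) : IsDf (fun (_ : ι → Z) (_ : κ → ℕ) => P) := IsDf.sl (SL.const P)

theorem IsDf.forall_fin {α : Type} [Finite α] {S : α → (ι → Z) → (κ → ℕ) → Prop}
    (h : ∀ i, IsDf (S i)) : IsDf (fun x γ => ∀ i, S i x γ) := by
  classical
  have := Fintype.ofFinite α
  suffices H : ∀ s : Finset α, IsDf (fun x γ => ∀ i ∈ s, S i x γ) by simpa using H Finset.univ
  intro s
  induction s using Finset.induction_on with
  | empty => simpa using IsDf.const True
  | insert a s _ ih => simpa using (h a).and ih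

theorem IsDf.exists_fin {α : Type} [Finite α] {S : α → (ι → Z) → (κ → ℕ) → Prop}
    (h : ∀ i, IsDf (S i)) : IsDf (fun x γ => ∃ i, S i x γ) :=
  (IsDf.forall_fin fun i => (h i).not).not.congr fun _ _ => by simp

omit [Finite κ] in
theorem IsDf.subst {S : (ι → Z) → (κ → ℕ) → Prop} (h : IsDf S) {r : (ι' → Z) → ι → Z}
    (hr : ∀ i, IsTerm (fun x => r x i)) : IsDf (fun x γ => S (r x) γ) := by
  obtain ⟨σ, _, τ, Θ, hτ, hΘ, h⟩ := h
  simp only [h]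
  exact IsDf.of (τ := fun j x => τ j (r x)) (fun j => (hτ j).subst hr) hΘ

omit [Finite κ] in
theorem IsDf.reindex [Finite κ'] {S : (ι → Z) → (κ → ℕ) → Prop} (h : IsDf S) (r : κ → κ') :
    IsDf (fun x (γ : κ' → ℕ) => S x (fun i => γ (r i))) := by
  obtain ⟨σ, _, τ, Θ, hτ, hΘ, h⟩ := h
  simp only [h]
  refine (IsDf.of hτ (hΘ.reindex (Sum.map id r))).congr fun x γ => ?_
  refine iff_of_eq (congrArg Θ ?_)
  funext i; rcases i <;> rfl

theorem IsDf.existsNat [Finite κ'] {S : (ι → Z) → (κ ⊕ κ' → ℕ) → Prop} (h : IsDf S) :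
    IsDf (fun x (γ : κ → ℕ) => ∃ δ : κ' → ℕ, S x (Sum.elim γ δ)) := by
  obtain ⟨σ, _, τ, Θ, hτ, hΘ, h⟩ := h
  simp only [h]
  have := hΘ.reindex (κ' := (σ ⊕ κ) ⊕ κ')
    (Sum.elim (fun i => Sum.inl (Sum.inl i)) (Sum.map Sum.inr id))
  refine (IsDf.of hτ this.exists).congr fun x γ => ?_
  refine exists_congr fun δ => iff_of_eq (congrArg Θ ?_)
  funext i; rcases i with i | i | i <;> rfl

theorem IsDf.zero {f : (ι → Z) → Z} (hf : IsTerm f) : IsDf (fun x (_ : κ → ℕ) => f x = 0) :=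
  (IsDf.of (τ := fun _ : Unit => f) (fun _ => hf)
    (SL.eq (Aff.coord (Sum.inl ())) (Aff.const 0))).congr fun _ _ => ord1_eq_zero.symm

theorem IsDf.dvd {f : (ι → Z) → Z} (hf : IsTerm f) {n : (κ → ℕ) → ℕ} (hn : Aff n) :
    IsDf (fun x γ => (p : Z) ^ n γ ∣ f x) := by
  obtain ⟨a, φ, h⟩ := hn
  refine (IsDf.of (τ := fun _ : Unit => f) (κ := κ) (fun _ => hf)
    ((SL.eq (Aff.coord (Sum.inl ())) (Aff.const 0)).or (SL.le (Aff.add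
      ⟨a, φ.comp (LinearMap.funLeft ℕ ℕ Sum.inr).toAddMonoidHom, fun _ => rfl⟩ (Aff.const 1))
      (Aff.coord (Sum.inl ()))))).congr fun x γ => ?_
  rw [h, ppow_dvd_iff_ord1]; rfl

theorem IsDf.qf {C : (ι → Z) → Prop} (hC : IsQf C) : IsDf (fun x (_ : κ → ℕ) => C x) := by
  induction hC with
  | zero hf => exact IsDf.zero hf
  | inter _ _ h h' => exact h.and h'
  | compl _ h => exact h.not

end Df

/-! ### Elimination of quantifiers -/

/-- The graph of the shifted valuation `m` of a monomial `b * u ^ d` (or `b * v ^ (-d)`), as a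
function of the shifted valuations `β` of `b` and `e` of `u * v` and of the valuation `n` of `u`. -/
def OrdMono (d : ℤ) (m β e n : ℕ) : Prop :=
  (β = 0 ∧ m = 0) ∨ (β ≠ 0 ∧ 0 ≤ d ∧ m = β + d.toNat * n) ∨
    (β ≠ 0 ∧ d < 0 ∧ ((e = 0 ∧ m = 0) ∨ (e ≠ 0 ∧ m + (-d).toNat * (n + 1) = β + (-d).toNat * e)))

theorem OrdMono.inj {d : ℤ} {m m' β e n : ℕ} (h : OrdMono d m β e n) (h' : OrdMono d m' β e n) :
    m = m' := by
  unfold OrdMono at h h'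
  generalize (-d).toNat * e = A, (-d).toNat * (n + 1) = A', d.toNat * n = A'' at *
  omega

theorem OrdMono.sl {κ : Type} [Finite κ] (d : ℤ) {m β e n : (κ → ℕ) → ℕ} (hm : Aff m) (hβ : Aff β)
    (he : Aff e) (hn : Aff n) : SL (fun γ => OrdMono d (m γ) (β γ) (e γ) (n γ)) :=
  ((hβ.eq' 0).and (hm.eq' 0)).or ((((hβ.eq' 0).not).and ((SL.const _).and (SL.eq hm
    (hβ.add (hn.mul _))))).or (((hβ.eq' 0).not).and ((SL.const _).and (((he.eq' 0).and
    (hm.eq' 0)).or (((he.eq' 0).not).and (SL.eq (hm.add ((hn.add (Aff.const 1)).mul _))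
    (hβ.add (he.mul _))))))))

theorem ord1_mul {x y : Z} (hx : x ≠ 0) (hy : y ≠ 0) : ord1 (x * y) = ord1 x + y.valuation := by
  rw [ord1_ne hx, ord1_ne (mul_ne_zero hx hy), val_mul hx hy]; omega

theorem ord1_mul_unit {x y : Z} (hy : IsUnit y) : ord1 (x * y) = ord1 x := by
  by_cases hx : x = 0
  · rw [hx, zero_mul]
  · rw [ord1_mul hx hy.ne_zero, val_unit hy, add_zero]

theorem ordMono_ord1 {X : Type} {b u v ε E : Z} (x : X) (d : ℤ) (hE : IsUnit E) (hu : u ≠ 0)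
    (hε : u * v = ε) :
    OrdMono d (ord1 (b * Chart.wd d (x, u, v) * E)) (ord1 b) (ord1 ε) u.valuation := by
  rw [ord1_mul_unit hE, OrdMono]
  by_cases hb : b = 0
  · left; rw [hb, zero_mul]; exact ⟨ord1_zero, ord1_zero⟩
  right
  by_cases hd : 0 ≤ d
  · left
    refine ⟨mt ord1_eq_zero.1 hb, hd, ?_⟩
    rw [Chart.wd, if_pos hd, ord1_mul hb (pow_ne_zero _ hu), PadicInt.valuation_pow]
  right
  rw [Chart.wd, if_neg hd]
  refine ⟨mt ord1_eq_zero.1 hb, by omega, ?_⟩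
  by_cases hv : v = 0
  · left
    rw [← hε, hv, zero_pow (by omega), mul_zero, mul_zero]; exact ⟨ord1_zero, ord1_zero⟩
  · right
    refine ⟨by rw [← hε]; exact mt ord1_eq_zero.1 (mul_ne_zero hu hv), ?_⟩
    rw [ord1_mul hb (pow_ne_zero _ hv), PadicInt.valuation_pow, ← hε, mul_comm u,
      ord1_mul hv hu, ord1_ne hv]
    ring

/-- On an annular chart the shifted valuation of a monomial function is determined by the
shifted valuations of its coefficients and the valuation of `u`. -/
theorem Chart.Mono.exists_ord {X : Type} {B : Base p X} {P : Chart B} {f : Pt p X → Z} (hP : ¬ P.ball)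
    (hf : P.Mono 1 f) : ∃ b, B.T b ∧ ∃ d : ℤ, ∀ x u v, P.pts (x, u, v) →
      OrdMono d (ord1 (f (x, u, v))) (ord1 (b x)) (ord1 (P.ε x)) u.valuation := by
  obtain ⟨b, hb, d, -, E, hE, h⟩ := hf.exists_wd
  refine ⟨b, hb, d, fun x u v hq => ?_⟩
  rw [h _ hq]
  exact ordMono_ord1 x d (hE.isUnit le_rfl hq) (Chart.u_ne hP hq) hq.2.1

/-- Elimination of a quantifier over the `p`-adic integers. -/
theorem IsDf.existsZ {ι κ : Type} [Finite κ] {S : (Option ι → Z) → (κ → ℕ) → Prop} (hS : IsDf S) :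
    IsDf (fun x γ => ∃ t, S (snoc x t) γ) := by
  obtain ⟨σ, _, τ, Θ, hτ, hΘ, h⟩ := hS
  obtain ⟨k, P, hP, hM, hcov⟩ := Chart.cov_terms hτ
  choose b hb d hd using fun i j => (hM i j).exists_ord (hP i)
  have key : ∀ i, IsDf (fun x (γ : κ → ℕ) => (P i).C x ∧ ∃ δ : Option σ → ℕ,
      ((ord1 ((P i).ε x) = 0 ∨ δ none + 1 ≤ ord1 ((P i).ε x)) ∧
      (∀ j, OrdMono (d i j) (δ (some j)) (ord1 (b i j x)) (ord1 ((P i).ε x)) (δ none)) ∧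
        Θ (Sum.elim (fun j => δ (some j)) γ))) := by
    intro i
    refine (IsDf.qf (P i).hC).and ?_
    have h1 : SL (fun γ : Option σ ⊕ (κ ⊕ Option σ) → ℕ =>
        (γ (Sum.inl none) = 0 ∨ γ (Sum.inr (Sum.inr none)) + 1 ≤ γ (Sum.inl none)) ∧
        (∀ j, OrdMono (d i j) (γ (Sum.inr (Sum.inr (some j)))) (γ (Sum.inl (some j)))
          (γ (Sum.inl none)) (γ (Sum.inr (Sum.inr none)))) ∧
        Θ (fun l => γ (Sum.elim (fun j => Sum.inr (Sum.inr (some j))) (fun l => Sum.inr (Sum.inl l))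
          l))) :=
      (((Aff.coord _).eq' 0).or (SL.le ((Aff.coord _).add (Aff.const 1)) (Aff.coord _))).and
        ((SL.forall_fin fun j => OrdMono.sl _ (Aff.coord _) (Aff.coord _) (Aff.coord _)
          (Aff.coord _)).and (hΘ.reindex _))
    have h2 := (IsDf.of (κ := κ ⊕ Option σ) (ι := ι)
      (τ := fun o : Option σ => o.elim (P i).ε (b i))
      (fun o => by rcases o with _ | j; exacts [(P i).hε, hb i j]) h1).existsNat
    refine h2.congr fun x γ => exists_congr fun δ => and_congr Iff.rfl (and_congr Iff.rfl ?_)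
    refine iff_of_eq (congrArg Θ ?_)
    funext l; rcases l <;> rfl
  refine (IsDf.exists_fin key).congr fun x γ => ⟨?_, ?_⟩
  · rintro ⟨t, ht⟩
    obtain ⟨i, u, v, hq, rfl⟩ := hcov x t
    have hu := Chart.u_ne (hP i) hq
    refine ⟨i, hq.1, fun o => o.elim u.valuation
      fun j => ord1 (τ j (snoc x ((P i).t (x, u, v)))), ?_, fun j => hd i j x u v hq, (h _ _).1 ht⟩
    rw [← ppow_dvd_iff_ord1]
    exact ((ppow_dvd_iff hu).2 le_rfl).trans ⟨v, hq.2.1.symm⟩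
  · rintro ⟨i, hC, δ, h1, h2, h3⟩
    obtain ⟨v, hv⟩ := ppow_dvd_iff_ord1.2 h1
    have hq : (P i).pts (x, (p : Z) ^ δ none, v) :=
      ⟨hC, hv.symm, fun h => absurd h (hP i), fun _ => QK_ppow _ _⟩
    refine ⟨(P i).t (x, (p : Z) ^ δ none, v), (h _ _).2 ?_⟩
    convert h3 using 2
    funext j
    have := hd i j x _ v hq
    rw [val_ppow] at this
    exact this.inj (h2 j)

/-- Elimination of a tuple of quantifiers over the `p`-adic integers. -/
theorem IsDf.existsVec {α : Type} [Finite α] : ∀ {ι κ : Type} [Finite κ]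
    {S : (ι ⊕ α → Z) → (κ → ℕ) → Prop}, IsDf S →
      IsDf (fun x γ => ∃ w : α → Z, S (Sum.elim x w) γ) := by
  induction α using Finite.induction_empty_option with
  | of_equiv e ih =>
    intro ι κ _ S hS
    refine (ih (hS.subst (r := fun x i => x (Sum.map id e.symm i)) fun i => IsTerm.coord _)).congr
      fun x γ => ⟨?_, ?_⟩
    · rintro ⟨w, hw⟩
      refine ⟨fun i => w (e i), ?_⟩
      convert hw using 1
      funext i; rcases i with i | i <;> simp
    · rintro ⟨w, hw⟩
      refine ⟨fun i => w (e.symm i), ?_⟩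
      convert hw using 1
      funext i; rcases i with i | i <;> simp
  | h_empty =>
    intro ι κ _ S hS
    refine (hS.subst (r := fun x => Sum.elim x (fun i => i.elim)) fun i => ?_).congr
      fun x γ => ⟨?_, ?_⟩
    · rcases i with i | i
      · exact IsTerm.coord i
      · exact i.elim
    · rintro ⟨w, hw⟩
      convert hw using 1
      funext i; rcases i with i | i
      · rfl
      · exact i.elim
    · exact fun h => ⟨_, h⟩
  | @h_option α _ ih =>
    intro ι κ _ S hS
    have h1 := (hS.subst (r := fun (x : Option (ι ⊕ α) → Z) =>
      Sum.elim (fun i => x (some (Sum.inl i)))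
        (fun o => o.elim (x none) (fun i => x (some (Sum.inr i))))) fun i => ?_).existsZ
    · refine (ih h1).congr fun x γ => ⟨?_, ?_⟩
      · rintro ⟨w, hw⟩
        refine ⟨fun i => w (some i), w none, ?_⟩
        convert hw using 1
        funext i; rcases i with i | _ | i <;> rfl
      · rintro ⟨w, t, hw⟩
        refine ⟨fun o => o.elim t w, ?_⟩
        convert hw using 1
        funext i; rcases i with i | _ | i <;> rfl
    · rcases i with i | _ | i <;> exact IsTerm.coord _

/-! ### Bounding the number of small balls on which a definable set is not constant -/

/-- Away from the centre of a chart, the parameter `u` changes by a factor `1 + p ^ K * s` when the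
coordinate `t` moves in a small enough ball. -/
theorem Chart.move {X : Type} {B : Base p X} {P : Chart B} (hP : ¬ P.ball) {x : X} {u v : Z}
    (hq : P.pts (x, u, v)) {g : ℕ} {t' : Z} (ht' : (p : Z) ^ g ∣ t' - P.t (x, u, v))
    (hg : ¬ (p : Z) ^ (g - (P.K + 2 * P.N + 1)) ∣ P.t (x, u, v) - P.c x) :
    ∃ u' v', P.pts (x, u', v') ∧ P.t (x, u', v') = t' ∧ u'.valuation = u.valuation := by
  set L := P.K + 2 * P.N + 1 with hL
  have hu := Chart.u_ne hP hq
  have e1 : P.t (x, u, v) = P.c x + P.β x * u ^ P.N := rfl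
  have e2 : P.t (x, u, v) - P.c x = P.β x * u ^ P.N := by rw [e1]; ring
  rw [e2] at hg
  set w := P.β x * u ^ P.N with hw
  have hw0 : w ≠ 0 := fun h => hg (by rw [h]; exact dvd_zero _)
  have h1 : p ^ L * w ∣ (p : Z) ^ g := by
    rw [dvd_iff_val (mul_ne_zero (ppow_ne _) hw0) (ppow_ne _), val_mul (ppow_ne _) hw0, val_ppow,
      val_ppow]
    rw [ppow_dvd_iff hw0] at hg
    omega
  obtain ⟨z, hz⟩ := h1.trans ht'
  obtain ⟨y, hy⟩ := exists_root_one P.N P.hN P.K z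
  obtain ⟨y', hy'⟩ := one_add_inv P.hK y
  refine ⟨u * (1 + p ^ P.K * y), v * (1 + p ^ P.K * y'), ⟨hq.1, ?_, fun h => absurd h hP,
    fun h => (hq.2.2.2 h).mul (QK_one_add _ _)⟩, ?_, ?_⟩
  · have := hq.2.1
    dsimp only at this ⊢
    linear_combination (1 + p ^ P.K * y) * (1 + p ^ P.K * y') * this + P.ε x * hy'
  · change P.c x + P.β x * (u * (1 + p ^ P.K * y)) ^ P.N = t'
    rw [mul_pow, hy, ← hL]
    linear_combination -hz - e1 + z * p ^ L * hw.symm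
  · have := isUnit_one_add_pow P.hK y
    rw [val_mul hu this.ne_zero, val_unit this, add_zero]

/-- For a definable family of subsets of the line, the number of balls of radius `p ^ (-(g + 1))`
which lie in a ball of radius `p ^ (-g)` on which the set is not constant is bounded
independently of `g` and of the parameters. -/
theorem IsDf.exists_bound {ι κ : Type} [Finite κ] {S : (Option ι → Z) → (κ → ℕ) → Prop}
    (hS : IsDf S) : ∃ N₀ : ℕ, ∀ x γ g (A : Finset Z),
      (∀ a ∈ A, ∀ a' ∈ A, (p : Z) ^ (g + 1) ∣ a - a' → a = a') →
      (∀ a ∈ A, ∃ t', (p : Z) ^ g ∣ t' - a ∧ ¬ (S (snoc x t') γ ↔ S (snoc x a) γ)) →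
      A.card ≤ N₀ := by
  obtain ⟨σ, _, τ, Θ, hτ, hΘ, h⟩ := hS
  obtain ⟨k, P, hP, hM, hcov⟩ := Chart.cov_terms hτ
  choose b hb d hd using fun i j => (hM i j).exists_ord (hP i)
  let L : Fin k → ℕ := fun i => (P i).K + 2 * (P i).N + 1
  have : ∀ n : ℕ, NeZero (p ^ n) := fun n => ⟨pow_ne_zero _ hp.out.ne_zero⟩
  refine ⟨Fintype.card ((i : Fin k) × ZMod (p ^ (L i + 1))), fun x γ g A h1 h2 => ?_⟩
  have key : ∀ a : A, ∃ (i : Fin k) (z : Z), (a : Z) = (P i).c x + p ^ (g - L i) * z := by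
    rintro ⟨a, ha⟩
    obtain ⟨t', ht', hne⟩ := h2 a ha
    obtain ⟨i, u, v, hq, rfl⟩ := hcov x a
    by_cases hc : (p : Z) ^ (g - L i) ∣ (P i).t (x, u, v) - (P i).c x
    · obtain ⟨z, hz⟩ := hc
      exact ⟨i, z, by rw [← hz]; ring⟩
    · obtain ⟨u', v', hq', rfl, hv⟩ := Chart.move (hP i) hq ht' hc
      refine absurd ?_ hne
      rw [h, h]
      refine iff_of_eq (congrArg (fun f => Θ (Sum.elim f γ)) ?_)
      funext j
      have e := hd i j x u' v' hq'
      rw [hv] at e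
      exact e.inj (hd i j x u v hq)
  choose i z hz using key
  rw [← Fintype.card_coe]
  refine Fintype.card_le_of_injective (fun a => ⟨i a, PadicInt.toZModPow (L (i a) + 1) (z a)⟩) ?_
  intro a a' haa
  rw [Sigma.mk.injEq] at haa
  obtain ⟨h3, h4⟩ := haa
  refine Subtype.ext (h1 a a.2 a' a'.2 ?_)
  rw [hz a, hz a']
  generalize i a = i₁, i a' = i₂ at h3 h4
  subst h3
  rw [heq_iff_eq, ← sub_eq_zero, ← map_sub, ← RingHom.mem_ker, PadicInt.ker_toZModPow,
    Ideal.mem_span_singleton] at h4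
  obtain ⟨y, hy⟩ := h4
  have : (p : Z) ^ (g + 1) ∣ p ^ (g - L i₁) * p ^ (L i₁ + 1) := by
    rw [← pow_add]; exact pow_dvd_pow _ (by omega)
  refine this.trans ⟨y, ?_⟩
  linear_combination p ^ (g - L i₁) * hy

/-! ### Rational generating series of semilinear sets -/

/-- A power series is rational if it is a quotient of two polynomials. -/
def IsRatl (F : PowerSeries ℚ) : Prop :=
  ∃ A B : Polynomial ℚ, B ≠ 0 ∧ F * (B : PowerSeries ℚ) = (A : PowerSeries ℚ)

theorem IsRatl.poly (A : Polynomial ℚ) : IsRatl (A : PowerSeries ℚ) := ⟨A, 1, one_ne_zero, by simp⟩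

theorem IsRatl.add {F G : PowerSeries ℚ} (hF : IsRatl F) (hG : IsRatl G) : IsRatl (F + G) := by
  obtain ⟨A, B, hB, h⟩ := hF
  obtain ⟨A', B', hB', h'⟩ := hG
  refine ⟨A * B' + A' * B, B * B', mul_ne_zero hB hB', ?_⟩
  push_cast
  linear_combination (B' : PowerSeries ℚ) * h + (B : PowerSeries ℚ) * h'

theorem IsRatl.polyMul {F : PowerSeries ℚ} (C : Polynomial ℚ) (hF : IsRatl F) :
    IsRatl ((C : PowerSeries ℚ) * F) := by
  obtain ⟨A, B, hB, h⟩ := hF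
  refine ⟨C * A, B, hB, ?_⟩
  push_cast
  linear_combination (C : PowerSeries ℚ) * h

theorem IsRatl.sub {F G : PowerSeries ℚ} (hF : IsRatl F) (hG : IsRatl G) : IsRatl (F - G) := by
  have := hF.add (hG.polyMul (-1))
  push_cast at this
  rwa [neg_one_mul, ← sub_eq_add_neg] at this

theorem IsRatl.of_mul {F : PowerSeries ℚ} {C : Polynomial ℚ} (hC : C ≠ 0)
    (h : IsRatl ((C : PowerSeries ℚ) * F)) : IsRatl F := by
  obtain ⟨A, B, hB, h⟩ := h
  refine ⟨A, C * B, mul_ne_zero hC hB, ?_⟩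
  push_cast
  linear_combination h

theorem IsRatl.sum {α : Type} (s : Finset α) {F : α → PowerSeries ℚ} (h : ∀ i ∈ s, IsRatl (F i)) :
    IsRatl (∑ i ∈ s, F i) := by
  classical
  induction s using Finset.induction_on with
  | empty => simpa using IsRatl.poly 0
  | insert a s ha ih =>
    rw [Finset.sum_insert ha]
    exact (h a (mem_insert_self _ _)).add (ih fun i hi => h i (mem_insert_of_mem hi))

section Gen
variable {κ : Type} [Finite κ] (k₀ : κ) (wt : (κ → ℕ) → ℚ)

/-- The cone on which the coordinate `k₀` is the largest one. -/
def Cone (γ : κ → ℕ) : Prop := ∀ i, γ i ≤ γ k₀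

/-- The generating series of a set, weighted by `wt` and graded by the coordinate `k₀`. -/
noncomputable def genSer (M : Set (κ → ℕ)) : PowerSeries ℚ :=
  PowerSeries.mk fun s => ∑ᶠ γ ∈ {γ | γ ∈ M ∧ γ k₀ = s}, wt γ

variable {k₀ wt}

theorem finite_fib {M : Set (κ → ℕ)} (hM : ∀ γ ∈ M, Cone k₀ γ) (s : ℕ) :
    {γ | γ ∈ M ∧ γ k₀ = s}.Finite :=
  (Set.Finite.pi' (t := fun _ : κ => Set.Iic s) fun _ => Set.finite_Iic s).subset
    fun γ hγ i => (hM γ hγ.1 i).trans hγ.2.le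

theorem genSer_union_inter {M N : Set (κ → ℕ)} (hM : ∀ γ ∈ M, Cone k₀ γ) (hN : ∀ γ ∈ N, Cone k₀ γ) :
    genSer k₀ wt (M ∪ N) + genSer k₀ wt (M ∩ N) = genSer k₀ wt M + genSer k₀ wt N := by
  ext s
  simp only [genSer, map_add, PowerSeries.coeff_mk]
  rw [← finsum_mem_union_inter (finite_fib hM s) (finite_fib hN s)]
  congr 1
  · exact finsum_mem_congr (by ext; simp [or_and_right]) fun _ _ => rfl
  · exact finsum_mem_congr (by ext; simp only [Set.mem_ofPred_eq, Set.mem_inter_iff]; tauto) fun _ _ => rfl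

omit [Finite κ] in
theorem genSer_empty : genSer k₀ wt ∅ = 0 := by
  ext s
  simp [genSer]

theorem genSer_union {M N : Set (κ → ℕ)} (hM : ∀ γ ∈ M, Cone k₀ γ) (hN : ∀ γ ∈ N, Cone k₀ γ)
    (h : M ∩ N = ∅) : genSer k₀ wt (M ∪ N) = genSer k₀ wt M + genSer k₀ wt N := by
  rw [← genSer_union_inter hM hN, h, genSer_empty, add_zero]

theorem genSer_shift (hwt : ∀ a b, wt (a + b) = wt a * wt b) {M : Set (κ → ℕ)}
    (hM : ∀ γ ∈ M, Cone k₀ γ) (v : κ → ℕ) :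
    genSer k₀ wt ((fun γ => v + γ) '' M) =
      ((Polynomial.monomial (v k₀) (wt v) : Polynomial ℚ) : PowerSeries ℚ) * genSer k₀ wt M := by
  ext s
  rw [Polynomial.coe_monomial, PowerSeries.coeff_mul, Finset.Nat.sum_antidiagonal_eq_sum_range_succ_mk]
  have h1 : ∀ i, PowerSeries.coeff i (PowerSeries.monomial (v k₀) (wt v)) =
      if i = v k₀ then wt v else 0 := fun i => PowerSeries.coeff_monomial _ _ _
  simp only [h1, ite_mul, zero_mul, Finset.sum_ite_eq', mem_range, genSer, PowerSeries.coeff_mk]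
  split_ifs with h
  · rw [mul_finsum_mem' _ _ (finite_fib hM _), ← finsum_mem_congr rfl fun γ _ => hwt v γ,
      ← finsum_mem_image (f := wt) (g := fun γ => v + γ) fun _ _ _ _ h => add_left_cancel h]
    refine finsum_mem_congr ?_ fun _ _ => rfl
    ext γ
    simp only [Set.mem_ofPred_eq, Set.mem_image]
    constructor
    · rintro ⟨⟨m, hm, rfl⟩, h2⟩
      exact ⟨m, ⟨hm, by simp at h2; omega⟩, rfl⟩
    · rintro ⟨m, ⟨hm, h2⟩, rfl⟩
      exact ⟨⟨m, hm, rfl⟩, by simp; omega⟩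
  · rw [show {γ | γ ∈ (fun γ => v + γ) '' M ∧ γ k₀ = s} = ∅ from ?_]
    · simp
    · ext γ
      simp only [Set.mem_ofPred_eq, Set.mem_image, Set.mem_empty_iff_false, iff_false]
      rintro ⟨⟨m, hm, rfl⟩, h2⟩
      simp at h2
      omega

omit [Finite κ] in
theorem genSer_finite {M : Set (κ → ℕ)} (hM : M.Finite) : IsRatl (genSer k₀ wt M) := by
  obtain ⟨b, hb⟩ := (hM.image fun γ => γ k₀).bddAbove
  have : genSer k₀ wt M = (PowerSeries.trunc (b + 1) (genSer k₀ wt M) : PowerSeries ℚ) := by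
    ext s
    rw [Polynomial.coeff_coe, PowerSeries.coeff_trunc]
    split_ifs with h
    · rfl
    · rw [genSer, PowerSeries.coeff_mk, show {γ | γ ∈ M ∧ γ k₀ = s} = ∅ from ?_]
      · simp
      · ext γ
        simp only [Set.mem_ofPred_eq, Set.mem_empty_iff_false, iff_false]
        rintro ⟨h1, rfl⟩
        have := hb (Set.mem_image_of_mem _ h1)
        omega
  rw [this]
  exact IsRatl.poly _

/-- Dickson's lemma. -/
theorem dickson {α : Type} [Finite α] (K : Set (α → ℕ)) :
    ∃ F : Set (α → ℕ), F.Finite ∧ F ⊆ K ∧ ∀ x ∈ K, ∃ m ∈ F, m ≤ x := by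
  refine ⟨{m | Minimal (· ∈ K) m}, WellQuasiOrderedLE.finite_of_isAntichain
    (setOfPred_minimal_antichain _), fun m hm => hm.1, fun x hx => ?_⟩
  obtain ⟨m, h1, h2⟩ := (Set.isPWO_of_wellQuasiOrderedLE K).exists_le_minimal hx
  exact ⟨m, h2, h1⟩

/-- The union of the translates of a finitely generated monoid by the elements of `F`. -/
def gen {n : ℕ} (F : Set (κ → ℕ)) (f : (Fin n → ℕ) →+ (κ → ℕ)) : Set (κ → ℕ) :=
  {y | ∃ a ∈ F, ∃ c, y = a + f c}

omit [Finite κ] in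
theorem gen_stable {n : ℕ} {F : Set (κ → ℕ)} {f : (Fin n → ℕ) →+ (κ → ℕ)} {y : κ → ℕ}
    (hy : y ∈ gen F f) (c : Fin n → ℕ) : y + f c ∈ gen F f := by
  obtain ⟨a, ha, d, rfl⟩ := hy
  exact ⟨a, ha, d + c, by rw [map_add, add_assoc]⟩

omit [Finite κ] in
/-- Stable subsets of finitely generated sets are finitely generated. -/
theorem gen_sub {n : ℕ} {F : Set (κ → ℕ)} (hF : F.Finite) {f : (Fin n → ℕ) →+ (κ → ℕ)}
    {K : Set (κ → ℕ)} (hK : K ⊆ gen F f) (hs : ∀ y ∈ K, ∀ c, y + f c ∈ K) :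
    ∃ F' : Set (κ → ℕ), F'.Finite ∧ K = gen F' f := by
  choose D hD hDs hD' using fun a : κ → ℕ => dickson {c | a + f c ∈ K}
  refine ⟨⋃ a ∈ F, (fun c => a + f c) '' D a, hF.biUnion fun a _ => (hD a).image _, ?_⟩
  ext y
  constructor
  · intro hy
    obtain ⟨a, ha, c, rfl⟩ := hK hy
    obtain ⟨m, hm, hmc⟩ := hD' a c hy
    obtain ⟨d, rfl⟩ := exists_add_of_le hmc
    exact ⟨a + f m, Set.mem_biUnion ha ⟨m, hm, rfl⟩, d, by rw [map_add, add_assoc]⟩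
  · rintro ⟨b, hb, c, rfl⟩
    simp only [Set.mem_iUnion, Set.mem_image] at hb
    obtain ⟨a, ha, m, hm, rfl⟩ := hb
    exact hs _ (hDs a hm) c

/-- Monomial case of the Hilbert–Serre theorem. -/
theorem isRatl_gen_diff (hwt : ∀ a b, wt (a + b) = wt a * wt b) : ∀ (n : ℕ)
    (f : (Fin n → ℕ) →+ (κ → ℕ)), (∀ c, Cone k₀ (f c)) → ∀ F Y' : Set (κ → ℕ), F.Finite →
    (∀ a ∈ F, Cone k₀ a) → (∀ y ∈ Y', ∀ c, y + f c ∈ Y') →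
    IsRatl (genSer k₀ wt (gen F f \ Y')) := by
  have cone_add : ∀ {a b : κ → ℕ}, Cone k₀ a → Cone k₀ b → Cone k₀ (a + b) :=
    fun ha hb i => add_le_add (ha i) (hb i)
  intro n
  induction n with
  | zero =>
    intro f _ F Y' hF _ _
    refine genSer_finite (hF.subset ?_)
    rintro y ⟨⟨a, ha, c, rfl⟩, -⟩
    rwa [show c = 0 from Subsingleton.elim _ _, map_zero, add_zero]
  | succ n ih =>
    intro f hf F Y' hF hFc hY'
    let e : (Fin n → ℕ) →+ (Fin (n + 1) → ℕ) :=
      { toFun := fun c => Fin.cons 0 c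
        map_zero' := by ext i; refine Fin.cases ?_ (fun i => ?_) i <;> simp
        map_add' := fun a b => by ext i; refine Fin.cases ?_ (fun i => ?_) i <;> simp }
    set f' := f.comp e with hf'
    set v := f (Pi.single 0 1) with hv
    have hsplit : ∀ c, f c = c 0 • v + f' (Fin.tail c) := fun c => by
      rw [hv, hf', AddMonoidHom.comp_apply, ← map_nsmul, ← map_add]
      congr 1
      ext i
      refine Fin.cases ?_ (fun i => ?_) i <;> simp [e, Fin.tail]
    have hff' : ∀ c, f' c = f (e c) := fun c => rfl
    have hf'c : ∀ c, Cone k₀ (f' c) := fun c => hf _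
    have hsub : ∀ F, gen F f' ⊆ gen F f := by
      rintro F y ⟨a, ha, c, rfl⟩
      exact ⟨a, ha, e c, rfl⟩
    -- an element outside of `gen F f'` is a translate by `v`
    have hdesc : ∀ F, ∀ y ∈ gen F f, y ∈ gen F f' ∨ ∃ z ∈ gen F f, y = v + z := by
      rintro F y ⟨a, ha, c, rfl⟩
      rcases h : c 0 with _ | k
      · exact Or.inl ⟨a, ha, Fin.tail c, by rw [hsplit, h, zero_smul, zero_add]⟩
      · refine Or.inr ⟨a + f (Fin.cons k (Fin.tail c)), ⟨a, ha, _, rfl⟩, ?_⟩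
        rw [hsplit, hsplit (Fin.cons _ _), h, succ_nsmul]
        simp only [Fin.cons_zero, Fin.tail_cons]
        abel
    by_cases hv0 : v = 0
    · have : gen F f = gen F f' := by
        refine (hsub F).antisymm' ?_
        rintro y ⟨a, ha, c, rfl⟩
        exact ⟨a, ha, Fin.tail c, by rw [hsplit, hv0, smul_zero, zero_add]⟩
      rw [this]
      exact ih f' hf'c F Y' hF hFc fun y hy c => hY' y hy _
    have hvk : v k₀ ≠ 0 := fun h => hv0 (funext fun i => by
      have := hf (Pi.single 0 1) i
      rw [← hv, h] at this
      exact Nat.le_zero.1 this)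
    have hYc : ∀ y ∈ gen F f, Cone k₀ y := by
      rintro y ⟨a, ha, c, rfl⟩
      exact cone_add (hFc a ha) (hf c)
    have hvY : ∀ y ∈ gen F f, v + y ∈ gen F f := fun y hy => by
      rw [add_comm v y]; exact gen_stable hy _
    have hvY' : ∀ y ∈ Y', v + y ∈ Y' := fun y hy => by
      rw [add_comm v y]; exact hY' y hy _
    set M := gen F f \ Y' with hM
    have hMc : ∀ y ∈ M, Cone k₀ y := fun y hy => hYc y hy.1
    -- the cokernel and the kernel of the translation by `v`
    obtain ⟨F₁, hF₁, hK⟩ := gen_sub hF (K := {y | y ∈ gen F f ∧ v + y ∈ Y'}) (f := f)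
      (fun y hy => hy.1) (fun y hy c => ⟨gen_stable hy.1 c, by
        rw [← add_assoc]; exact hY' _ hy.2 c⟩)
    have hF₁c : ∀ a ∈ F₁, Cone k₀ a := fun a ha => by
      have : a ∈ gen F₁ f := ⟨a, ha, 0, by rw [map_zero, add_zero]⟩
      rw [← hK] at this
      exact hYc a this.1
    have h1 : IsRatl (genSer k₀ wt (gen F f' \ (Y' ∪ (fun γ => v + γ) '' gen F f))) := by
      refine ih f' hf'c F _ hF hFc ?_
      rintro y (hy | ⟨z, hz, rfl⟩) c
      · exact Or.inl (hY' y hy _)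
      · exact Or.inr ⟨z + f' c, gen_stable hz _, by dsimp only; rw [add_assoc]⟩
    have h2 : IsRatl (genSer k₀ wt (gen F₁ f' \ Y')) :=
      ih f' hf'c F₁ Y' hF₁ hF₁c fun y hy c => hY' y hy _
    have e1 : gen F f' \ (Y' ∪ (fun γ => v + γ) '' gen F f) = M \ (fun γ => v + γ) '' M := by
      ext y
      simp only [Set.mem_sdiff, Set.mem_union, not_or, hM]
      constructor
      · rintro ⟨ha, hb, hc⟩
        exact ⟨⟨hsub F ha, hb⟩, fun ⟨z, hz, h⟩ => hc ⟨z, hz.1, h⟩⟩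
      · rintro ⟨⟨ha, hb⟩, hc⟩
        have hc' : y ∉ (fun γ => v + γ) '' gen F f := by
          rintro ⟨z, hz, rfl⟩
          exact hc ⟨z, ⟨hz, fun h => hb (hvY' z h)⟩, rfl⟩
        exact ⟨(hdesc F y ha).resolve_right fun ⟨z, hz, h⟩ => hc' ⟨z, hz, h.symm⟩, hb, hc'⟩
    have e2 : gen F₁ f' \ Y' = {y | y ∈ M ∧ v + y ∉ M} := by
      ext y
      have h3 : y ∈ gen F₁ f ↔ y ∈ gen F f ∧ v + y ∈ Y' := by rw [← hK]; rfl
      simp only [Set.mem_sdiff, Set.mem_ofPred_eq, hM, not_and_or, not_not]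
      constructor
      · rintro ⟨ha, hb⟩
        have := h3.1 (hsub F₁ ha)
        exact ⟨⟨this.1, hb⟩, Or.inr this.2⟩
      · rintro ⟨⟨ha, hb⟩, hc⟩
        have hc := hc.resolve_left fun h => h (hvY y ha)
        refine ⟨(hdesc F₁ y (h3.2 ⟨ha, hc⟩)).resolve_right ?_, hb⟩
        rintro ⟨z, hz, rfl⟩
        rw [← hK] at hz
        exact hb hz.2
    rw [e1] at h1
    rw [e2] at h2
    set V := (fun γ => v + γ) '' M with hV
    have hVc : ∀ y ∈ V, Cone k₀ y := by
      rintro _ ⟨z, hz, rfl⟩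
      exact cone_add (hf _) (hMc z hz)
    have h3 : genSer k₀ wt M = genSer k₀ wt (M \ V) + genSer k₀ wt (M ∩ V) := by
      rw [← genSer_union (fun y hy => hMc y hy.1) (fun y hy => hMc y hy.1), Set.sdiff_union_inter]
      ext y; simp; tauto
    have h4 : genSer k₀ wt V = genSer k₀ wt ((fun γ => v + γ) '' {y | y ∈ M ∧ v + y ∉ M}) +
        genSer k₀ wt (M ∩ V) := by
      rw [← genSer_union]
      · congr 1
        ext y
        constructor
        · rintro ⟨z, hz, rfl⟩
          by_cases h : v + z ∈ M
          · exact Or.inr ⟨h, z, hz, rfl⟩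
          · exact Or.inl ⟨z, ⟨hz, h⟩, rfl⟩
        · rintro (⟨z, hz, rfl⟩ | h)
          · exact ⟨z, hz.1, rfl⟩
          · exact h.2
      · rintro _ ⟨z, hz, rfl⟩
        exact cone_add (hf _) (hMc z hz.1)
      · exact fun y hy => hMc y hy.1
      · ext y
        simp only [Set.mem_inter_iff, Set.mem_empty_iff_false, iff_false]
        rintro ⟨⟨z, hz, rfl⟩, h, -⟩
        exact hz.2 h
    rw [hV, genSer_shift hwt hMc, genSer_shift hwt fun y hy => hMc y hy.1, ← hV] at h4
    set Q : Polynomial ℚ := Polynomial.monomial (v k₀) (wt v) with hQ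
    have hQ1 : (1 - Q : Polynomial ℚ) ≠ 0 := fun h => by
      have := congrArg (fun P => Polynomial.coeff P 0) h
      simp [hQ, Polynomial.coeff_monomial, hvk] at this
    refine IsRatl.of_mul hQ1 ?_
    have h5 := h1.sub (h2.polyMul Q)
    convert h5 using 1
    push_cast
    linear_combination h3 - h4

end Gen

/-! ### Intersections and unions of semilinear sets -/

section Semilinear
variable {κ : Type} [Finite κ] {k₀ : κ} {wt : (κ → ℕ) → ℚ}

omit [Finite κ] in
/-- The class of sets `gen F f` is closed under intersection: the solutions of `f c = f' d` form a
finitely generated monoid. -/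
theorem gen_inter {n n' : ℕ} {F F' : Set (κ → ℕ)} (hF : F.Finite) (hF' : F'.Finite)
    (f : (Fin n → ℕ) →+ (κ → ℕ)) (f' : (Fin n' → ℕ) →+ (κ → ℕ)) :
    ∃ (n'' : ℕ) (F'' : Set (κ → ℕ)) (f'' : (Fin n'' → ℕ) →+ (κ → ℕ)), F''.Finite ∧
      gen F f ∩ gen F' f' = gen F'' f'' := by
  let L : (Fin n ⊕ Fin n' → ℕ) →+ (κ → ℕ) :=
    f.comp (LinearMap.funLeft ℕ ℕ Sum.inl).toAddMonoidHom
  let R : (Fin n ⊕ Fin n' → ℕ) →+ (κ → ℕ) :=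
    f'.comp (LinearMap.funLeft ℕ ℕ Sum.inr).toAddMonoidHom
  have hL : ∀ c, L c = f (fun i => c (Sum.inl i)) := fun _ => rfl
  have hR : ∀ c, R c = f' (fun i => c (Sum.inr i)) := fun _ => rfl
  obtain ⟨n'', h, hh⟩ := AddSubmonoid.fg_iff_exists_fin_addMonoidHom.1
    (AddSubmonoid.fg_eqLocusM L R)
  have hh' : ∀ c, L c = R c ↔ ∃ d, h d = c := fun c => by
    have : c ∈ AddMonoidHom.mrange h ↔ c ∈ L.eqLocusM R := by rw [hh]
    exact this.symm
  choose D hD hDs hD' using fun q : (κ → ℕ) × (κ → ℕ) => dickson {c | q.1 + L c = q.2 + R c}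
  refine ⟨n'', ⋃ q ∈ F ×ˢ F', (fun c => q.1 + L c) '' D q, L.comp h,
    (hF.prod hF').biUnion fun q _ => (hD q).image _, ?_⟩
  ext y
  constructor
  · rintro ⟨⟨a, ha, c, rfl⟩, b, hb, d, hd⟩
    obtain ⟨m, hm, hmc⟩ := hD' (a, b) (Sum.elim c d) hd
    obtain ⟨e, he⟩ := exists_add_of_le hmc
    have h1 : a + L m = b + R m := hDs (a, b) hm
    have h2 : a + L (m + e) = b + R (m + e) := by rw [← he]; exact hd
    have h3 : L e = R e := by
      rw [map_add, map_add, ← add_assoc, ← add_assoc, h1] at h2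
      exact add_left_cancel h2
    obtain ⟨g, rfl⟩ := (hh' e).1 h3
    refine ⟨a + L m, Set.mem_biUnion (x := (a, b)) ⟨ha, hb⟩ ⟨m, hm, rfl⟩, g, ?_⟩
    have h5 : f c = L (m + h g) := by rw [← he]; rfl
    rw [h5, map_add, add_assoc]
    rfl
  · rintro ⟨y, hy, g, rfl⟩
    simp only [Set.mem_iUnion, Set.mem_image] at hy
    obtain ⟨⟨a, b⟩, ⟨ha, hb⟩, m, hm, rfl⟩ := hy
    have h1 : a + L m = b + R m := hDs (a, b) hm
    refine ⟨⟨a, ha, fun i => (m + h g) (Sum.inl i), ?_⟩, b, hb,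
      fun i => (m + h g) (Sum.inr i), ?_⟩
    · rw [← hL, map_add, add_assoc]; rfl
    · rw [← hR, map_add, ← add_assoc, ← h1, ← (hh' (h g)).2 ⟨g, rfl⟩]; rfl

/-- Membership in the class of sets `gen F f`. -/
def IsGen (M : Set (κ → ℕ)) : Prop :=
  ∃ (n : ℕ) (F : Set (κ → ℕ)) (f : (Fin n → ℕ) →+ (κ → ℕ)), F.Finite ∧ M = gen F f

omit [Finite κ] in
theorem IsGen.inter {M N : Set (κ → ℕ)} (hM : IsGen M) (hN : IsGen N) : IsGen (M ∩ N) := by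
  obtain ⟨n, F, f, hF, rfl⟩ := hM
  obtain ⟨n', F', f', hF', rfl⟩ := hN
  exact gen_inter hF hF' f f'

theorem IsGen.isRatl (hwt : ∀ a b, wt (a + b) = wt a * wt b) {M : Set (κ → ℕ)} (hM : IsGen M)
    (hc : ∀ γ ∈ M, Cone k₀ γ) : IsRatl (genSer k₀ wt M) := by
  obtain ⟨n, F, f, hF, rfl⟩ := hM
  rcases F.eq_empty_or_nonempty with rfl | ⟨a, ha⟩
  · rw [show gen ∅ f = ∅ by ext; simp [gen]]
    exact genSer_finite Set.finite_empty
  have hF' : ∀ a ∈ F, Cone k₀ a := fun a ha => hc a ⟨a, ha, 0, by rw [map_zero, add_zero]⟩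
  have hf : ∀ c, Cone k₀ (f c) := fun c i => by
    have := hc (a + f ((a k₀ + 1) • c)) ⟨a, ha, _, rfl⟩ i
    rw [map_nsmul] at this
    simp only [Pi.add_apply, Pi.smul_apply, smul_eq_mul] at this
    by_contra! h
    have h2 := Nat.mul_le_mul_left (a k₀ + 1) (Nat.succ_le_of_lt h)
    rw [Nat.mul_succ] at h2
    omega
  have := isRatl_gen_diff hwt n f hf F ∅ hF hF' fun _ h => h.elim
  rwa [Set.sdiff_empty] at this

/-- Finite unions, by inclusion–exclusion. -/
theorem isRatl_iUnion (hwt : ∀ a b, wt (a + b) = wt a * wt b) : ∀ (n : ℕ)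
    (M : Fin n → Set (κ → ℕ)), (∀ j, IsGen (M j)) → (∀ j, ∀ γ ∈ M j, Cone k₀ γ) →
    IsRatl (genSer k₀ wt (⋃ j, M j)) := by
  intro n
  induction n with
  | zero =>
    intro M _ _
    exact genSer_finite (by simp)
  | succ n ih =>
    intro M hM hc
    have h1 := (hM 0).isRatl hwt (hc 0)
    have h2 := ih (fun j => M j.succ) (fun j => hM _) fun j => hc _
    have h3 := ih (fun j => M 0 ∩ M j.succ) (fun j => (hM _).inter (hM _)) fun j γ h => hc _ γ h.1
    have h4 : ∀ γ ∈ ⋃ j : Fin n, M j.succ, Cone k₀ γ := fun γ h => by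
      obtain ⟨j, hj⟩ := Set.mem_iUnion.1 h
      exact hc _ γ hj
    have h5 : (⋃ j, M j) = M 0 ∪ ⋃ j : Fin n, M j.succ := by
      ext γ
      simp [Fin.exists_fin_succ]
    have h6 := genSer_union_inter (wt := wt) (hc 0) h4
    rw [Set.inter_iUnion] at h6
    rw [h5, eq_sub_of_add_eq h6]
    exact (h1.add h2).sub h3

/-- The generating series of a semilinear subset of the cone is rational. -/
theorem SL.isRatl (hwt : ∀ a b, wt (a + b) = wt a * wt b) {Θ : (κ → ℕ) → Prop} (h : SL Θ)
    (hc : ∀ γ, Θ γ → Cone k₀ γ) : IsRatl (genSer k₀ wt {γ | Θ γ}) := by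
  obtain ⟨S, hS, hL, h⟩ := h
  have : Finite S := hS
  obtain ⟨n, ⟨e⟩⟩ := Finite.exists_equiv_fin S
  have h2 : {γ | Θ γ} = ⋃ j : Fin n, ((e.symm j : S) : Set (κ → ℕ)) := by
    rw [h, Set.sUnion_eq_iUnion]
    exact (e.symm.surjective.iUnion_comp fun s : S => (s : Set (κ → ℕ))).symm
  rw [h2]
  refine isRatl_iUnion hwt n _ (fun j => ?_) fun j γ hj => hc γ ?_
  · obtain ⟨a, n, f, hf⟩ := isLinearSet_iff_exists_fin_addMonoidHom.1 (hL _ (e.symm j).2)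
    refine ⟨n, {a}, f, Set.finite_singleton _, hf.trans ?_⟩
    ext y
    simp [gen, Set.mem_vadd_set, eq_comm]
  · have : γ ∈ {γ | Θ γ} := by rw [h2]; exact Set.mem_iUnion.2 ⟨j, hj⟩
    exact this

end Semilinear

/-! ### Counting residue classes in one variable -/

theorem nat_eq_of_dvd {s j j' : ℕ} (hj : j < p ^ s) (hj' : j' < p ^ s)
    (h : (p : Z) ^ s ∣ (j : Z) - (j' : Z)) : j = j' := by
  have h1 : ((p ^ s : ℕ) : ℤ) ∣ (j : ℤ) - (j' : ℤ) := by
    rw [← Ideal.mem_span_singleton, ← PadicInt.ker_toZModPow, RingHom.mem_ker] at h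
    rw [← ZMod.intCast_zmod_eq_zero_iff_dvd]
    push_cast
    simpa using h
  have h2 := (Nat.modEq_iff_dvd.2 h1).symm
  rwa [Nat.ModEq, Nat.mod_eq_of_lt hj, Nat.mod_eq_of_lt hj'] at h2

/-- The ball of radius `p ^ (-g)` around `a` is contained in `V`. -/
def Full (V : ℤ_[p] → Prop) (g : ℕ) (a : ℤ_[p]) : Prop := ∀ t, (p : ℤ_[p]) ^ g ∣ t - a → V t

theorem Full.congr {V : Z → Prop} {g : ℕ} {a b : Z} (h : (p : Z) ^ g ∣ a - b) (hb : Full V g b) :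
    Full V g a := fun t ht => hb t (by
  have := dvd_add ht h
  rwa [sub_add_sub_cancel] at this)

theorem Full.mono {V : Z → Prop} {g g' : ℕ} (hg : g ≤ g') {a : Z} (h : Full V g a) : Full V g' a :=
  fun t ht => h t ((pow_dvd_pow _ hg).trans ht)

/-- There are at least `i` maximal balls of radius `p ^ (-g - 1)` contained in `V`. -/
def ManyMax (V : ℤ_[p] → Prop) (g i : ℕ) : Prop :=
  ∃ w : Fin i → ℤ_[p], (∀ k l, (p : ℤ_[p]) ^ (g + 1) ∣ w k - w l → k = l) ∧
    ∀ k, Full V (g + 1) (w k) ∧ ¬ Full V g (w k)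

open Classical in
/-- The number of maximal balls of radius `p ^ (-g - 1)` contained in `V`. -/
noncomputable def numMax (V : ℤ_[p] → Prop) (g : ℕ) : ℕ :=
  #{j ∈ range (p ^ (g + 1)) | Full V (g + 1) (j : ℕ) ∧ ¬ Full V g (j : ℕ)}

theorem manyMax_iff {V : Z → Prop} {g i : ℕ} : ManyMax V g i ↔ i ≤ numMax V g := by
  classical
  constructor
  · rintro ⟨w, hw, hV⟩
    choose n hn hd using fun k => exists_nat_sub (w k) (g + 1)
    have hd' : ∀ k, (p : Z) ^ (g + 1) ∣ (n k : Z) - w k := fun k => by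
      rw [← neg_sub]; exact (dvd_neg.2 (hd k))
    have hinj : Function.Injective n := fun k l h => hw k l (by
      have := dvd_add (hd k) (hd' l)
      rwa [← h, sub_add_sub_cancel] at this)
    have := card_le_card_of_injOn (s := (univ : Finset (Fin i)))
      (t := {j ∈ range (p ^ (g + 1)) | Full V (g + 1) (j : ℕ) ∧ ¬ Full V g (j : ℕ)}) n
      (fun k _ => by
        rw [mem_coe, mem_filter, mem_range]
        exact ⟨hn k, (hV k).1.congr (hd' k), fun h => (hV k).2
          (h.congr ((pow_dvd_pow _ (Nat.le_succ g)).trans (hd k)))⟩) hinj.injOn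
    rwa [card_univ, Fintype.card_fin] at this
  · intro h
    obtain ⟨t, ht, hc⟩ := exists_subset_card_eq h
    let e := t.equivFinOfCardEq hc
    refine ⟨fun k => ((e.symm k : ℕ) : Z), fun k l hkl => ?_, fun k => ?_⟩
    · have h1 := (mem_filter.1 (ht (e.symm k).2)).1
      have h2 := (mem_filter.1 (ht (e.symm l).2)).1
      exact e.symm.injective (Subtype.ext (nat_eq_of_dvd (mem_range.1 h1) (mem_range.1 h2) hkl))
    · exact (mem_filter.1 (ht (e.symm k).2)).2

theorem count_periodic {P : ℕ → Prop} [DecidablePred P] {a : ℕ} (h : ∀ n, P (a + n) ↔ P n) (k : ℕ) :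
    Nat.count P (k * a) = k * Nat.count P a := by
  induction k with
  | zero => simp
  | succ k ih =>
    have : ∀ n, P (k * a + n) ↔ P n := fun n => by
      clear ih
      induction k generalizing n with
      | zero => simp
      | succ k ih => rw [Nat.succ_mul, add_assoc, ih, h]
    rw [Nat.succ_mul, Nat.count_add, ih, Nat.succ_mul]
    simp only [this]

open Classical in
/-- Every residue class contained in `V` lies in a unique maximal ball contained in `V`. -/
theorem count_full (V : Z → Prop) (s : ℕ) :
    Nat.count (fun j => Full V s (j : ℕ)) (p ^ s) = p ^ s * (if ∀ t, V t then 1 else 0) +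
      ∑ δ ∈ range s, p ^ δ * numMax V (s - 1 - δ) := by
  induction s with
  | zero =>
    have : Full V 0 (0 : Z) ↔ ∀ t, V t := ⟨fun h t => h t (by simp), fun h t _ => h t⟩
    rw [Nat.count_eq_card_filter_range, pow_zero, range_one, filter_singleton, Nat.cast_zero]
    simp only [this]
    split_ifs <;> simp
  | succ s ih =>
    have h1 : Nat.count (fun j => Full V (s + 1) (j : ℕ)) (p ^ (s + 1)) =
        Nat.count (fun j => Full V s (j : ℕ)) (p ^ (s + 1)) + numMax V s := by
      rw [Nat.count_eq_card_filter_range, Nat.count_eq_card_filter_range, numMax,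
        ← card_union_of_disjoint]
      · congr 1
        ext j
        simp only [mem_filter, mem_union]
        have := Full.mono (V := V) (Nat.le_succ s) (a := ((j : ℕ) : Z))
        tauto
      · rw [disjoint_left]
        intro j h1 h2
        exact (mem_filter.1 h2).2.2 (mem_filter.1 h1).2
    have h2 : ∀ n : ℕ, Full V s ((p ^ s + n : ℕ) : Z) ↔ Full V s (n : Z) := fun n =>
      ⟨fun h => h.congr ⟨-1, by push_cast; ring⟩, fun h => h.congr ⟨1, by push_cast; ring⟩⟩
    have h3 : ∑ δ ∈ range (s + 1), p ^ δ * numMax V (s + 1 - 1 - δ) =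
        numMax V s + p * ∑ δ ∈ range s, p ^ δ * numMax V (s - 1 - δ) := by
      rw [sum_range_succ', add_comm, mul_sum]
      congr 1
      · simp
      · refine sum_congr rfl fun δ _ => ?_
        rw [show s + 1 - 1 - (δ + 1) = s - 1 - δ by omega, pow_succ]
        ring
    rw [h1, h3, pow_succ', count_periodic h2, ih]
    ring

theorem sum_ite_le {e N : ℕ} (h : e ≤ N) :
    ∑ i ∈ range N, (if i + 1 ≤ e then 1 else 0) = e := by
  rw [← card_filter, show {i ∈ range N | i + 1 ≤ e} = range e by ext i; simp; omega, card_range]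

open Classical in
/-- The number of residue classes modulo `p ^ s` in a periodic set, in terms of the numbers of
maximal balls. -/
theorem count_formula {V : Z → Prop} {s N : ℕ} (hV : ∀ t t', (p : Z) ^ s ∣ t - t' → V t' → V t)
    (hN : ∀ g, numMax V g ≤ N) :
    Nat.count (fun j => V (j : ℕ)) (p ^ s) = p ^ s * (if ∀ t, V t then 1 else 0) +
      ∑ δ ∈ range s, ∑ i ∈ range N, p ^ δ * (if ManyMax V (s - 1 - δ) (i + 1) then 1 else 0) := by
  have h1 : (fun j : ℕ => V (j : ℕ)) = fun j : ℕ => Full V s (j : ℕ) := by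
    funext j
    exact propext ⟨fun h t ht => hV t _ ht h, fun h => h _ (by simp)⟩
  have h2 : Nat.count (fun j => V (j : ℕ)) (p ^ s) = Nat.count (fun j => Full V s (j : ℕ)) (p ^ s) := by
    simp only [Nat.count_eq_card_filter_range]
    exact congrArg _ (filter_congr fun j _ => iff_of_eq (congrFun h1 j))
  rw [h2, count_full]
  congr 1
  refine sum_congr rfl fun δ _ => ?_
  rw [← mul_sum]
  simp only [manyMax_iff, sum_ite_le (hN _)]

theorem numMax_le {ι κ : Type} [Finite κ] {S : (Option ι → Z) → (κ → ℕ) → Prop} (hS : IsDf S) :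
    ∃ N, ∀ x γ g, numMax (fun t => S (snoc x t) γ) g ≤ N := by
  classical
  obtain ⟨N, hN⟩ := hS.exists_bound
  refine ⟨N, fun x γ g => ?_⟩
  have hinj : Set.InjOn (fun j : ℕ => (j : Z)) {j | j < p ^ (g + 1)} := fun j hj j' hj' h =>
    nat_eq_of_dvd (p := p) hj hj' (by
      have h : (j : Z) = j' := h
      rw [h, sub_self]; exact dvd_zero _)
  rw [numMax, ← card_image_of_injOn (f := fun j : ℕ => (j : Z)) (hinj.mono fun j hj => ?_)]
  · refine hN x γ g _ ?_ ?_
    · intro a ha a' ha' h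
      obtain ⟨j, hj, rfl⟩ := mem_image.1 ha
      obtain ⟨j', hj', rfl⟩ := mem_image.1 ha'
      have := nat_eq_of_dvd (mem_range.1 (mem_filter.1 hj).1) (mem_range.1 (mem_filter.1 hj').1) h
      rw [this]
    · intro a ha
      obtain ⟨j, hj, rfl⟩ := mem_image.1 ha
      have h1 := (mem_filter.1 hj).2
      have h2 := h1.2
      unfold Full at h2
      push Not at h2
      obtain ⟨t', ht, h2⟩ := h2
      exact ⟨t', ht, fun h => h2 (h.2 (h1.1 _ (by simp)))⟩
  · exact mem_range.1 (mem_filter.1 hj).1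

theorem IsAn.isTerm {ι : Type} [Finite ι] {H : (ι → Z) → Z} (hH : IsAn H) : IsTerm H :=
  IsTerm.comp hH fun i => IsTerm.coord i

theorem IsTerm.sub {ι : Type} {f g : (ι → Z) → Z} (hf : IsTerm f) (hg : IsTerm g) :
    IsTerm (fun x => f x - g x) :=
  IsTerm.comp (κ := Fin 2) (f := ![f, g]) ((isAn_coord 0).sub (isAn_coord 1))
    fun i => by fin_cases i; exacts [hf, hg]

theorem IsDf.full {ι ι' κ : Type} [Finite κ] {S : (Option ι → Z) → (κ → ℕ) → Prop} (hS : IsDf S)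
    {n : (κ → ℕ) → ℕ} (hn : Aff n) (r : ι → ι') (l : ι') :
    IsDf (fun (x : ι' → Z) γ => Full (fun t => S (snoc (fun i => x (r i)) t) γ) (n γ) (x l)) := by
  have h1 : IsDf (fun (y : Option ι' → Z) γ => S (snoc (fun i => y (some (r i))) (y none)) γ) :=
    hS.subst fun i => by rcases i with _ | i <;> exact IsTerm.coord _
  have h2 : IsDf (fun (y : Option ι' → Z) γ => (p : Z) ^ n γ ∣ y none - y (some l)) :=
    IsDf.dvd ((IsTerm.coord _).sub (IsTerm.coord _)) hn
  refine (h2.and h1.not).existsZ.not.congr fun x γ => ?_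
  simp only [not_exists, not_and, not_not]
  rfl

theorem IsDf.manyMax {ι κ : Type} [Finite κ] {S : (Option ι → Z) → (κ → ℕ) → Prop} (hS : IsDf S)
    (k : κ) (i : ℕ) : IsDf (fun x γ => ManyMax (fun t => S (snoc x t) γ) (γ k) i) := by
  have hk : Aff (fun γ : κ → ℕ => γ k + 1) := (Aff.coord k).add (Aff.const 1)
  have h1 : IsDf (fun (x : ι ⊕ Fin i → Z) (γ : κ → ℕ) => ∀ a b,
      (p : Z) ^ (γ k + 1) ∣ x (Sum.inr a) - x (Sum.inr b) → a = b) :=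
    IsDf.forall_fin fun a => IsDf.forall_fin fun b => ((IsDf.dvd ((IsTerm.coord _).sub
      (IsTerm.coord _)) hk).not.or (IsDf.const (a = b))).congr fun _ _ => by tauto
  have h2 : IsDf (fun (x : ι ⊕ Fin i → Z) (γ : κ → ℕ) => ∀ a : Fin i,
      Full (fun t => S (snoc (fun i => x (Sum.inl i)) t) γ) (γ k + 1) (x (Sum.inr a)) ∧
      ¬ Full (fun t => S (snoc (fun i => x (Sum.inl i)) t) γ) (γ k) (x (Sum.inr a))) :=
    IsDf.forall_fin fun a => (hS.full hk _ _).and (hS.full (Aff.coord k) _ _).not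
  exact (h1.and h2).existsVec.congr fun x γ => Iff.rfl

/-! ### Rationality of the counting series of a periodic definable family -/

/-- The number of points of `{0, …, n - 1} ^ ι` in `U`. -/
noncomputable def cnt {ι : Type} (n : ℕ) (U : (ι → ℤ_[p]) → Prop) : ℕ :=
  Nat.card {y : ι → Fin n // U (fun i => ((y i : ℕ) : ℤ_[p]))}

open Classical in
theorem cnt_eq_sum {ι : Type} {n : ℕ} [Fintype (ι → Fin n)] (U : (ι → Z) → Prop) :
    cnt n U = ∑ y : ι → Fin n, if U (fun i => ((y i : ℕ) : Z)) then 1 else 0 := by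
  rw [cnt, Nat.card_eq_fintype_card, Fintype.card_subtype, card_filter]

open Classical in
theorem cnt_option {ι : Type} {n : ℕ} [Fintype (ι → Fin n)] (U : (Option ι → Z) → Prop) :
    cnt n U = ∑ y : ι → Fin n,
      Nat.count (fun j => U (snoc (fun i => ((y i : ℕ) : Z)) (j : ℕ))) n := by
  have : Fintype (Option ι → Fin n) := Fintype.ofEquiv _ Equiv.piOptionEquivProd.symm
  rw [cnt_eq_sum, ← Equiv.piOptionEquivProd.symm.sum_comp, Fintype.sum_prod_type_right]
  refine sum_congr rfl fun y _ => ?_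
  rw [Nat.count_eq_card_filter_range, card_filter, ← Fin.sum_univ_eq_sum_range
    (fun j => if U (snoc (fun i => ((y i : ℕ) : Z)) (j : ℕ)) then 1 else 0)]
  refine sum_congr rfl fun j _ => ?_
  have : (fun i => (((Equiv.piOptionEquivProd (β := fun _ => Fin n)).symm (j, y) i : ℕ) : Z)) =
      snoc (fun i => ((y i : ℕ) : Z)) ((j : ℕ) : Z) := by
    funext i; rcases i <;> rfl
  rw [this]

theorem cnt_equiv {ι ι' : Type} (e : ι ≃ ι') (n : ℕ) (U : (ι' → Z) → Prop) :
    cnt n U = cnt n (fun x : ι → Z => U (fun i => x (e.symm i))) :=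
  Nat.card_congr ((Equiv.arrowCongr e.symm (Equiv.refl (Fin n))).subtypeEquiv fun y => by
    refine iff_of_eq (congrArg U (funext fun i => ?_))
    simp)

/-- The truth of `S x γ` depends only on `x` modulo `p ^ γ k₀`. -/
def Per {ι κ : Type} (k₀ : κ) (S : (ι → ℤ_[p]) → (κ → ℕ) → Prop) : Prop :=
  ∀ x x' γ, (∀ i, (p : ℤ_[p]) ^ γ k₀ ∣ x i - x' i) → (S x γ ↔ S x' γ)

section Box
variable {κ : Type} [Finite κ] (k₀ : κ)

/-- The fibre of the cone over the value `s` of the coordinate `k₀`. -/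
noncomputable def box (s : ℕ) : Finset (κ → ℕ) :=
  (finite_fib (M := {γ | Cone k₀ γ}) (fun _ h => h) s).toFinset

variable {k₀}

theorem mem_box {s : ℕ} {γ : κ → ℕ} : γ ∈ box k₀ s ↔ Cone k₀ γ ∧ γ k₀ = s := by
  rw [box, Set.Finite.mem_toFinset]; rfl

theorem coeff_genSer (C : (κ → ℕ) → ℚ) (s : ℕ) :
    PowerSeries.coeff s (genSer k₀ C {γ | Cone k₀ γ}) = ∑ γ ∈ box k₀ s, C γ := by
  rw [genSer, PowerSeries.coeff_mk]
  exact finsum_mem_eq_finite_toFinset_sum _ _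

theorem sum_box_option (C : (Option κ → ℕ) → ℚ) (s : ℕ) :
    ∑ γ ∈ box (some k₀) s, C γ =
      ∑ γ ∈ box k₀ s, ∑ δ ∈ range (s + 1), C (fun o => o.elim δ γ) := by
  rw [← sum_product']
  refine sum_nbij' (fun γ => (fun i => γ (some i), γ none)) (fun q o => o.elim q.2 q.1) ?_ ?_ ?_ ?_ ?_
  · intro γ hγ
    obtain ⟨h1, h2⟩ := mem_box.1 hγ
    rw [mem_product, mem_box, mem_range]
    exact ⟨⟨fun i => h1 (some i), h2⟩, Nat.lt_succ_of_le (h2 ▸ h1 none)⟩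
  · rintro ⟨γ, δ⟩ h
    rw [mem_product, mem_box, mem_range] at h
    obtain ⟨⟨h1, h2⟩, h3⟩ := h
    rw [mem_box]
    refine ⟨fun o => ?_, h2⟩
    rcases o with _ | i
    · exact (Nat.le_of_lt_succ h3).trans h2.ge
    · exact h1 i
  · intro γ _
    funext o; rcases o <;> rfl
  · intro q _; rfl
  · intro γ _
    congr 1
    funext o; rcases o <;> rfl

end Box

theorem isRatl_cnt_empty {κ : Type} [Finite κ] {k₀ : κ} {wt : (κ → ℕ) → ℚ}
    (hwt : ∀ a b, wt (a + b) = wt a * wt b) {S : (PEmpty → Z) → (κ → ℕ) → Prop} (hS : IsDf S) :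
    IsRatl (genSer k₀ (fun γ => wt γ * cnt (p ^ γ k₀) (fun x => S x γ)) {γ | Cone k₀ γ}) := by
  classical
  set x₀ : PEmpty → Z := fun i => i.elim with hx₀
  have h1 : SL (fun γ => S x₀ γ) := by
    obtain ⟨σ, _, τ, Θ, -, hΘ, h⟩ := hS
    have h2 : SL (fun γ : κ ⊕ σ → ℕ => ∀ j, γ (Sum.inr j) = ord1 (τ j x₀)) :=
      SL.forall_fin fun j => (Aff.coord _).eq' _
    refine ((h2.and (hΘ.reindex Sum.swap)).exists).congr fun γ => ?_
    rw [h]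
    constructor
    · intro h3
      refine ⟨fun j => ord1 (τ j x₀), fun j => rfl, ?_⟩
      convert h3 using 1
      funext i; rcases i <;> rfl
    · rintro ⟨δ, h3, h4⟩
      convert h4 using 1
      funext i; rcases i with i | i
      · exact (h3 i).symm
      · rfl
  have h2 : SL (fun γ => S x₀ γ ∧ Cone k₀ γ) :=
    h1.and (SL.forall_fin fun i => SL.le (Aff.coord i) (Aff.coord k₀))
  convert h2.isRatl hwt (k₀ := k₀) fun γ h => h.2 using 1
  ext s
  rw [coeff_genSer, genSer, PowerSeries.coeff_mk, finsum_mem_eq_finite_toFinset_sum _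
    (finite_fib (fun γ h => h.2) s)]
  rw [← sum_filter_add_sum_filter_not _ (fun γ => S x₀ γ)]
  have hc : ∀ γ, (cnt (p ^ γ k₀) (fun x => S x γ) : ℚ) = if S x₀ γ then 1 else 0 := fun γ => by
    rw [cnt_eq_sum, Fintype.sum_unique]
    have : ∀ y : PEmpty → Z, S y γ = S x₀ γ := fun y => by rw [Subsingleton.elim y x₀]
    rw [this]
    push_cast; rfl
  rw [sum_eq_zero (s := filter (fun γ => ¬ S x₀ γ) _) (fun γ h => by
    rw [hc, if_neg (mem_filter.1 h).2, mul_zero]), add_zero]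
  refine sum_congr ?_ fun γ h => ?_
  · ext γ
    rw [mem_filter, mem_box, Set.Finite.mem_toFinset]
    simp only [Set.mem_ofPred_eq]
    tauto
  · rw [Set.Finite.mem_toFinset] at h
    rw [hc, if_pos h.1.1, mul_one]

/-- The counting series of a periodic definable family is rational, by induction on the number of
`p`-adic variables: counting along one coordinate replaces it by a further integer variable `δ`
with weight `p ^ δ`, bounded by `γ k₀`. -/
theorem isRatl_cnt {ι : Type} [Finite ι] : ∀ {κ : Type} [Finite κ] {k₀ : κ} {wt : (κ → ℕ) → ℚ},
    (∀ a b, wt (a + b) = wt a * wt b) → ∀ {S : (ι → Z) → (κ → ℕ) → Prop}, IsDf S → Per k₀ S →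
      IsRatl (genSer k₀ (fun γ => wt γ * cnt (p ^ γ k₀) (fun x => S x γ)) {γ | Cone k₀ γ}) := by
  classical
  induction ι using Finite.induction_empty_option with
  | of_equiv e ih =>
    intro κ _ k₀ wt hwt S hS hper
    simp only [cnt_equiv e]
    exact ih hwt (hS.subst fun i => IsTerm.coord _) fun x x' γ h => hper _ _ γ fun i => h _
  | h_empty =>
    intro κ _ k₀ wt hwt S hS _
    exact isRatl_cnt_empty hwt hS
  | @h_option ι _ ih =>
    intro κ _ k₀ wt hwt S hS hper
    have := Fintype.ofFinite ι
    obtain ⟨N, hN⟩ := numMax_le hS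
    -- the contribution of the fibres contained in `S`
    have h1 := ih (k₀ := k₀) (wt := fun γ => wt γ * p ^ γ k₀)
      (fun a b => by rw [hwt, Pi.add_apply, pow_add]; ring) (S := fun x γ => ∀ t, S (snoc x t) γ)
      (hS.not.existsZ.not.congr fun x γ => by simp)
      (fun x x' γ h => forall_congr' fun t => hper _ _ γ fun o => by
        rcases o with _ | i
        · simp [snoc]
        · exact h i)
    -- the contribution of the maximal balls of radius `p ^ (δ - s)`, where `δ` is the new variable
    let T : ℕ → (ι → Z) → (Option κ → ℕ) → Prop := fun i x γ => γ none < γ (some k₀) ∧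
      ManyMax (fun t => S (snoc x t) (fun i => γ (some i))) (γ (some k₀) - 1 - γ none) (i + 1)
    have hT : ∀ i, IsDf (T i) := fun i => by
      have e1 : IsDf (fun (x : ι → Z) (γ : Option κ ⊕ Unit → ℕ) =>
          ManyMax (fun t => S (snoc x t) (fun i => γ (Sum.inl (some i)))) (γ (Sum.inr ())) (i + 1)) :=
        (hS.reindex (κ' := Option κ ⊕ Unit) (fun i => Sum.inl (some i))).manyMax _ _
      have e2 : IsDf (fun (_ : ι → Z) (γ : Option κ ⊕ Unit → ℕ) =>
          γ (Sum.inr ()) + (1 + γ (Sum.inl none)) = γ (Sum.inl (some k₀))) :=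
        IsDf.sl (SL.eq ((Aff.coord _).add ((Aff.const 1).add (Aff.coord _))) (Aff.coord _))
      refine (e2.and e1).existsNat.congr fun x γ => ?_
      constructor
      · rintro ⟨h, h'⟩
        refine ⟨fun _ => γ (some k₀) - 1 - γ none, ?_, h'⟩
        simp only [Sum.elim_inl, Sum.elim_inr]
        omega
      · rintro ⟨δ, h, h'⟩
        simp only [Sum.elim_inl, Sum.elim_inr] at h h'
        refine ⟨by omega, ?_⟩
        rwa [show γ (some k₀) - 1 - γ none = δ () by omega]
    have hTper : ∀ i, Per (some k₀) (T i) := fun i x x' γ h => by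
      have : (fun t => S (snoc x t) (fun i => γ (some i))) =
          fun t => S (snoc x' t) (fun i => γ (some i)) := by
        funext t
        refine propext (hper _ _ _ fun o => ?_)
        rcases o with _ | i
        · simp [snoc]
        · exact h i
      simp only [T, this]
    have h2 : ∀ i ∈ range N, IsRatl (genSer (some k₀) (fun γ => (wt (fun i => γ (some i)) *
        p ^ γ none) * cnt (p ^ γ (some k₀)) (fun x => T i x γ)) {γ | Cone (some k₀) γ}) :=
      fun i _ => ih (k₀ := some k₀) (wt := fun γ => wt (fun i => γ (some i)) * p ^ γ none)
        (fun a b => by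
          rw [show (fun i => (a + b) (some i)) = (fun i => a (some i)) + fun i => b (some i) from rfl,
            hwt, Pi.add_apply, pow_add]
          ring) (hT i) (hTper i)
    convert h1.add (IsRatl.sum _ h2) using 1
    ext s
    rw [map_add, map_sum]
    simp only [coeff_genSer, sum_box_option]
    rw [sum_comm, ← sum_add_distrib]
    refine sum_congr rfl fun γ hγ => ?_
    obtain ⟨-, rfl⟩ := mem_box.1 hγ
    have key : cnt (p ^ γ k₀) (fun x => S x γ) =
        p ^ γ k₀ * cnt (p ^ γ k₀) (fun x => ∀ t, S (snoc x t) γ) +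
          ∑ i ∈ range N, ∑ δ ∈ range (γ k₀ + 1), p ^ δ *
            cnt (p ^ γ k₀) (fun x => T i x (fun o => o.elim δ γ)) := by
      rw [cnt_option]
      simp only [cnt_eq_sum]
      rw [mul_sum]
      simp only [mul_sum]
      rw [sum_congr rfl fun i _ => sum_comm, sum_comm, ← sum_add_distrib]
      refine sum_congr rfl fun y _ => ?_
      rw [count_formula (V := fun t => S (snoc (fun i => ((y i : ℕ) : Z)) t) γ) (N := N) ?_ (hN _ γ)]
      · congr 1
        rw [sum_comm]
        refine sum_congr rfl fun i _ => ?_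
        rw [sum_range_succ]
        simp only [T, Option.elim_none, Option.elim_some, lt_irrefl, false_and, if_false, mul_zero,
          add_zero]
        refine sum_congr rfl fun δ hδ => ?_
        simp only [mem_range.1 hδ, true_and]
      · intro t t' h h'
        refine (hper _ _ γ fun o => ?_).2 h'
        rcases o with _ | i
        · exact h
        · simp [snoc]
    rw [key]
    push_cast
    rw [mul_add, mul_sum]
    congr 1
    · ring
    · refine sum_congr rfl fun i _ => ?_
      rw [mul_sum]
      refine sum_congr rfl fun δ _ => ?_
      simp only [Option.elim_none, Option.elim_some]
      ring

/-! ### Restricted power series and the Poincaré series -/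

/-- A restricted power series is congruent modulo `p ^ K` to the polynomial consisting of the
finitely many monomials whose coefficient is not divisible by `p ^ K`. -/
theorem isAn_restricted {m : ℕ} {a : (Fin m →₀ ℕ) → Z}
    (ha : ∀ ε : ℝ, 0 < ε → ∃ N : ℕ, ∀ i : Fin m →₀ ℕ, N ≤ i.sum (fun _ k => k) → ‖a i‖ < ε)
    {f : (Fin m → Z) → Z} (hf : ∀ x, f x = ∑' i : Fin m →₀ ℕ, a i * ∏ k, x k ^ i k) : IsAn f := by
  classical
  have hp0 : (0 : ℝ) < p := by exact_mod_cast hp.out.pos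
  have hfin : ∀ K : ℕ, {i | ¬ (p : Z) ^ K ∣ a i}.Finite := fun K => by
    obtain ⟨N, hN⟩ := ha ((p : ℝ) ^ (-K : ℤ)) (zpow_pos hp0 _)
    have h1 : {i : Fin m →₀ ℕ | ∀ k, i k ∈ Set.Iic N}.Finite :=
      (Set.Finite.pi' (t := fun _ : Fin m => Set.Iic N) fun _ => Set.finite_Iic N).preimage
        (f := fun i : Fin m →₀ ℕ => (i : Fin m → ℕ)) DFunLike.coe_injective.injOn
    refine h1.subset fun i hi k => ?_
    by_contra h
    refine hi ((dvd_iff_norm K _).2 (hN i ?_).le)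
    have h2 : i k ≤ i.sum (fun _ k => k) := by
      by_cases hk : k ∈ i.support
      · exact Finset.single_le_sum (f := fun k => i k) (fun _ _ => Nat.zero_le _) hk
      · rw [Finsupp.notMem_support_iff.1 hk]; exact Nat.zero_le _
    simp only [Set.mem_Iic, not_le] at h
    omega
  have hmem : ∀ K i, i ∈ (hfin K).toFinset ↔ ¬ (p : Z) ^ K ∣ a i := fun K i => by
    rw [Set.Finite.mem_toFinset]; rfl
  refine ⟨fun K => ∑ i ∈ (hfin K).toFinset, MvPolynomial.monomial i (a i), fun K => ?_,
    fun x K => ?_⟩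
  · have h1 : (hfin K).toFinset ⊆ (hfin (K + 1)).toFinset := fun i hi => by
      rw [hmem] at hi ⊢
      exact fun h => hi ((pow_dvd_pow _ (Nat.le_succ K)).trans h)
    dsimp only
    rw [← sum_sdiff h1, add_sub_cancel_right]
    refine dvd_sum fun i hi => ?_
    rw [mem_sdiff, hmem K, not_not] at hi
    obtain ⟨c, hc⟩ := hi.2
    exact ⟨MvPolynomial.monomial i c, by rw [MvPolynomial.C_mul_monomial, hc]⟩
  · have hs : Summable fun i : Fin m →₀ ℕ => a i * ∏ k, x k ^ i k := by
      refine NonarchimedeanAddGroup.summable_of_tendsto_cofinite_zero ?_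
      rw [tendsto_zero_iff_norm_tendsto_zero, Metric.tendsto_nhds]
      intro ε hε
      obtain ⟨K, hK⟩ := PadicInt.exists_pow_neg_lt p hε
      refine (hfin K).subset fun i hi h => hi ?_
      have h1 := (dvd_iff_norm K _).1 (h.mul_right (∏ k, x k ^ i k))
      change dist _ _ < ε
      rw [Real.dist_eq, sub_zero, abs_of_nonneg (norm_nonneg _)]
      exact lt_of_le_of_lt h1 hK
    have hcl : IsClosed {z : Z | ‖z‖ ≤ (p : ℝ) ^ (-K : ℤ)} :=
      isClosed_le continuous_norm continuous_const
    rw [dvd_iff_norm, hf]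
    refine hcl.mem_of_tendsto (hs.hasSum.sub_const _) ?_
    filter_upwards [Filter.eventually_ge_atTop (hfin K).toFinset] with s h1
    show ‖_‖ ≤ _
    rw [← dvd_iff_norm, map_sum, ← sum_sdiff h1]
    simp only [MvPolynomial.eval_monomial, Finsupp.prod_fintype _ _ fun _ => pow_zero _]
    rw [add_sub_cancel_right]
    refine dvd_sum fun i hi => ?_
    rw [mem_sdiff, hmem K, not_not] at hi
    exact hi.2.mul_right _

/-- The standard representatives of the residue classes modulo `n`. -/
noncomputable def finZMod (n : ℕ) [NeZero n] : Fin n ≃ ZMod n where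
  toFun i := ((i : ℕ) : ZMod n)
  invFun z := ⟨z.val, z.val_lt⟩
  left_inv i := Fin.ext (ZMod.val_natCast_of_lt i.2)
  right_inv z := ZMod.natCast_zmod_val z

theorem toZModPow_eq_iff (s n : ℕ) (x : Z) :
    PadicInt.toZModPow s x = (n : ZMod (p ^ s)) ↔ (p : Z) ^ s ∣ x - (n : Z) := by
  rw [← Ideal.mem_span_singleton, ← PadicInt.ker_toZModPow, RingHom.mem_ker, map_sub, map_natCast,
    sub_eq_zero]

theorem card_eq_cnt {m s : ℕ} (V : (Fin m → Z) → Prop) :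
    Nat.card {y : Fin m → ZMod (p ^ s) //
      ∃ x : Fin m → Z, (∀ k, PadicInt.toZModPow s (x k) = y k) ∧ V x} =
    cnt (p ^ s) (fun y => ∃ x : Fin m → Z, (∀ k, (p : Z) ^ s ∣ x k - y k) ∧ V x) := by
  have : NeZero (p ^ s) := ⟨pow_ne_zero _ hp.out.ne_zero⟩
  refine (Nat.card_congr ((Equiv.arrowCongr (Equiv.refl (Fin m)) (finZMod (p ^ s))).subtypeEquiv
    fun y => ?_)).symm
  refine exists_congr fun x => and_congr_left fun _ => forall_congr' fun k => ?_
  exact (toZModPow_eq_iff s (y k) (x k)).symm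

end PadicCell

namespace PadicCell

theorem statement9 (p : ℕ) [Fact p.Prime] (m r : ℕ)
    (a : Fin r → (Fin m →₀ ℕ) → ℤ_[p])
    (ha : ∀ j, ∀ ε : ℝ, 0 < ε → ∃ N : ℕ, ∀ i : Fin m →₀ ℕ,
      N ≤ i.sum (fun _ k => k) → ‖a j i‖ < ε)
    (f : Fin r → (Fin m → ℤ_[p]) → ℤ_[p])
    (hf : ∀ j x, f j x = ∑' i : Fin m →₀ ℕ, a j i * ∏ k, x k ^ i k)
    (Ntilde : ℕ → ℕ)
    (hN : ∀ s : ℕ, Ntilde s = Nat.card {y : Fin m → ZMod (p ^ s) //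
      ∃ x : Fin m → ℤ_[p], (∀ k, PadicInt.toZModPow s (x k) = y k) ∧ ∀ j, f j x = 0}) :
    ∃ (A B : Polynomial ℚ), B ≠ 0 ∧
      (PowerSeries.mk fun s => (Ntilde s : ℚ)) * (B : PowerSeries ℚ) =
        (A : PowerSeries ℚ) := by
  -- the residue classes modulo `p ^ γ` that contain a zero, as a definable family
  let S : (Fin m → ℤ_[p]) → (Unit → ℕ) → Prop := fun x γ =>
    ∃ w : Fin m → ℤ_[p], (∀ k, (p : ℤ_[p]) ^ γ () ∣ w k - x k) ∧ ∀ j, f j w = 0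
  have hS : IsDf S := by
    have h1 : IsDf (fun (x : Fin m ⊕ Fin m → ℤ_[p]) (γ : Unit → ℕ) =>
        ∀ k, (p : ℤ_[p]) ^ γ () ∣ x (Sum.inr k) - x (Sum.inl k)) :=
      IsDf.forall_fin fun k => IsDf.dvd ((IsTerm.coord _).sub (IsTerm.coord _)) (Aff.coord ())
    have h2 : IsDf (fun (x : Fin m ⊕ Fin m → ℤ_[p]) (_ : Unit → ℕ) =>
        ∀ j, f j (fun k => x (Sum.inr k)) = 0) :=
      IsDf.forall_fin fun j => IsDf.zero
        ((isAn_restricted (ha j) (hf j)).isTerm.subst fun k => IsTerm.coord (Sum.inr k))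
    exact (h1.and h2).existsVec.congr fun x γ => Iff.rfl
  have hper : Per () S := fun x x' γ h => by
    have h' : ∀ k, (p : ℤ_[p]) ^ γ () ∣ x' k - x k := fun k => by
      rw [← neg_sub]; exact dvd_neg.2 (h k)
    constructor
    · rintro ⟨w, h1, h2⟩
      exact ⟨w, fun k => by simpa using dvd_add (h1 k) (h k), h2⟩
    · rintro ⟨w, h1, h2⟩
      exact ⟨w, fun k => by simpa using dvd_add (h1 k) (h' k), h2⟩
  have key := isRatl_cnt (wt := fun _ => 1) (fun _ _ => (mul_one _).symm) hS hper
  suffices h : (PowerSeries.mk fun s => (Ntilde s : ℚ)) =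
      genSer () (fun γ => 1 * (cnt (p ^ γ ()) fun x => S x γ : ℚ)) {γ | Cone () γ} by
    rw [h]; exact key
  ext s
  rw [coeff_genSer, PowerSeries.coeff_mk, hN, card_eq_cnt,
    show box () s = {fun _ => s} from ?_, Finset.sum_singleton, one_mul]
  ext γ
  rw [mem_box, Finset.mem_singleton]
  constructor
  · rintro ⟨-, rfl⟩; rfl
  · rintro rfl; exact ⟨fun _ => le_rfl, rfl⟩

end PadicCell
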